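/- Let n ≥ 2 be fixed and let (X_d)_{d≥1} be a unitarily invariant sequence of random positive semidefinite matrices X_d ∈ M_n(ℂ) ⊗ M_d(ℂ) converging strongly to a compactly supported probability measure μ with supp(μ) ⊆ [A,B] ⊆ [0,∞), mean m and variance σ². If n(m − 2σ) > B − A + 2σ, then almost surely, for all sufficiently large d, X_d ∈ PPT_{n,d}; in particular lim_{d→∞} P(X_d ∈ PPT_{n,d}) = 1. -/

import Mathlib

open MeasureTheory Filter Topology Polynomial Matrix Kronecker
open scoped ComplexOrder

noncomputable section

/-- Measurable space structure on matrices (entrywise). -/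
instance matMS (m n : Type*) : MeasurableSpace (Matrix m n ℂ) :=
  inferInstanceAs (MeasurableSpace (m → n → ℂ))

/-- The ℓ²→ℓ² operator norm of a complex square matrix. -/
def opNorm {N : Type*} [Fintype N] [DecidableEq N] (X : Matrix N N ℂ) : ℝ :=
  ‖Matrix.toEuclideanCLM (𝕜 := ℂ) (n := N) X‖

/-- Application of a real polynomial to a complex square matrix. -/
def polyApply {N : Type*} [Fintype N] [DecidableEq N] (P : Polynomial ℝ)
    (X : Matrix N N ℂ) : Matrix N N ℂ :=
  Polynomial.aeval X (P.map (algebraMap ℝ ℂ))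

/-- The (topological) support of a measure on ℝ: points all of whose open
neighbourhoods have positive measure. -/
def msupport (μ : Measure ℝ) : Set ℝ :=
  {x | ∀ U : Set ℝ, IsOpen U → x ∈ U → 0 < μ U}

/-- Strong convergence of a sequence of random matrices `X d ∈ M_n(ℂ) ⊗ M_d(ℂ)`
towards a compactly supported probability measure `μ`: almost surely, for every
real polynomial `P`, the normalized traces of `P(X d)` converge to `∫ P dμ` and the
operator norms of `P(X d)` converge to `sup {|P(x)| : x ∈ supp μ}`. -/
def StrongConv {Ω : Type*} [MeasurableSpace Ω] (ℙ : Measure Ω) (n : ℕ)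
    (X : (d : ℕ) → Ω → Matrix (Fin n × Fin d) (Fin n × Fin d) ℂ)
    (μ : Measure ℝ) : Prop :=
  ∀ᵐ ω ∂ℙ, ∀ P : Polynomial ℝ,
    Tendsto (fun d : ℕ => ((n : ℂ) * (d : ℂ))⁻¹ * (polyApply P (X d ω)).trace) atTop
      (𝓝 ((∫ x, P.eval x ∂μ : ℝ) : ℂ)) ∧
    Tendsto (fun d : ℕ => opNorm (polyApply P (X d ω))) atTop
      (𝓝 (sSup ((fun x => |P.eval x|) '' msupport μ)))

/-- Unitary invariance of a sequence of random matrices: for every `d` and every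
unitary `U`, the random matrix `U (X d) U*` has the same distribution as `X d`. -/
def UnitInv {Ω : Type*} [MeasurableSpace Ω] (ℙ : Measure Ω) (n : ℕ)
    (X : (d : ℕ) → Ω → Matrix (Fin n × Fin d) (Fin n × Fin d) ℂ) : Prop :=
  ∀ d : ℕ, ∀ U : Matrix (Fin n × Fin d) (Fin n × Fin d) ℂ,
    U ∈ unitary (Matrix (Fin n × Fin d) (Fin n × Fin d) ℂ) →
    Measure.map (fun ω => U * X d ω * star U) ℙ = Measure.map (X d) ℙ

/-- The separable cone `SEP_{n,d}`. -/
def SEP (n d : ℕ) : Set (Matrix (Fin n × Fin d) (Fin n × Fin d) ℂ) :=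
  {X | ∃ (k : ℕ) (A : Fin k → Matrix (Fin n) (Fin n) ℂ)
      (B : Fin k → Matrix (Fin d) (Fin d) ℂ),
    (∀ i, (A i).PosSemidef) ∧ (∀ i, (B i).PosSemidef) ∧ X = ∑ i, A i ⊗ₖ B i}

/-- The partial transpose on `M_n(ℂ) ⊗ M_d(ℂ)`: transposition of the first factor. -/
def ptrans {n d : ℕ} (X : Matrix (Fin n × Fin d) (Fin n × Fin d) ℂ) :
    Matrix (Fin n × Fin d) (Fin n × Fin d) ℂ :=
  fun p q => X (q.1, p.2) (p.1, q.2)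

/-- The PPT cone `PPT_{n,d}`: positive semidefinite matrices with positive
semidefinite partial transpose. -/
def PPT (n d : ℕ) : Set (Matrix (Fin n × Fin d) (Fin n × Fin d) ℂ) :=
  {X | X.PosSemidef ∧ (ptrans X).PosSemidef}

/-!
Let `D` be the traceless part of `X`, and `Y` the partial transpose of `D`. Since the mean of the
spectrum of `X` tends to `m`, it is enough that the spectrum of `Y` lies above `-c` for some `c < m`
with `L + 2 σ (n + 1) < n c`, where `L > B - A` eventually bounds `‖D‖`. This holds as soon as, for
some `q`, the normalized moment of `Y` of order `2 q` is smaller than `c ^ (2 q) / N`, where `N` is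
the size of the matrices; one takes `q` of order `log N`.

By unitary invariance one may replace `D` by its conjugate by a Haar unitary. The derivations
generating the conjugation action are, by invariance of the Haar measure, an action of `𝔤𝔩` by
operators adjoint to one another, and the commutation relations alone give a spectral gap for its
Casimir operator: this is a Poincaré inequality, by which normalized traces of words in `D` and `Y`
have covariances of order `1 / N²`. Integration by parts yields loop
equations for the mixed moments of `Y` with the centred powers of `D`. Up to covariances these
equations express a mixed moment through products of two lower ones, so the generating functions of
the moments are dominated by the solution of a quadratic inequality, which is finite at `1 / c`
exactly because of the condition on `c`.

The covariances are themselves bounded by the moments of `Y` under estimation, so the argument runs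
by contradiction: a moment of order `2 q` that is too large controls all error terms at its own
scale, where the majorant is then still available. Markov's inequality and the Borel–Cantelli lemma
conclude.
-/

/-! ### Spectral gap for actions of matrix units -/

section SpectralGap

open scoped InnerProductSpace

variable {ι P H : Type*} [Fintype ι] [AddCommGroup P] [Module ℂ P]
  [NormedAddCommGroup H] [InnerProductSpace ℂ H]

/-- Operators `D i j` on a space carrying the semi-inner product pulled back along `ψ`, with the
properties of the matrix units of `𝔤𝔩` acting unitarily with trivial centre: `D j i` is adjoint to
`D i j`, and `∑ i, D i i = 0`. The bracket is the opposite of that of the matrix units, as for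
vector fields. -/
structure MatrixUnitAction [DecidableEq ι] (ψ : P →ₗ[ℂ] H) (D : ι → ι → P →ₗ[ℂ] P) : Prop where
  inner_map_map : ∀ i j f g, ⟪ψ f, ψ (D i j g)⟫_ℂ = ⟪ψ (D j i f), ψ g⟫_ℂ
  commutator : ∀ i j k l f, D i j (D k l f) - D k l (D i j f) =
    (if i = l then D k j f else 0) - (if k = j then D i l f else 0)
  sum_diag : ∀ f, ∑ i, D i i f = 0

/-- The Casimir operator of the action of the matrix units. -/
def casimir (D : ι → ι → P →ₗ[ℂ] P) : P →ₗ[ℂ] P := ∑ i, ∑ j, D j i ∘ₗ D i j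

/-- The Dirichlet energy of `f` for the action of the matrix units. -/
def dirichletEnergy (ψ : P →ₗ[ℂ] H) (D : ι → ι → P →ₗ[ℂ] P) (f : P) : ℝ :=
  ∑ i, ∑ j, ‖ψ (D i j f)‖ ^ 2

variable {ψ : P →ₗ[ℂ] H} {D : ι → ι → P →ₗ[ℂ] P}

lemma casimir_apply (f : P) : casimir D f = ∑ i, ∑ j, D j i (D i j f) := by
  simp [casimir, LinearMap.sum_apply]

lemma dirichletEnergy_nonneg (f : P) : 0 ≤ dirichletEnergy ψ D f :=
  Finset.sum_nonneg fun _ _ => Finset.sum_nonneg fun _ _ => sq_nonneg _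

lemma map_eq_zero_of_dirichletEnergy_eq_zero {f : P} (h : dirichletEnergy ψ D f = 0) (i j : ι) :
    ψ (D i j f) = 0 := by
  have hrow : ∑ j, ‖ψ (D i j f)‖ ^ 2 = 0 :=
    (Finset.sum_eq_zero_iff_of_nonneg fun _ _ => Finset.sum_nonneg fun _ _ => sq_nonneg _).mp h i
      (Finset.mem_univ i)
  have hentry := (Finset.sum_eq_zero_iff_of_nonneg fun _ _ => sq_nonneg _).mp hrow j
    (Finset.mem_univ j)
  exact norm_eq_zero.mp (pow_eq_zero_iff two_ne_zero |>.mp hentry)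

variable [DecidableEq ι]

namespace MatrixUnitAction

lemma inner_map_casimir (h : MatrixUnitAction ψ D) (f g : P) :
    ⟪ψ f, ψ (casimir D g)⟫_ℂ = ∑ i, ∑ j, ⟪ψ (D i j f), ψ (D i j g)⟫_ℂ := by
  simp only [casimir_apply, map_sum, inner_sum, h.inner_map_map]

lemma inner_map_casimir_comm (h : MatrixUnitAction ψ D) (f g : P) :
    ⟪ψ (casimir D f), ψ g⟫_ℂ = ⟪ψ f, ψ (casimir D g)⟫_ℂ := by
  rw [← inner_conj_symm]
  simp only [h.inner_map_casimir, map_sum, inner_conj_symm]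

lemma inner_map_casimir_self (h : MatrixUnitAction ψ D) (f : P) :
    ⟪ψ f, ψ (casimir D f)⟫_ℂ = dirichletEnergy ψ D f := by
  simp [h.inner_map_casimir, dirichletEnergy, inner_self_eq_norm_sq_to_K]

lemma map_casimir (h : MatrixUnitAction ψ D) (a b : ι) (f : P) :
    D a b (casimir D f) = casimir D (D a b f) := by
  have hterm : ∀ i j, D a b (D j i (D i j f)) - D j i (D i j (D a b f)) =
      (if a = i then D j b (D i j f) else 0) - (if j = b then D a i (D i j f) else 0)
      + (if a = j then D j i (D i b f) else 0) - (if i = b then D j i (D a j f) else 0) := by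
    intro i j
    have houter := h.commutator a b j i (D i j f)
    have hinner := congrArg (D j i) (h.commutator a b i j f)
    simp only [map_sub, apply_ite (D j i), map_zero] at hinner
    rw [← sub_add_sub_cancel _ (D j i (D a b (D i j f))), houter, hinner]
    abel
  rw [← sub_eq_zero]
  simp only [casimir_apply, map_sum, ← Finset.sum_sub_distrib, hterm]
  simp only [Finset.sum_add_distrib, Finset.sum_sub_distrib, Finset.sum_ite_eq,
    Finset.sum_ite_eq', Finset.mem_univ, if_true, Finset.sum_ite_irrel, Finset.sum_const_zero]
  abel

lemma norm_sq_map_casimir (h : MatrixUnitAction ψ D) (f : P) :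
    ‖ψ (casimir D f)‖ ^ 2 = ∑ i, ∑ j, dirichletEnergy ψ D (D i j f) := by
  have hinner : ⟪ψ (casimir D f), ψ (casimir D f)⟫_ℂ =
      ∑ i, ∑ j, (dirichletEnergy ψ D (D i j f) : ℂ) := by
    simp only [h.inner_map_casimir, h.map_casimir, h.inner_map_casimir_comm,
      ← h.inner_map_casimir_self]
  rw [← inner_self_eq_norm_sq (𝕜 := ℂ), hinner]
  simp

lemma norm_sq_map_commutator (h : MatrixUnitAction ψ D) (f : P) (i j k l : ι) :
    ‖ψ (D i j (D k l f)) - ψ (D k l (D i j f))‖ ^ 2 =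
      (if i = l then ‖ψ (D k j f)‖ ^ 2 else 0) + (if k = j then ‖ψ (D i l f)‖ ^ 2 else 0)
      - 2 * (if i = l then (if k = j then (⟪ψ (D k k f), ψ (D i i f)⟫_ℂ).re else 0) else 0) := by
  rw [← map_sub, h.commutator, map_sub, @norm_sub_sq ℂ]
  by_cases hil : i = l <;> by_cases hkj : k = j <;> simp [hil, hkj]
  ring

/-- The cross terms disappear because the trace part acts trivially. -/
lemma sum_norm_sq_map_commutator (h : MatrixUnitAction ψ D) (f : P) :
    ∑ i, ∑ j, ∑ k, ∑ l, ‖ψ (D i j (D k l f)) - ψ (D k l (D i j f))‖ ^ 2 =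
      2 * (Fintype.card ι : ℝ) * dirichletEnergy ψ D f := by
  have hcross : ∑ i, ∑ k, (⟪ψ (D k k f), ψ (D i i f)⟫_ℂ).re = 0 := by
    simp only [← Complex.re_sum, ← sum_inner, ← map_sum, h.sum_diag, map_zero, inner_zero_left,
      Finset.sum_const_zero, Complex.zero_re]
  simp only [dirichletEnergy, h.norm_sq_map_commutator, Finset.sum_sub_distrib,
    Finset.sum_add_distrib, ← Finset.mul_sum, Finset.sum_ite_eq, Finset.sum_ite_eq',
    Finset.mem_univ, if_true, Finset.sum_ite_irrel, Finset.sum_const_zero, hcross,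
    Finset.sum_const, Finset.card_univ, nsmul_eq_mul]
  rw [Finset.sum_comm (f := fun x y => ‖ψ (D y x f)‖ ^ 2)]
  ring

lemma card_mul_dirichletEnergy_le (h : MatrixUnitAction ψ D) (f : P) :
    (Fintype.card ι : ℝ) / 2 * dirichletEnergy ψ D f ≤ ‖ψ (casimir D f)‖ ^ 2 := by
  have hterm : ∀ i j k l, ‖ψ (D i j (D k l f)) - ψ (D k l (D i j f))‖ ^ 2 ≤
      2 * ‖ψ (D i j (D k l f))‖ ^ 2 + 2 * ‖ψ (D k l (D i j f))‖ ^ 2 := fun i j k l => by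
    have := parallelogram_law_with_norm ℂ (ψ (D i j (D k l f))) (ψ (D k l (D i j f)))
    nlinarith [sq_nonneg ‖ψ (D i j (D k l f)) + ψ (D k l (D i j f))‖]
  have hsum := Finset.sum_le_sum fun i (_ : i ∈ Finset.univ) =>
    Finset.sum_le_sum fun j (_ : j ∈ Finset.univ) =>
    Finset.sum_le_sum fun k (_ : k ∈ Finset.univ) =>
    Finset.sum_le_sum fun l (_ : l ∈ Finset.univ) => hterm i j k l
  have hswap : ∑ i, ∑ j, ∑ k, ∑ l, ‖ψ (D i j (D k l f))‖ ^ 2 =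
      ∑ i, ∑ j, ∑ k, ∑ l, ‖ψ (D k l (D i j f))‖ ^ 2 := by
    have hpairs : ∀ F : ι → ι → ι → ι → ℝ, ∑ i, ∑ j, ∑ k, ∑ l, F i j k l =
        ∑ a : ι × ι, ∑ b : ι × ι, F a.1 a.2 b.1 b.2 := fun F => by
      simp only [Fintype.sum_prod_type]
    rw [hpairs fun i j k l => ‖ψ (D i j (D k l f))‖ ^ 2, Finset.sum_comm,
      ← hpairs fun i j k l => ‖ψ (D k l (D i j f))‖ ^ 2]
  simp only [Finset.sum_add_distrib, ← Finset.mul_sum, h.sum_norm_sq_map_commutator,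
    hswap] at hsum
  rw [h.norm_sq_map_casimir]
  simp only [dirichletEnergy] at hsum ⊢
  linarith

/-- The range of the symmetric operator induced by the Casimir operator on the finite-dimensional
range of `ψ` is the orthogonal complement of its kernel. -/
lemma exists_map_casimir_eq [FiniteDimensional ℂ P] (h : MatrixUnitAction ψ D) {f : P}
    (hf : ∀ g, (∀ i j, ψ (D i j g) = 0) → ⟪ψ g, ψ f⟫_ℂ = 0) :
    ∃ u, ψ (casimir D u) = ψ f := by
  obtain ⟨s, hs⟩ := ψ.rangeRestrict.exists_rightInverse_of_surjective
    (LinearMap.range_rangeRestrict ψ)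
  have hψs : ∀ v : LinearMap.range ψ, ψ (s v) = v := fun v =>
    congrArg Subtype.val (LinearMap.congr_fun hs v)
  let T : LinearMap.range ψ →ₗ[ℂ] LinearMap.range ψ := ψ.rangeRestrict ∘ₗ casimir D ∘ₗ s
  have hT : ∀ v, (T v : H) = ψ (casimir D (s v)) := fun _ => rfl
  have hsymm : T.IsSymmetric := fun v w => by
    simpa only [Submodule.coe_inner, hT, hψs] using h.inner_map_casimir_comm (s v) (s w)
  have hmem : ψ.rangeRestrict f ∈ LinearMap.range T := by
    rw [← Submodule.orthogonal_orthogonal (LinearMap.range T), hsymm.orthogonal_range,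
      Submodule.mem_orthogonal]
    intro v hv
    have henergy : (dirichletEnergy ψ D (s v) : ℂ) = 0 := by
      rw [← h.inner_map_casimir_self, ← hT, LinearMap.mem_ker.mp hv, ZeroMemClass.coe_zero,
        inner_zero_right]
    rw [Submodule.coe_inner, ← hψs v]
    exact hf _ (map_eq_zero_of_dirichletEnergy_eq_zero (by exact_mod_cast henergy))
  obtain ⟨v, hv⟩ := hmem
  exact ⟨s v, congrArg Subtype.val hv⟩

lemma norm_sq_sq_le_dirichletEnergy_mul (h : MatrixUnitAction ψ D) (u f : P)
    (huf : ψ (casimir D u) = ψ f) :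
    (‖ψ f‖ ^ 2) ^ 2 ≤ dirichletEnergy ψ D f * dirichletEnergy ψ D u := by
  have hinner : ⟪ψ f, ψ f⟫_ℂ = ∑ a : ι × ι, ⟪ψ (D a.1 a.2 f), ψ (D a.1 a.2 u)⟫_ℂ := by
    nth_rewrite 2 [← huf]
    rw [h.inner_map_casimir, Fintype.sum_prod_type]
  have hle : ‖ψ f‖ ^ 2 ≤ ∑ a : ι × ι, ‖ψ (D a.1 a.2 f)‖ * ‖ψ (D a.1 a.2 u)‖ :=
    calc ‖ψ f‖ ^ 2 = ‖⟪ψ f, ψ f⟫_ℂ‖ := by simp [inner_self_eq_norm_sq_to_K]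
      _ ≤ _ := by
        rw [hinner]
        exact (norm_sum_le _ _).trans (Finset.sum_le_sum fun a _ => norm_inner_le_norm _ _)
  have hcs := Finset.sum_mul_sq_le_sq_mul_sq Finset.univ
    (fun a : ι × ι => ‖ψ (D a.1 a.2 f)‖) (fun a : ι × ι => ‖ψ (D a.1 a.2 u)‖)
  calc (‖ψ f‖ ^ 2) ^ 2 ≤ _ := (pow_le_pow_left₀ (sq_nonneg _) hle 2).trans hcs
    _ = _ := by simp only [dirichletEnergy, Fintype.sum_prod_type]

theorem norm_sq_le_dirichletEnergy [FiniteDimensional ℂ P] [Nonempty ι]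
    (h : MatrixUnitAction ψ D) {f : P}
    (hf : ∀ g, (∀ i j, ψ (D i j g) = 0) → ⟪ψ g, ψ f⟫_ℂ = 0) :
    ‖ψ f‖ ^ 2 ≤ 2 / (Fintype.card ι : ℝ) * dirichletEnergy ψ D f := by
  obtain ⟨u, hu⟩ := h.exists_map_casimir_eq hf
  have hcard : (0 : ℝ) < Fintype.card ι := by exact_mod_cast Fintype.card_pos
  have henergy : dirichletEnergy ψ D u ≤ 2 / (Fintype.card ι : ℝ) * ‖ψ f‖ ^ 2 := by
    rw [div_mul_eq_mul_div, le_div_iff₀ hcard]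
    linarith [hu ▸ h.card_mul_dirichletEnergy_le u]
  have hf_nonneg : 0 ≤ dirichletEnergy ψ D f := dirichletEnergy_nonneg f
  rcases (sq_nonneg ‖ψ f‖).eq_or_lt with hzero | hpos
  · rw [← hzero]
    positivity
  · refine le_of_mul_le_mul_right ?_ hpos
    nlinarith [h.norm_sq_sq_le_dirichletEnergy_mul u f hu,
      mul_le_mul_of_nonneg_left henergy hf_nonneg]

end MatrixUnitAction

end SpectralGap

/-! ### Polynomial functions of a matrix and the adjoint action -/

section MatrixDerivation

section

variable {ι 𝕜 R : Type*} [CommSemiring 𝕜] [CommSemiring R] [Algebra 𝕜 R]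

lemma derivation_mem_mul (δ : Derivation 𝕜 R R) {P Q : Submodule 𝕜 R} (hP : ∀ f ∈ P, δ f ∈ P)
    (hQ : ∀ f ∈ Q, δ f ∈ Q) : ∀ f ∈ P * Q, δ f ∈ P * Q := fun f hf => by
  refine Submodule.mul_induction_on hf (fun x hx y hy => ?_) fun x y hx hy => ?_
  · rw [Derivation.leibniz, smul_eq_mul, smul_eq_mul, mul_comm y]
    exact add_mem (Submodule.mul_mem_mul hx (hQ y hy)) (Submodule.mul_mem_mul (hP x hx) hy)
  · rw [map_add]
    exact add_mem hx hy

lemma trace_map_derivation [Fintype ι] (δ : Derivation 𝕜 R R) (P : Matrix ι ι R) :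
    (P.map δ).trace = δ P.trace := by
  simp [Matrix.trace]

lemma map_derivation_mul [Fintype ι] (δ : Derivation 𝕜 R R) (P Q : Matrix ι ι R) :
    (P * Q).map δ = P.map δ * Q + P * Q.map δ := by
  ext i j
  simp only [Matrix.map_apply, Matrix.mul_apply, Matrix.add_apply, map_sum, Derivation.leibniz,
    smul_eq_mul, Finset.sum_add_distrib]
  rw [add_comm]
  congr 1
  exact Finset.sum_congr rfl fun _ _ => mul_comm _ _

lemma map_derivation_pow [Fintype ι] [DecidableEq ι] (δ : Derivation 𝕜 R R) (P : Matrix ι ι R)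
    (k : ℕ) :
    (P ^ k).map δ = ∑ r ∈ Finset.range k, P ^ r * P.map δ * P ^ (k - 1 - r) := by
  induction k with
  | zero =>
    ext i j
    by_cases h : i = j <;> simp [h]
  | succ k ih =>
    rw [pow_succ, map_derivation_mul, ih, Finset.sum_range_succ, Finset.sum_mul]
    congr 1
    · refine Finset.sum_congr rfl fun r hr => ?_
      rw [show k + 1 - 1 - r = (k - 1 - r) + 1 by have := Finset.mem_range.mp hr; omega,
        pow_succ]
      simp only [mul_assoc]
    · simp

end

section

variable {ι R : Type*} [CommRing R] [Fintype ι] [DecidableEq ι]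

lemma mul_single_one_mul_apply (A B : Matrix ι ι R) (i j k l : ι) :
    (A * Matrix.single i j 1 * B : Matrix ι ι R) k l = A k i * B j l := by
  rw [Matrix.mul_apply, Finset.sum_eq_single j]
  · simp [Matrix.mul_single_apply_same]
  · intro b _ hb
    rw [Matrix.mul_single_apply_of_ne _ _ _ _ _ hb, zero_mul]
  · simp

lemma sum_mul_commutator_single_mul (P W Q : Matrix ι ι R) :
    ∑ i, ∑ j, (P * (Matrix.single i j 1 * W - W * Matrix.single i j 1) * Q : Matrix ι ι R) i j =
      P.trace * (W * Q).trace - (P * W).trace * Q.trace := by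
  have hterm : ∀ i j,
      (P * (Matrix.single i j 1 * W - W * Matrix.single i j 1) * Q : Matrix ι ι R) i j =
        P i i * (W * Q) j j - (P * W) i i * Q j j := fun i j => by
    rw [← mul_single_one_mul_apply, ← mul_single_one_mul_apply]
    simp only [mul_sub, sub_mul, Matrix.sub_apply, mul_assoc]
  simp only [hterm, Matrix.trace, Matrix.diag_apply, Finset.sum_mul_sum, Finset.sum_sub_distrib]

lemma trace_commutator_single_mul (i j : ι) (W H : Matrix ι ι R) :
    ((Matrix.single i j 1 * W - W * Matrix.single i j 1) * H).trace =
      (W * H - H * W : Matrix ι ι R) j i := by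
  rw [sub_mul, Matrix.trace_sub, Matrix.sub_apply, mul_assoc (Matrix.single i j 1),
    Matrix.trace_single_mul, one_smul, Matrix.trace_mul_comm, ← mul_assoc, Matrix.trace_mul_comm,
    Matrix.trace_single_mul, one_smul]

end

variable {ι : Type*} [Fintype ι] [DecidableEq ι]

/-- Polynomial functions in the entries of a complex matrix. -/
abbrev EntryPoly (ι : Type*) := MvPolynomial (ι × ι) ℂ

/-- The generic matrix: its entries are the coordinate functions. -/
abbrev genericMatrix (ι : Type*) : Matrix ι ι (EntryPoly ι) := Matrix.mvPolynomialX ι ι ℂ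

/-- Evaluation of a polynomial in the entries at a matrix. -/
def evalAt {ι : Type*} (x : Matrix ι ι ℂ) : EntryPoly ι →ₐ[ℂ] ℂ :=
  MvPolynomial.aeval fun s => x s.1 s.2

/-- Evaluation at a matrix of a matrix of polynomials. -/
def evalMatrix (x : Matrix ι ι ℂ) : Matrix ι ι (EntryPoly ι) →ₐ[ℂ] Matrix ι ι ℂ :=
  (evalAt x).mapMatrix

/-- A complex matrix viewed as a matrix of constant polynomials. -/
def constMatrix : Matrix ι ι ℂ →ₐ[ℂ] Matrix ι ι (EntryPoly ι) :=
  (Algebra.ofId ℂ (EntryPoly ι)).mapMatrix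

lemma evalMatrix_apply (x : Matrix ι ι ℂ) (Φ : Matrix ι ι (EntryPoly ι)) (i j : ι) :
    evalMatrix x Φ i j = evalAt x (Φ i j) := rfl

lemma evalMatrix_genericMatrix (x : Matrix ι ι ℂ) : evalMatrix x (genericMatrix ι) = x :=
  Matrix.mvPolynomialX_mapMatrix_aeval ℂ x

lemma evalMatrix_constMatrix (x B : Matrix ι ι ℂ) : evalMatrix x (constMatrix B) = B := by
  ext i j
  simp [evalMatrix, constMatrix]

lemma trace_evalMatrix (x : Matrix ι ι ℂ) (Φ : Matrix ι ι (EntryPoly ι)) :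
    (evalMatrix x Φ).trace = evalAt x Φ.trace := by
  simp [Matrix.trace, evalMatrix_apply]

lemma constMatrix_single (i j : ι) :
    constMatrix (Matrix.single i j (1 : ℂ)) = Matrix.single i j 1 := by
  ext k l : 1
  by_cases h : i = k ∧ j = l <;> simp [constMatrix, h]

lemma map_derivation_constMatrix (δ : Derivation ℂ (EntryPoly ι) (EntryPoly ι))
    (B : Matrix ι ι ℂ) : (constMatrix B).map δ = 0 := by
  ext k l : 1
  simp [constMatrix, Algebra.ofId_apply]

/-- The derivation sending the generic matrix `X` to the commutator `[A, X]`: the vector field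
generating conjugation by `exp (t A)`. -/
def adDerivation : Matrix ι ι ℂ →ₗ[ℂ] Derivation ℂ (EntryPoly ι) (EntryPoly ι) where
  toFun A := MvPolynomial.mkDerivation ℂ fun s =>
    (constMatrix A * genericMatrix ι - genericMatrix ι * constMatrix A) s.1 s.2
  map_add' A B := MvPolynomial.derivation_ext fun s => by
    simp [add_mul, mul_add]
    ring
  map_smul' c A := MvPolynomial.derivation_ext fun s => by
    simp [smul_sub]

lemma map_adDerivation_genericMatrix (A : Matrix ι ι ℂ) : (genericMatrix ι).map (adDerivation A) =
    constMatrix A * genericMatrix ι - genericMatrix ι * constMatrix A := by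
  ext i j : 1
  simp [adDerivation, Matrix.mvPolynomialX_apply]

omit [Fintype ι] [DecidableEq ι] in
lemma derivation_ext_genericMatrix {δ₁ δ₂ : Derivation ℂ (EntryPoly ι) (EntryPoly ι)}
    (h : (genericMatrix ι).map δ₁ = (genericMatrix ι).map δ₂) : δ₁ = δ₂ :=
  MvPolynomial.derivation_ext fun s => congrFun (congrFun h s.1) s.2

lemma lie_adDerivation (A B : Matrix ι ι ℂ) :
    ⁅adDerivation A, adDerivation B⁆ = adDerivation (B * A - A * B) := by
  have hiter : ∀ A B : Matrix ι ι ℂ, ((genericMatrix ι).map (adDerivation B)).map (adDerivation A) =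
      constMatrix B * (constMatrix A * genericMatrix ι - genericMatrix ι * constMatrix A) -
        (constMatrix A * genericMatrix ι - genericMatrix ι * constMatrix A) * constMatrix B := by
    intro A B
    rw [map_adDerivation_genericMatrix, Matrix.map_sub _ (map_sub _), map_derivation_mul,
      map_derivation_mul, map_derivation_constMatrix, map_adDerivation_genericMatrix, zero_mul,
      zero_add, mul_zero, add_zero]
  have hlie : (genericMatrix ι).map (⁅adDerivation A, adDerivation B⁆ : Derivation ℂ _ _) =
      ((genericMatrix ι).map (adDerivation B)).map (adDerivation A) -
        ((genericMatrix ι).map (adDerivation A)).map (adDerivation B) := by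
    ext i j : 1
    simp [Derivation.commutator_apply]
  refine derivation_ext_genericMatrix ?_
  rw [hlie, hiter, hiter, map_adDerivation_genericMatrix, map_sub, map_mul, map_mul]
  noncomm_ring

lemma adDerivation_one : adDerivation (1 : Matrix ι ι ℂ) = 0 :=
  derivation_ext_genericMatrix <| by
    rw [map_adDerivation_genericMatrix]
    ext i j : 1
    simp

lemma adDerivation_X_mem_span (A : Matrix ι ι ℂ) (s : ι × ι) :
    adDerivation A (MvPolynomial.X s) ∈
      Submodule.span ℂ (Set.range (MvPolynomial.X : ι × ι → EntryPoly ι)) := by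
  have hX : ∀ c s, MvPolynomial.C c * (MvPolynomial.X s : EntryPoly ι) ∈
      Submodule.span ℂ (Set.range MvPolynomial.X) := fun c s => by
    rw [← MvPolynomial.smul_eq_C_mul]
    exact Submodule.smul_mem _ _ (Submodule.subset_span ⟨s, rfl⟩)
  have hentry : adDerivation A (MvPolynomial.X s) =
      ((genericMatrix ι).map (adDerivation A)) s.1 s.2 := rfl
  rw [hentry, map_adDerivation_genericMatrix, Matrix.sub_apply, Matrix.mul_apply, Matrix.mul_apply]
  refine sub_mem (Submodule.sum_mem _ fun k _ => ?_) (Submodule.sum_mem _ fun k _ => ?_)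
  · exact hX _ _
  · rw [mul_comm]
    exact hX _ _

lemma exists_fg_adDerivation_stable (f : EntryPoly ι) :
    ∃ P : Submodule ℂ (EntryPoly ι), P.FG ∧ f ∈ P ∧ ∀ A, ∀ g ∈ P, adDerivation A g ∈ P := by
  induction f using MvPolynomial.induction_on with
  | C a =>
    refine ⟨Submodule.span ℂ {1}, Submodule.fg_span_singleton _, ?_, fun A g hg => ?_⟩
    · exact Submodule.mem_span_singleton.mpr ⟨a, by simp [MvPolynomial.smul_eq_C_mul]⟩
    · obtain ⟨c, rfl⟩ := Submodule.mem_span_singleton.mp hg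
      simp
  | add p q hp hq =>
    obtain ⟨P, hP, hpP, hPs⟩ := hp
    obtain ⟨Q, hQ, hqQ, hQs⟩ := hq
    refine ⟨P ⊔ Q, hP.sup hQ, Submodule.add_mem_sup hpP hqQ, fun A g hg => ?_⟩
    obtain ⟨y, hy, z, hz, rfl⟩ := Submodule.mem_sup.mp hg
    rw [map_add]
    exact Submodule.add_mem_sup (hPs A y hy) (hQs A z hz)
  | mul_X p s hp =>
    obtain ⟨P, hP, hpP, hPs⟩ := hp
    refine ⟨P * Submodule.span ℂ (Set.range MvPolynomial.X),
      hP.mul (Submodule.fg_span (Set.finite_range _)),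
      Submodule.mul_mem_mul hpP (Submodule.subset_span ⟨s, rfl⟩), fun A =>
      derivation_mem_mul _ (hPs A) fun g hg => ?_⟩
    induction hg using Submodule.span_induction with
    | mem x hx =>
      obtain ⟨s, rfl⟩ := hx
      exact adDerivation_X_mem_span A s
    | zero => simp
    | add x y _ _ hx hy => rw [map_add]; exact add_mem hx hy
    | smul a x _ hx => rw [Derivation.map_smul]; exact Submodule.smul_mem _ a hx

/-- The polynomial matrices on which the adjoint action is by commutators, like polynomials in
the generic matrix. -/
def equivariant (ι : Type*) [Fintype ι] [DecidableEq ι] :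
    Subalgebra ℂ (Matrix ι ι (EntryPoly ι)) where
  carrier := {Φ | ∀ A, Φ.map (adDerivation A) = constMatrix A * Φ - Φ * constMatrix A}
  mul_mem' {Φ Ψ} hΦ hΨ A := by
    rw [map_derivation_mul, hΦ, hΨ]
    noncomm_ring
  add_mem' {Φ Ψ} hΦ hΨ A := by
    rw [Matrix.map_add _ (map_add _), hΦ, hΨ]
    noncomm_ring
  algebraMap_mem' c A := by
    rw [Algebra.commutes, sub_self, ← constMatrix.commutes, map_derivation_constMatrix]

lemma map_adDerivation_of_mem_equivariant {Φ : Matrix ι ι (EntryPoly ι)} (h : Φ ∈ equivariant ι)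
    (A : Matrix ι ι ℂ) : Φ.map (adDerivation A) = constMatrix A * Φ - Φ * constMatrix A :=
  h A

lemma genericMatrix_mem_equivariant : genericMatrix ι ∈ equivariant ι :=
  map_adDerivation_genericMatrix

end MatrixDerivation

/-! ### Haar integration over unitary orbits -/

section UnitaryOrbit

open scoped Matrix.Norms.L2Operator InnerProductSpace ComplexConjugate

instance {ι : Type*} [Countable ι] : BorelSpace (Matrix ι ι ℂ) :=
  inferInstanceAs (BorelSpace (ι → ι → ℂ))

instance {ι : Type*} [Countable ι] : SecondCountableTopology (Matrix ι ι ℂ) :=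
  inferInstanceAs (SecondCountableTopology (ι → ι → ℂ))

variable {ι : Type*} [Fintype ι] [DecidableEq ι]

instance : BorelSpace (Matrix.unitaryGroup ι ℂ) := Subtype.borelSpace _

instance : CompactSpace (Matrix.unitaryGroup ι ℂ) := by
  refine isCompact_iff_compactSpace.mp
    (?_ : IsCompact (Matrix.unitaryGroup ι ℂ : Set (Matrix ι ι ℂ)))
  have hclosed : IsClosed (Matrix.unitaryGroup ι ℂ : Set (Matrix ι ι ℂ)) := by
    have heq : (Matrix.unitaryGroup ι ℂ : Set (Matrix ι ι ℂ)) = {U | U * star U = 1} := by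
      ext U
      exact Matrix.mem_unitaryGroup_iff
    rw [heq]
    exact isClosed_eq (by fun_prop) continuous_const
  have : ProperSpace (Matrix ι ι ℂ) := FiniteDimensional.proper ℂ _
  refine Metric.isCompact_of_isClosed_isBounded hclosed ?_
  rcases subsingleton_or_nontrivial (Matrix ι ι ℂ) with h | h
  · exact (Set.toFinite _).isBounded
  · refine (Metric.isBounded_closedBall (x := 0) (r := 1)).subset fun U hU => ?_
    rw [mem_closedBall_zero_iff, CStarRing.norm_of_mem_unitary hU]

/-- The Haar probability measure on the unitary group. -/
def haarUnitary (ι : Type*) [Fintype ι] [DecidableEq ι] : Measure (Matrix.unitaryGroup ι ℂ) :=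
  Measure.haarMeasure ⊤

instance : (haarUnitary ι).IsHaarMeasure := inferInstanceAs (Measure.haarMeasure ⊤).IsHaarMeasure

instance : IsProbabilityMeasure (haarUnitary ι) :=
  ⟨Measure.haarMeasure_self (G := Matrix.unitaryGroup ι ℂ) (K₀ := ⊤)⟩

lemma integrable_haarUnitary {E : Type*} [NormedAddCommGroup E]
    {f : Matrix.unitaryGroup ι ℂ → E} (hf : Continuous f) : Integrable f (haarUnitary ι) :=
  hf.integrable_of_hasCompactSupport (HasCompactSupport.of_compactSpace f)

/-- The conjugate of a matrix by a unitary. -/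
def unitaryConj (D : Matrix ι ι ℂ) (V : Matrix.unitaryGroup ι ℂ) : Matrix ι ι ℂ :=
  V * D * star (V : Matrix ι ι ℂ)

@[fun_prop]
lemma continuous_unitaryConj (D : Matrix ι ι ℂ) : Continuous (unitaryConj D) := by
  unfold unitaryConj
  fun_prop

lemma unitaryConj_one (D : Matrix ι ι ℂ) : unitaryConj D 1 = D := by
  simp [unitaryConj]

lemma unitaryConj_mul (D : Matrix ι ι ℂ) (W V : Matrix.unitaryGroup ι ℂ) :
    unitaryConj D (W * V) = W * unitaryConj D V * star (W : Matrix ι ι ℂ) := by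
  simp [unitaryConj, mul_assoc]

lemma unitaryConj_smul (D : Matrix ι ι ℂ) (z : unitary ℂ) (V : Matrix.unitaryGroup ι ℂ) :
    unitaryConj D (z • V) = unitaryConj D V := by
  simp only [unitaryConj, Unitary.coe_smul, star_smul, Submonoid.smul_def, smul_mul_assoc]
  rw [mul_smul_comm, smul_smul, Unitary.mul_star_self_of_mem z.2, one_smul]

omit [Fintype ι] [DecidableEq ι] in
lemma continuous_evalAt (f : EntryPoly ι) : Continuous fun x : Matrix ι ι ℂ => evalAt x f := by
  have heq : (fun x : Matrix ι ι ℂ => evalAt x f) =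
      (fun v => MvPolynomial.eval v f) ∘ fun x (s : ι × ι) => x s.1 s.2 := by
    ext x
    simp [evalAt, MvPolynomial.aeval_eq_eval]
  rw [heq]
  exact (MvPolynomial.continuous_eval f).comp (by fun_prop)

@[fun_prop]
lemma continuous_evalAt_unitaryConj (D : Matrix ι ι ℂ) (f : EntryPoly ι) :
    Continuous fun V => evalAt (unitaryConj D V) f :=
  (continuous_evalAt f).comp (continuous_unitaryConj D)

lemma hasDerivAt_evalAt {x : ℝ → Matrix ι ι ℂ} {A : Matrix ι ι ℂ} {t : ℝ}
    (hx : HasDerivAt x (A * x t - x t * A) t) (f : EntryPoly ι) :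
    HasDerivAt (fun t => evalAt (x t) f) (evalAt (x t) (adDerivation A f)) t := by
  induction f using MvPolynomial.induction_on with
  | C a => simpa [evalAt] using hasDerivAt_const t a
  | add p q hp hq =>
    simp only [map_add]
    exact hp.add hq
  | mul_X p s hp =>
    have hX : evalAt (x t) (adDerivation A (MvPolynomial.X s)) = (A * x t - x t * A) s.1 s.2 := by
      change evalMatrix (x t) ((genericMatrix ι).map (adDerivation A)) s.1 s.2 = _
      rw [map_adDerivation_genericMatrix, map_sub, map_mul, map_mul, evalMatrix_constMatrix,
        evalMatrix_genericMatrix]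
    have hs : HasDerivAt (fun t => evalAt (x t) (MvPolynomial.X s))
        (evalAt (x t) (adDerivation A (MvPolynomial.X s))) t := by
      rw [hX]
      simpa [evalAt] using hasDerivAt_pi.mp (hasDerivAt_pi.mp hx s.1) s.2
    simp only [map_mul, Derivation.leibniz, smul_eq_mul, map_add]
    exact (hp.mul hs).congr_deriv (by ring)

lemma hasDerivAt_unitaryConj_expUnitary (H : selfAdjoint (Matrix ι ι ℂ)) (D : Matrix ι ι ℂ)
    (V : Matrix.unitaryGroup ι ℂ) (t : ℝ) :
    HasDerivAt (fun t : ℝ => unitaryConj D (selfAdjoint.expUnitary (t • H) * V))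
      ((Complex.I • (H : Matrix ι ι ℂ)) * unitaryConj D (selfAdjoint.expUnitary (t • H) * V) -
        unitaryConj D (selfAdjoint.expUnitary (t • H) * V) * (Complex.I • (H : Matrix ι ι ℂ)))
      t := by
  set A : Matrix ι ι ℂ := Complex.I • (H : Matrix ι ι ℂ) with hA
  have hstar : star A = -A := by
    rw [hA, star_smul, H.2.star_eq]
    simp
  have hcoe : ∀ t : ℝ, (selfAdjoint.expUnitary (t • H) : Matrix ι ι ℂ) =
      NormedSpace.exp (t • A) := fun t => by
    rw [selfAdjoint.expUnitary_coe, hA, smul_comm, selfAdjoint.val_smul]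
  have hexp : HasDerivAt (fun t : ℝ => NormedSpace.exp (t • A)) (A * NormedSpace.exp (t • A)) t :=
    hasDerivAt_exp_smul_const' A t
  have hconj := (hexp.mul_const (unitaryConj D V)).mul hexp.star
  simp only [unitaryConj_mul, hcoe]
  refine hconj.congr_deriv ?_
  rw [star_mul, hstar]
  noncomm_ring

lemma integral_flow_deriv_eq_zero (H : selfAdjoint (Matrix ι ι ℂ))
    {h h' : Matrix.unitaryGroup ι ℂ → ℂ} (hc : Continuous h) (hc' : Continuous h')
    (hd : ∀ V t, HasDerivAt (fun t : ℝ => h (selfAdjoint.expUnitary (t • H) * V))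
      (h' (selfAdjoint.expUnitary (t • H) * V)) t) :
    ∫ V, h' V ∂haarUnitary ι = 0 := by
  obtain ⟨C, hC⟩ := (isCompact_range hc').isBounded.exists_norm_le
  have hderiv := (hasDerivAt_integral_of_dominated_loc_of_deriv_le (μ := haarUnitary ι)
    (x₀ := (0 : ℝ)) (s := Set.univ)
    (F := fun t V => h (selfAdjoint.expUnitary (t • H) * V))
    (F' := fun t V => h' (selfAdjoint.expUnitary (t • H) * V))
    (bound := fun _ => C) Filter.univ_mem
    (Eventually.of_forall fun t => (hc.comp (continuous_const_mul _)).aestronglyMeasurable)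
    (integrable_haarUnitary (hc.comp (continuous_const_mul _)))
    (hc'.comp (continuous_const_mul _)).aestronglyMeasurable
    (Eventually.of_forall fun V t _ => hC _ ⟨_, rfl⟩) (integrable_const _)
    (Eventually.of_forall fun V t _ => hd V t)).2
  simp only [integral_mul_left_eq_self, zero_smul, selfAdjoint.expUnitary_zero, one_mul] at hderiv
  exact hderiv.unique (hasDerivAt_const _ _)

/-- The expectation of a polynomial in the entries of a Haar-random conjugate of `D`. -/
def orbitExpectation (D : Matrix ι ι ℂ) : EntryPoly ι →ₗ[ℂ] ℂ where
  toFun f := ∫ V, evalAt (unitaryConj D V) f ∂haarUnitary ι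
  map_add' f g := by
    simp only [map_add]
    exact integral_add (integrable_haarUnitary (by fun_prop)) (integrable_haarUnitary (by fun_prop))
  map_smul' c f := by
    simp only [map_smul, smul_eq_mul, RingHom.id_apply]
    exact integral_const_mul _ _

lemma orbitExpectation_apply (D : Matrix ι ι ℂ) (f : EntryPoly ι) :
    orbitExpectation D f = ∫ V, evalAt (unitaryConj D V) f ∂haarUnitary ι := rfl

lemma orbitExpectation_C (D : Matrix ι ι ℂ) (c : ℂ) :
    orbitExpectation D (MvPolynomial.C c) = c := by
  simp [orbitExpectation_apply, evalAt]

/-- The class in `L²` of a polynomial in the entries of a Haar-random conjugate of `D`. -/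
def orbitLp (D : Matrix ι ι ℂ) : EntryPoly ι →ₗ[ℂ] Lp ℂ 2 (haarUnitary ι) where
  toFun f :=
    ContinuousMap.toLp 2 (haarUnitary ι) ℂ ⟨fun V => evalAt (unitaryConj D V) f, by fun_prop⟩
  map_add' f g := by
    rw [← map_add]
    congr 1
    ext V
    simp
  map_smul' c f := by
    rw [RingHom.id_apply, ← map_smul]
    congr 1
    ext V
    simp

lemma inner_orbitLp (D : Matrix ι ι ℂ) (f g : EntryPoly ι) : ⟪orbitLp D f, orbitLp D g⟫_ℂ =
    ∫ V, conj (evalAt (unitaryConj D V) f) * evalAt (unitaryConj D V) g ∂haarUnitary ι := by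
  refine (MeasureTheory.ContinuousMap.inner_toLp (haarUnitary ι) _ _).trans ?_
  simp [mul_comm]

lemma norm_sq_orbitLp (D : Matrix ι ι ℂ) (f : EntryPoly ι) : ‖orbitLp D f‖ ^ 2 =
    ∫ V, ‖evalAt (unitaryConj D V) f‖ ^ 2 ∂haarUnitary ι := by
  have h := inner_orbitLp D f f
  simp only [inner_self_eq_norm_sq_to_K, ← Complex.normSq_eq_conj_mul_self,
    Complex.normSq_eq_norm_sq, integral_complex_ofReal] at h
  exact Complex.ofReal_injective (Eq.trans (by simp) h)

lemma evalAt_eq_zero_of_orbitLp_eq_zero {D : Matrix ι ι ℂ} {f : EntryPoly ι}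
    (h : orbitLp D f = 0) (V : Matrix.unitaryGroup ι ℂ) : evalAt (unitaryConj D V) f = 0 :=
  congrArg (fun φ : C(Matrix.unitaryGroup ι ℂ, ℂ) => φ V)
    (ContinuousMap.toLp_injective (p := 2) (𝕜 := ℂ) (haarUnitary ι) (h.trans (map_zero _).symm))

lemma inner_orbitLp_adDerivation_selfAdjoint (D : Matrix ι ι ℂ) (H : selfAdjoint (Matrix ι ι ℂ))
    (f g : EntryPoly ι) :
    ⟪orbitLp D f, orbitLp D (adDerivation H g)⟫_ℂ =
      ⟪orbitLp D (adDerivation H f), orbitLp D g⟫_ℂ := by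
  have hzero := integral_flow_deriv_eq_zero H
    (h := fun V => conj (evalAt (unitaryConj D V) f) * evalAt (unitaryConj D V) g)
    (h' := fun V =>
      conj (evalAt (unitaryConj D V) (adDerivation (Complex.I • (H : Matrix ι ι ℂ)) f)) *
          evalAt (unitaryConj D V) g +
        conj (evalAt (unitaryConj D V) f) *
          evalAt (unitaryConj D V) (adDerivation (Complex.I • (H : Matrix ι ι ℂ)) g))
    (by fun_prop) (by fun_prop) fun V t =>
      (hasDerivAt_evalAt (hasDerivAt_unitaryConj_expUnitary H D V t) f).star.mul
        (hasDerivAt_evalAt (hasDerivAt_unitaryConj_expUnitary H D V t) g)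
  rw [integral_add (integrable_haarUnitary (by fun_prop)) (integrable_haarUnitary (by fun_prop)),
    ← inner_orbitLp, ← inner_orbitLp, map_smul, Derivation.smul_apply, Derivation.smul_apply,
    map_smul, map_smul, inner_smul_left, inner_smul_right, Complex.conj_I] at hzero
  refine mul_left_cancel₀ Complex.I_ne_zero ?_
  linear_combination hzero

/-- Integration by parts on the unitary group. -/
lemma inner_orbitLp_adDerivation (D A : Matrix ι ι ℂ) (f g : EntryPoly ι) :
    ⟪orbitLp D f, orbitLp D (adDerivation A g)⟫_ℂ =
      ⟪orbitLp D (adDerivation (star A) f), orbitLp D g⟫_ℂ := by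
  have hadd := inner_orbitLp_adDerivation_selfAdjoint D (realPart A) f g
  have hadd' := inner_orbitLp_adDerivation_selfAdjoint D (imaginaryPart A) f g
  rw [← realPart_add_I_smul_imaginaryPart A, star_add, star_smul, (realPart A).2.star_eq,
    (imaginaryPart A).2.star_eq]
  simp only [map_add, map_smul, Derivation.add_apply, Derivation.smul_apply, inner_add_left,
    inner_add_right, inner_smul_left, inner_smul_right, hadd, hadd', Complex.star_def,
    Complex.conj_conj]

lemma orbitExpectation_adDerivation (D A : Matrix ι ι ℂ) (f : EntryPoly ι) :
    orbitExpectation D (adDerivation A f) = 0 := by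
  simpa [inner_orbitLp, ← orbitExpectation_apply] using inner_orbitLp_adDerivation D A 1 f

end UnitaryOrbit

section Poincare

open scoped Matrix.Norms.L2Operator InnerProductSpace

variable {ι : Type*} [Fintype ι] [DecidableEq ι]

lemma single_mul_single_eq_ite (i j k l : ι) :
    single i j (1 : ℂ) * single k l 1 = if k = j then single i l 1 else 0 := by
  split_ifs with h
  · simp [h]
  · simp [Ne.symm h]

lemma exists_norm_smul_sub_one_lt_two (W : Matrix.unitaryGroup ι ℂ) :
    ∃ z : unitary ℂ, ‖((z • W : Matrix.unitaryGroup ι ℂ) : Matrix ι ι ℂ) - 1‖ < 2 := by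
  have hcircle : (Metric.sphere (0 : ℂ) 1).Infinite :=
    (isPreconnected_sphere (by simp [Complex.rank_real_complex]) 0 1).infinite_of_nontrivial
      ⟨1, by simp, -1, by simp, by norm_num⟩
  obtain ⟨w, hw, hspec⟩ :=
    (hcircle.sdiff (Matrix.finite_spectrum (W : Matrix ι ι ℂ))).nonempty
  have hstar : w * star w = 1 := by
    rw [Complex.star_def, Complex.mul_conj, Complex.normSq_eq_norm_sq,
      mem_sphere_zero_iff_norm.mp hw]
    norm_num
  let z : unitary ℂ := ⟨-star w, by
    rw [Unitary.mem_iff_self_mul_star, star_neg, star_star, neg_mul_neg, mul_comm, hstar]⟩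
  refine ⟨z, (Unitary.norm_sub_one_lt_two_iff (z • W).2).mpr fun hmem => hspec ?_⟩
  have hz : -1 = Unitary.toUnits z • w := by
    rw [Units.smul_def, Unitary.val_toUnits_apply, smul_eq_mul]
    linear_combination hstar
  have hcoe : ((z • W : Matrix.unitaryGroup ι ℂ) : Matrix ι ι ℂ) =
      Unitary.toUnits z • (W : Matrix ι ι ℂ) := by
    rw [Unitary.coe_smul, Units.smul_def, Unitary.val_toUnits_apply, Submonoid.smul_def]
  rw [hcoe, hz] at hmem
  exact spectrum.smul_mem_smul_iff.mp hmem

/-- Up to a phase, which acts trivially, every unitary is reached from the identity by a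
one-parameter group, along which the polynomial is constant. -/
lemma evalAt_unitaryConj_of_adDerivation_eq_zero {D : Matrix ι ι ℂ} {g : EntryPoly ι}
    (hg : ∀ A V, evalAt (unitaryConj D V) (adDerivation A g) = 0)
    (W : Matrix.unitaryGroup ι ℂ) : evalAt (unitaryConj D W) g = evalAt D g := by
  obtain ⟨z, hz⟩ := exists_norm_smul_sub_one_lt_two W
  set H := Unitary.argSelfAdjoint (z • W)
  have hderiv : ∀ t : ℝ, HasDerivAt
      (fun t : ℝ => evalAt (unitaryConj D (selfAdjoint.expUnitary (t • H) * 1)) g) 0 t := by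
    intro t
    simpa only [hg] using hasDerivAt_evalAt (hasDerivAt_unitaryConj_expUnitary H D 1 t) g
  have hconst := is_const_of_deriv_eq_zero (fun t => (hderiv t).differentiableAt)
    (fun t => (hderiv t).deriv) 1 0
  simpa only [one_smul, zero_smul, mul_one, selfAdjoint.expUnitary_zero, H,
    expUnitary_argSelfAdjoint hz, unitaryConj_smul, unitaryConj_one] using hconst

/-- The derivation along `A`, restricted to a space of polynomials that it preserves. -/
def adDerivationOn {P : Submodule ℂ (EntryPoly ι)} (hP : ∀ A, ∀ f ∈ P, adDerivation A f ∈ P)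
    (A : Matrix ι ι ℂ) : P →ₗ[ℂ] P :=
  (adDerivation A).toLinearMap.restrict (hP A)

lemma coe_adDerivationOn {P : Submodule ℂ (EntryPoly ι)}
    (hP : ∀ A, ∀ f ∈ P, adDerivation A f ∈ P) (A : Matrix ι ι ℂ) (f : P) :
    (adDerivationOn hP A f : EntryPoly ι) = adDerivation A f := rfl

lemma matrixUnitAction_orbitLp (D : Matrix ι ι ℂ) {P : Submodule ℂ (EntryPoly ι)}
    (hP : ∀ A, ∀ f ∈ P, adDerivation A f ∈ P) :
    MatrixUnitAction (orbitLp D ∘ₗ P.subtype) fun i j => adDerivationOn hP (single i j 1) := by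
  refine ⟨fun i j f g => ?_, fun i j k l f => ?_, fun f => ?_⟩
  · simpa [coe_adDerivationOn, star_eq_conjTranspose] using
      inner_orbitLp_adDerivation D (single i j 1) (f : EntryPoly ι) g
  · ext1
    have hlie := DFunLike.congr_fun (lie_adDerivation (single i j (1 : ℂ)) (single k l 1)) f.1
    rw [Derivation.commutator_apply, single_mul_single_eq_ite, single_mul_single_eq_ite] at hlie
    rw [Submodule.coe_sub, Submodule.coe_sub]
    simp only [coe_adDerivationOn, hlie]
    split_ifs <;> simp [coe_adDerivationOn]
  · have hsum : ∑ i : ι, adDerivation (single i i (1 : ℂ)) = 0 := by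
      rw [← map_sum, Matrix.sum_single_one, adDerivation_one]
    have hfun := (map_sum (Derivation.coeFnAddMonoidHom (R := ℂ) (A := EntryPoly ι)
      (M := EntryPoly ι)) (fun i : ι => adDerivation (single i i 1)) Finset.univ).symm.trans
        (congrArg _ hsum)
    ext1
    simpa [coe_adDerivationOn] using congrFun hfun f.1

lemma inner_orbitLp_eq_zero_of_adDerivation_eq_zero {D : Matrix ι ι ℂ} {f g : EntryPoly ι}
    (hg : ∀ i j, orbitLp D (adDerivation (single i j 1) g) = 0) (hf : orbitExpectation D f = 0) :
    ⟪orbitLp D g, orbitLp D f⟫_ℂ = 0 := by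
  have hinv := evalAt_unitaryConj_of_adDerivation_eq_zero (D := D) (g := g) fun A V => by
    induction A using Matrix.induction_on' with
    | h_zero => simp
    | h_add A B hA hB => rw [map_add, Derivation.add_apply, map_add, hA, hB, add_zero]
    | h_std_basis i j c =>
      rw [show single i j c = c • single i j 1 by simp [smul_single], map_smul,
        Derivation.smul_apply, map_smul, evalAt_eq_zero_of_orbitLp_eq_zero (hg i j), smul_zero]
  simp only [inner_orbitLp, hinv]
  rw [integral_const_mul, ← orbitExpectation_apply, hf, mul_zero]

/-- Poincaré inequality on the orbit of `D` under unitary conjugation. -/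
theorem integral_norm_sub_orbitExpectation_sq_le [Nonempty ι] (D : Matrix ι ι ℂ)
    (f : EntryPoly ι) :
    ∫ V, ‖evalAt (unitaryConj D V) f - orbitExpectation D f‖ ^ 2 ∂haarUnitary ι ≤
      2 / (Fintype.card ι : ℝ) * ∑ i, ∑ j,
        ∫ V, ‖evalAt (unitaryConj D V) (adDerivation (single i j 1) f)‖ ^ 2 ∂haarUnitary ι := by
  set f₀ := f - MvPolynomial.C (orbitExpectation D f) with hf₀
  have hmean : orbitExpectation D f₀ = 0 := by
    rw [map_sub, orbitExpectation_C, sub_self]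
  have heval : ∀ V, evalAt (unitaryConj D V) f₀ =
      evalAt (unitaryConj D V) f - orbitExpectation D f := fun V => by
    simp [hf₀, evalAt]
  have hderiv : ∀ A, adDerivation A f₀ = adDerivation A f := fun A => by simp [hf₀]
  obtain ⟨P, hfg, hfP, hP⟩ := exists_fg_adDerivation_stable f₀
  have : FiniteDimensional ℂ P := Module.Finite.iff_fg.mpr hfg
  have hgap := (matrixUnitAction_orbitLp D hP).norm_sq_le_dirichletEnergy (f := ⟨f₀, hfP⟩)
    fun g hg => inner_orbitLp_eq_zero_of_adDerivation_eq_zero hg hmean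
  simpa only [dirichletEnergy, LinearMap.comp_apply, Submodule.subtype_apply, adDerivationOn,
    LinearMap.restrict_apply, Derivation.coeFn_coe, hderiv, norm_sq_orbitLp, heval] using hgap

end Poincare

/-! ### Partial transposition and mixed traces -/

section PartialTranspose

variable {α β R : Type*}

/-- Matrices with entries in `R` made of blocks indexed by `α`, the entries of each block being
indexed by `β`. -/
abbrev BlockMatrix (α β R : Type*) := Matrix (α × β) (α × β) R

/-- Partial transposition: the blocks are transposed as entries, but are not transposed
themselves. -/
def partialTranspose (X : BlockMatrix α β R) : BlockMatrix α β R :=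
  .of fun p q => X (q.1, p.2) (p.1, q.2)

lemma partialTranspose_apply (X : BlockMatrix α β R) (p q : α × β) :
    partialTranspose X p q = X (q.1, p.2) (p.1, q.2) := rfl

lemma partialTranspose_map {S : Type*} (f : R → S) (X : BlockMatrix α β R) :
    (partialTranspose X).map f = partialTranspose (X.map f) := rfl

variable [DecidableEq α] [DecidableEq β]

/-- The matrix unit `E a b ⊗ 1`. -/
def blockUnit [Zero R] [One R] [Mul R] (a b : α) : BlockMatrix α β R :=
  Matrix.single a b 1 ⊗ₖ 1

variable [CommRing R]

lemma blockUnit_apply (a b : α) (p q : α × β) :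
    (blockUnit a b : BlockMatrix α β R) p q = if p.1 = a ∧ q = (b, p.2) then 1 else 0 := by
  simp only [blockUnit, kroneckerMap_apply, single_apply, one_apply, Prod.ext_iff]
  grind

variable [Fintype α] [Fintype β]

lemma blockUnit_mul_apply (a b : α) (X : BlockMatrix α β R) (p q : α × β) :
    (blockUnit a b * X : BlockMatrix α β R) p q = if p.1 = a then X (b, p.2) q else 0 := by
  simp only [Matrix.mul_apply, blockUnit_apply, ite_and]
  split_ifs with h <;> simp

lemma mul_blockUnit_apply (a b : α) (X : BlockMatrix α β R) (p q : α × β) :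
    (X * blockUnit a b : BlockMatrix α β R) p q = if q.1 = b then X p (a, q.2) else 0 := by
  rw [Matrix.mul_apply, Finset.sum_eq_single (a, q.2)]
  · simp [blockUnit_apply, Prod.ext_iff]
  · intro r _ hr
    rw [blockUnit_apply, if_neg, mul_zero]
    rintro ⟨h₁, h₂⟩
    exact hr (Prod.ext h₁ (congrArg Prod.snd h₂).symm)
  · simp

lemma blockUnit_mul_blockUnit (a b c e : α) :
    (blockUnit a b * blockUnit c e : BlockMatrix α β R) = if b = c then blockUnit a e else 0 := by
  rw [blockUnit, blockUnit, ← mul_kronecker_mul, one_mul]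
  split_ifs with h
  · simp [h, blockUnit]
  · simp [h]

omit [Fintype β] in
lemma sum_blockUnit_self : ∑ a, (blockUnit a a : BlockMatrix α β R) = 1 := by
  ext p q
  simp only [Matrix.sum_apply, blockUnit_apply, one_apply, Prod.ext_iff]
  simp [ite_and, eq_comm]

lemma partialTranspose_eq_sum (X : BlockMatrix α β R) :
    partialTranspose X = ∑ a, ∑ b, blockUnit a b * X * blockUnit a b := by
  ext p q
  simp only [Matrix.sum_apply, mul_blockUnit_apply, blockUnit_mul_apply, partialTranspose_apply]
  simp

omit [DecidableEq α] [DecidableEq β] in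
lemma trace_partialTranspose_mul (X Z : BlockMatrix α β R) :
    (partialTranspose X * Z).trace = (X * partialTranspose Z).trace := by
  classical
  simp only [partialTranspose_eq_sum, Finset.sum_mul, Finset.mul_sum, trace_sum]
  refine Finset.sum_congr rfl fun a _ => Finset.sum_congr rfl fun b _ => ?_
  rw [mul_assoc, mul_assoc, trace_mul_comm]
  simp only [mul_assoc]

lemma partialTranspose_commutator_blockUnit (a b : α) (X : BlockMatrix α β R) :
    partialTranspose (blockUnit a b * X - X * blockUnit a b) =
      partialTranspose X * blockUnit b a - blockUnit b a * partialTranspose X := by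
  ext p q
  simp only [partialTranspose_apply, Matrix.sub_apply, blockUnit_mul_apply, mul_blockUnit_apply]

lemma constMatrix_blockUnit (a b : α) :
    constMatrix (blockUnit a b : BlockMatrix α β ℂ) = blockUnit a b := by
  ext p q : 2
  simp only [constMatrix, AlgHom.mapMatrix_apply, Matrix.map_apply, blockUnit_apply]
  split_ifs <;> simp

/-- The partial transpose of the generic matrix. -/
def genericPartialTranspose (α β : Type*) : BlockMatrix α β (EntryPoly (α × β)) :=
  partialTranspose (genericMatrix (α × β))

/-- The mixed trace `tr (Φ B Yᵏ B')`, where `Y` is the partial transpose of the generic matrix. -/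
def mixedTrace (Φ : BlockMatrix α β (EntryPoly (α × β))) (B : BlockMatrix α β ℂ) (k : ℕ)
    (B' : BlockMatrix α β ℂ) : EntryPoly (α × β) :=
  (Φ * constMatrix B * genericPartialTranspose α β ^ k * constMatrix B').trace

lemma mixedTrace_add (Φ Ψ : BlockMatrix α β (EntryPoly (α × β))) (B : BlockMatrix α β ℂ) (k : ℕ)
    (B' : BlockMatrix α β ℂ) :
    mixedTrace (Φ + Ψ) B k B' = mixedTrace Φ B k B' + mixedTrace Ψ B k B' := by
  simp only [mixedTrace, add_mul, trace_add]

lemma mixedTrace_smul (c : ℂ) (Φ : BlockMatrix α β (EntryPoly (α × β))) (B : BlockMatrix α β ℂ)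
    (k : ℕ) (B' : BlockMatrix α β ℂ) :
    mixedTrace (c • Φ) B k B' = c • mixedTrace Φ B k B' := by
  simp only [mixedTrace, smul_mul_assoc, trace_smul]

variable {Φ : BlockMatrix α β (EntryPoly (α × β))}

lemma map_adDerivation_mixed (hΦ : Φ ∈ equivariant (α × β)) (A B : BlockMatrix α β ℂ) (k : ℕ)
    (B' : BlockMatrix α β ℂ) :
    (Φ * constMatrix B * genericPartialTranspose α β ^ k * constMatrix B').map (adDerivation A) =
      (constMatrix A * Φ - Φ * constMatrix A) *
        (constMatrix B * genericPartialTranspose α β ^ k * constMatrix B') +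
      ∑ r ∈ Finset.range k, Φ * constMatrix B * genericPartialTranspose α β ^ r *
        partialTranspose (constMatrix A * genericMatrix _ - genericMatrix _ * constMatrix A) *
          (genericPartialTranspose α β ^ (k - 1 - r) * constMatrix B') := by
  rw [map_derivation_mul, map_derivation_mul, map_derivation_mul, map_derivation_constMatrix,
    map_derivation_constMatrix, map_derivation_pow, map_adDerivation_of_mem_equivariant hΦ]
  simp only [genericPartialTranspose, partialTranspose_map, map_adDerivation_genericMatrix,
    mul_zero, add_zero, add_mul, Finset.mul_sum, Finset.sum_mul, mul_assoc]

lemma adDerivation_single_mixedTrace (hΦ : Φ ∈ equivariant (α × β)) (B : BlockMatrix α β ℂ)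
    (k : ℕ) (B' : BlockMatrix α β ℂ) (i j : α × β) :
    adDerivation (single i j 1) (mixedTrace Φ B k B') =
      ((Φ * (constMatrix B * genericPartialTranspose α β ^ k * constMatrix B') -
          constMatrix B * genericPartialTranspose α β ^ k * constMatrix B' * Φ) +
        ∑ r ∈ Finset.range k,
          (genericMatrix _ * partialTranspose (genericPartialTranspose α β ^ (k - 1 - r) *
              constMatrix B' * Φ * constMatrix B * genericPartialTranspose α β ^ r) -
            partialTranspose (genericPartialTranspose α β ^ (k - 1 - r) *
              constMatrix B' * Φ * constMatrix B * genericPartialTranspose α β ^ r) *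
                genericMatrix _) :
        BlockMatrix α β (EntryPoly (α × β))) j i := by
  rw [mixedTrace, ← trace_map_derivation, map_adDerivation_mixed hΦ, constMatrix_single, trace_add,
    trace_sum, trace_commutator_single_mul, Matrix.add_apply, Matrix.sum_apply]
  congr 1
  refine Finset.sum_congr rfl fun r _ => ?_
  rw [← trace_commutator_single_mul, ← trace_partialTranspose_mul, mul_assoc, trace_mul_comm]
  simp only [mul_assoc]

lemma sum_mixed_partialTranspose_commutator_apply (Φ : BlockMatrix α β (EntryPoly (α × β)))
    (B : BlockMatrix α β ℂ) (r l : ℕ) (B' : BlockMatrix α β ℂ) :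
    ∑ i, ∑ j, (Φ * constMatrix B * genericPartialTranspose α β ^ r *
        partialTranspose (single i j 1 * genericMatrix _ - genericMatrix _ * single i j 1) *
          (genericPartialTranspose α β ^ l * constMatrix B') :
          BlockMatrix α β (EntryPoly (α × β))) i j =
      ∑ u, ∑ v,
        (mixedTrace Φ B r (blockUnit u v) * mixedTrace (genericMatrix _) (blockUnit u v) l B' -
          mixedTrace (genericMatrix _ * Φ) B r (blockUnit u v) *
            mixedTrace 1 (blockUnit u v) l B') := by
  simp only [partialTranspose_eq_sum, Finset.mul_sum, Finset.sum_mul, Matrix.sum_apply]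
  rw [Finset.sum_congr rfl fun i _ => Finset.sum_comm, Finset.sum_comm]
  refine Finset.sum_congr rfl fun u _ => ?_
  rw [Finset.sum_congr rfl fun i _ => Finset.sum_comm, Finset.sum_comm]
  refine Finset.sum_congr rfl fun v _ => ?_
  have hsum := sum_mul_commutator_single_mul
    (Φ * constMatrix B * genericPartialTranspose α β ^ r * blockUnit u v) (genericMatrix _)
    (blockUnit u v * (genericPartialTranspose α β ^ l * constMatrix B'))
  rw [trace_mul_comm _ (genericMatrix _)] at hsum
  simpa only [mixedTrace, constMatrix_blockUnit, one_mul, mul_assoc] using hsum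

lemma sum_adDerivation_single_mixed_apply (hΦ : Φ ∈ equivariant (α × β)) (B : BlockMatrix α β ℂ)
    (k : ℕ) (B' : BlockMatrix α β ℂ) :
    ∑ i, ∑ j, adDerivation (single i j 1)
        ((Φ * constMatrix B * genericPartialTranspose α β ^ k * constMatrix B') i j) =
      (Fintype.card (α × β) : EntryPoly (α × β)) * mixedTrace Φ B k B' -
        Φ.trace * (constMatrix B * genericPartialTranspose α β ^ k * constMatrix B').trace +
      ∑ r ∈ Finset.range k, ∑ u, ∑ v,
        (mixedTrace Φ B r (blockUnit u v) *
            mixedTrace (genericMatrix _) (blockUnit u v) (k - 1 - r) B' -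
          mixedTrace (genericMatrix _ * Φ) B r (blockUnit u v) *
            mixedTrace 1 (blockUnit u v) (k - 1 - r) B') := by
  have hfirst := sum_mul_commutator_single_mul 1 Φ
    (constMatrix B * genericPartialTranspose α β ^ k * constMatrix B')
  simp only [one_mul, trace_one] at hfirst
  simp only [← Matrix.map_apply (f := adDerivation _), map_adDerivation_mixed hΦ,
    constMatrix_single, Matrix.add_apply, Finset.sum_add_distrib, hfirst, Matrix.sum_apply]
  refine congrArg₂ (· + ·) ?_ ?_
  · simp only [mixedTrace, mul_assoc]
  · rw [Finset.sum_congr rfl fun i _ => Finset.sum_comm, Finset.sum_comm]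
    refine Finset.sum_congr rfl fun r _ => ?_
    rw [sum_mixed_partialTranspose_commutator_apply]

end PartialTranspose

/-! ### Hilbert–Schmidt estimates -/

section HilbertSchmidt

open scoped Matrix.Norms.L2Operator

variable {ι : Type*} [Fintype ι]

/-- The squared Hilbert–Schmidt (Frobenius) norm. It is not taken from Mathlib's Frobenius norm
instance because the norm on matrices used throughout is the `ℓ²` operator norm. -/
def frobeniusSq (X : Matrix ι ι ℂ) : ℝ := ∑ i, ∑ j, ‖X i j‖ ^ 2

lemma frobeniusSq_nonneg (X : Matrix ι ι ℂ) : 0 ≤ frobeniusSq X :=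
  Finset.sum_nonneg fun _ _ => Finset.sum_nonneg fun _ _ => sq_nonneg _

lemma frobeniusSq_neg (X : Matrix ι ι ℂ) : frobeniusSq (-X) = frobeniusSq X := by
  simp [frobeniusSq]

lemma frobeniusSq_add_le (X Y : Matrix ι ι ℂ) :
    frobeniusSq (X + Y) ≤ 2 * frobeniusSq X + 2 * frobeniusSq Y := by
  simp only [frobeniusSq, Finset.mul_sum, ← Finset.sum_add_distrib]
  refine Finset.sum_le_sum fun i _ => Finset.sum_le_sum fun j _ => ?_
  have htri : ‖(X + Y) i j‖ ^ 2 ≤ (‖X i j‖ + ‖Y i j‖) ^ 2 := by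
    rw [Matrix.add_apply]
    gcongr
    exact norm_add_le _ _
  nlinarith [sq_nonneg (‖X i j‖ - ‖Y i j‖)]

lemma frobeniusSq_sub_le (X Y : Matrix ι ι ℂ) :
    frobeniusSq (X - Y) ≤ 2 * frobeniusSq X + 2 * frobeniusSq Y := by
  simpa only [frobeniusSq_neg, ← sub_eq_add_neg] using frobeniusSq_add_le X (-Y)

lemma frobeniusSq_sum_le {κ : Type*} (s : Finset κ) (X : κ → Matrix ι ι ℂ) :
    frobeniusSq (∑ r ∈ s, X r) ≤ s.card * ∑ r ∈ s, frobeniusSq (X r) := by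
  have hentry (i j : ι) : ‖(∑ r ∈ s, X r) i j‖ ^ 2 ≤ s.card * ∑ r ∈ s, ‖X r i j‖ ^ 2 := by
    rw [Matrix.sum_apply]
    refine le_trans ?_ sq_sum_le_card_mul_sum_sq
    gcongr
    exact norm_sum_le _ _
  calc frobeniusSq (∑ r ∈ s, X r) ≤ ∑ i, ∑ j, s.card * ∑ r ∈ s, ‖X r i j‖ ^ 2 :=
        Finset.sum_le_sum fun i _ => Finset.sum_le_sum fun j _ => hentry i j
    _ = s.card * ∑ r ∈ s, frobeniusSq (X r) := by
        simp only [← Finset.mul_sum, frobeniusSq]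
        congr 1
        exact (Finset.sum_congr rfl fun i _ => Finset.sum_comm).trans Finset.sum_comm

lemma frobeniusSq_conjTranspose (X : Matrix ι ι ℂ) : frobeniusSq Xᴴ = frobeniusSq X := by
  simp only [frobeniusSq, conjTranspose_apply, norm_star]
  exact Finset.sum_comm

lemma frobeniusSq_eq_trace (X : Matrix ι ι ℂ) : (frobeniusSq X : ℂ) = (X * Xᴴ).trace := by
  simp only [frobeniusSq, Matrix.trace, diag_apply, Matrix.mul_apply, conjTranspose_apply,
    Complex.ofReal_sum]
  refine Finset.sum_congr rfl fun i _ => Finset.sum_congr rfl fun j _ => ?_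
  rw [← starRingEnd_apply, Complex.mul_conj, Complex.normSq_eq_norm_sq]

lemma frobeniusSq_one [DecidableEq ι] :
    frobeniusSq (1 : Matrix ι ι ℂ) = Fintype.card ι := by
  rw [← Complex.ofReal_inj, frobeniusSq_eq_trace]
  simp

lemma norm_trace_mul_sq_le (X Y : Matrix ι ι ℂ) :
    ‖(X * Y).trace‖ ^ 2 ≤ frobeniusSq X * frobeniusSq Y := by
  have htri : ‖(X * Y).trace‖ ≤ ∑ s : ι × ι, ‖X s.1 s.2‖ * ‖Y s.2 s.1‖ := by
    simp only [Matrix.trace, diag_apply, Matrix.mul_apply, Fintype.sum_prod_type]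
    refine (norm_sum_le _ _).trans (Finset.sum_le_sum fun i _ => (norm_sum_le _ _).trans ?_)
    exact Finset.sum_le_sum fun j _ => (norm_mul _ _).le
  calc ‖(X * Y).trace‖ ^ 2 ≤ (∑ s : ι × ι, ‖X s.1 s.2‖ * ‖Y s.2 s.1‖) ^ 2 := by gcongr
    _ ≤ (∑ s : ι × ι, ‖X s.1 s.2‖ ^ 2) * ∑ s : ι × ι, ‖Y s.2 s.1‖ ^ 2 :=
        Finset.sum_mul_sq_le_sq_mul_sq _ _ _
    _ = frobeniusSq X * frobeniusSq Y := by
        simp only [Fintype.sum_prod_type, frobeniusSq]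
        rw [Finset.sum_comm (f := fun i j => ‖Y j i‖ ^ 2)]

@[fun_prop]
lemma continuous_frobeniusSq : Continuous (frobeniusSq : Matrix ι ι ℂ → ℝ) := by
  unfold frobeniusSq
  fun_prop

lemma frobeniusSq_partialTranspose {α β : Type*} [Fintype α] [Fintype β]
    (X : BlockMatrix α β ℂ) : frobeniusSq (partialTranspose X) = frobeniusSq X := by
  simp only [frobeniusSq, partialTranspose_apply, Fintype.sum_prod_type]
  rw [Finset.sum_congr rfl fun a _ => Finset.sum_comm, Finset.sum_comm]
  exact Finset.sum_congr rfl fun a _ => Finset.sum_comm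

variable [DecidableEq ι]

lemma frobeniusSq_mul_le_left (A X : Matrix ι ι ℂ) :
    frobeniusSq (A * X) ≤ ‖A‖ ^ 2 * frobeniusSq X := by
  have hcol (j : ι) : ∑ i, ‖(A * X) i j‖ ^ 2 ≤ ‖A‖ ^ 2 * ∑ i, ‖X i j‖ ^ 2 := by
    have h := pow_le_pow_left₀ (norm_nonneg _)
      (Matrix.l2_opNorm_mulVec A (WithLp.toLp 2 fun i => X i j)) 2
    rwa [mul_pow, EuclideanSpace.norm_sq_eq, EuclideanSpace.norm_sq_eq] at h
  rw [frobeniusSq, frobeniusSq, Finset.sum_comm, Finset.sum_comm (f := fun i j => ‖X i j‖ ^ 2),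
    Finset.mul_sum]
  exact Finset.sum_le_sum fun j _ => hcol j

lemma frobeniusSq_mul_le_right (X A : Matrix ι ι ℂ) :
    frobeniusSq (X * A) ≤ ‖A‖ ^ 2 * frobeniusSq X := by
  rw [← frobeniusSq_conjTranspose, conjTranspose_mul, ← frobeniusSq_conjTranspose X,
    ← Matrix.l2_opNorm_conjTranspose A]
  exact frobeniusSq_mul_le_left _ _

lemma frobeniusSq_mul_unitary (X : Matrix ι ι ℂ) (U : unitaryGroup ι ℂ) :
    frobeniusSq (X * (U : Matrix ι ι ℂ)) = frobeniusSq X := by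
  have h : (frobeniusSq (X * (U : Matrix ι ι ℂ)) : ℂ) = frobeniusSq X := by
    rw [frobeniusSq_eq_trace, frobeniusSq_eq_trace, conjTranspose_mul, mul_assoc,
      ← mul_assoc (U : Matrix ι ι ℂ), ← star_eq_conjTranspose (U : Matrix ι ι ℂ),
      Unitary.mul_star_self_of_mem U.2, one_mul]
  exact_mod_cast h

lemma frobeniusSq_unitary_mul (U : unitaryGroup ι ℂ) (X : Matrix ι ι ℂ) :
    frobeniusSq ((U : Matrix ι ι ℂ) * X) = frobeniusSq X := by
  rw [← frobeniusSq_conjTranspose, conjTranspose_mul, ← star_eq_conjTranspose (U : Matrix ι ι ℂ),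
    ← Unitary.coe_star, frobeniusSq_mul_unitary, frobeniusSq_conjTranspose]

section Hermitian

variable {Y : Matrix ι ι ℂ} (hY : Y.IsHermitian)
include hY

lemma frobeniusSq_pow_eq_trace (k : ℕ) : (frobeniusSq (Y ^ k) : ℂ) = (Y ^ (2 * k)).trace := by
  rw [frobeniusSq_eq_trace, conjTranspose_pow, hY.eq, ← pow_add, two_mul]

lemma pow_eq_eigenvectorUnitary_mul_diagonal_mul (k : ℕ) :
    Y ^ k = (hY.eigenvectorUnitary : Matrix ι ι ℂ) *
      diagonal (fun i => (hY.eigenvalues i : ℂ) ^ k) *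
        (star hY.eigenvectorUnitary : unitaryGroup ι ℂ) := by
  conv_lhs => rw [hY.spectral_theorem, ← map_pow, diagonal_pow]
  rw [Unitary.conjStarAlgAut_apply]
  rfl

lemma frobeniusSq_pow_eq_sum (k : ℕ) :
    frobeniusSq (Y ^ k) = ∑ i, hY.eigenvalues i ^ (2 * k) := by
  rw [pow_eq_eigenvectorUnitary_mul_diagonal_mul hY, frobeniusSq_mul_unitary,
    frobeniusSq_unitary_mul, frobeniusSq]
  refine Finset.sum_congr rfl fun i _ => ?_
  rw [Finset.sum_eq_single i (fun j _ hj => by simp [diagonal_apply_ne' _ hj]) (by simp),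
    diagonal_apply_eq, norm_pow, Complex.norm_real, Real.norm_eq_abs, ← pow_mul, mul_comm k,
    pow_mul, sq_abs, ← pow_mul]

lemma frobeniusSq_pow_mul_mul_pow_eq_sum (G : Matrix ι ι ℂ) (a b : ℕ) :
    frobeniusSq (Y ^ a * G * Y ^ b) =
      ∑ i, ∑ j, (hY.eigenvalues i ^ 2) ^ a * (hY.eigenvalues j ^ 2) ^ b *
        ‖((star hY.eigenvectorUnitary : unitaryGroup ι ℂ) * G *
          (hY.eigenvectorUnitary : Matrix ι ι ℂ) : Matrix ι ι ℂ) i j‖ ^ 2 := by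
  set U := hY.eigenvectorUnitary
  set D : ℕ → Matrix ι ι ℂ := fun k => diagonal fun i => (hY.eigenvalues i : ℂ) ^ k
  have hconj : Y ^ a * G * Y ^ b =
      (U : Matrix ι ι ℂ) * (D a * ((star U : unitaryGroup ι ℂ) * G * (U : Matrix ι ι ℂ)) * D b) *
        (star U : unitaryGroup ι ℂ) := by
    rw [pow_eq_eigenvectorUnitary_mul_diagonal_mul hY a,
      pow_eq_eigenvectorUnitary_mul_diagonal_mul hY b]
    simp only [U, D, mul_assoc]
  rw [hconj, frobeniusSq_mul_unitary, frobeniusSq_unitary_mul, frobeniusSq]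
  refine Finset.sum_congr rfl fun i _ => Finset.sum_congr rfl fun j _ => ?_
  rw [mul_diagonal, diagonal_mul, norm_mul, norm_mul, norm_pow, norm_pow,
    Complex.norm_real, Complex.norm_real, mul_pow, mul_pow, ← pow_mul, ← pow_mul, mul_comm a,
    mul_comm b, pow_mul, pow_mul, Real.norm_eq_abs, Real.norm_eq_abs, sq_abs, sq_abs]
  ring

lemma frobeniusSq_pow_mul_mul_pow_le (G : Matrix ι ι ℂ) (a b : ℕ) :
    frobeniusSq (Y ^ a * G * Y ^ b) ≤ 2 * ‖G‖ ^ 2 * frobeniusSq (Y ^ (a + b)) := by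
  have hxy {x y : ℝ} (hx : 0 ≤ x) (hy : 0 ≤ y) :
      x ^ a * y ^ b ≤ x ^ (a + b) * y ^ 0 + x ^ 0 * y ^ (a + b) := by
    rw [pow_zero, pow_zero, mul_one, one_mul]
    rcases le_total x y with h | h
    · have : x ^ a * y ^ b ≤ y ^ (a + b) := by rw [pow_add]; gcongr
      linarith [pow_nonneg hx (a + b)]
    · have : x ^ a * y ^ b ≤ x ^ (a + b) := by rw [pow_add]; gcongr
      linarith [pow_nonneg hy (a + b)]
  calc frobeniusSq (Y ^ a * G * Y ^ b)
      ≤ frobeniusSq (Y ^ (a + b) * G * Y ^ 0) + frobeniusSq (Y ^ 0 * G * Y ^ (a + b)) := by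
        simp only [frobeniusSq_pow_mul_mul_pow_eq_sum hY, ← Finset.sum_add_distrib, ← add_mul]
        gcongr with i _ j _
        exact hxy (sq_nonneg _) (sq_nonneg _)
    _ ≤ ‖G‖ ^ 2 * frobeniusSq (Y ^ (a + b)) + ‖G‖ ^ 2 * frobeniusSq (Y ^ (a + b)) := by
        rw [pow_zero, mul_one, one_mul]
        exact add_le_add (frobeniusSq_mul_le_right _ _) (frobeniusSq_mul_le_left _ _)
    _ = _ := by ring

lemma frobeniusSq_pow_le {ρ : ℝ} (hρ : 0 < ρ) {k p : ℕ} (hk : k ≤ p) :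
    frobeniusSq (Y ^ k) ≤
      ρ ^ (2 * k) * (Fintype.card ι + frobeniusSq (Y ^ p) / ρ ^ (2 * p)) := by
  rw [frobeniusSq_pow_eq_sum hY, frobeniusSq_pow_eq_sum hY, Finset.sum_div, ← Finset.card_univ,
    Finset.cast_card, ← Finset.sum_add_distrib, Finset.mul_sum]
  refine Finset.sum_le_sum fun i _ => ?_
  set l := hY.eigenvalues i
  have hlow : l ^ (2 * k) = ρ ^ (2 * k) * ((l / ρ) ^ 2) ^ k := by
    rw [← pow_mul, div_pow]
    field_simp
  have hhigh : l ^ (2 * p) / ρ ^ (2 * p) = ((l / ρ) ^ 2) ^ p := by rw [← pow_mul, div_pow]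
  rw [hlow, hhigh]
  gcongr
  rcases le_total ((l / ρ) ^ 2) 1 with h | h
  · linarith [pow_le_one₀ (n := k) (sq_nonneg _) h, pow_nonneg (sq_nonneg (l / ρ)) p]
  · linarith [pow_le_pow_right₀ h hk]

end Hermitian

end HilbertSchmidt

/-! ### Centred powers -/

section CentredPowers

open scoped Matrix.Norms.L2Operator

variable {ι : Type*} [Fintype ι] [DecidableEq ι]

lemma isHermitian_unitaryConj {D : Matrix ι ι ℂ} (hD : D.IsHermitian) (V : unitaryGroup ι ℂ) :
    (unitaryConj D V).IsHermitian := by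
  rw [unitaryConj, star_eq_conjTranspose]
  exact isHermitian_mul_mul_conjTranspose _ hD

lemma trace_unitaryConj (D : Matrix ι ι ℂ) (V : unitaryGroup ι ℂ) :
    (unitaryConj D V).trace = D.trace := by
  rw [unitaryConj, trace_mul_comm, ← mul_assoc, Unitary.star_mul_self_of_mem V.2, one_mul]

lemma norm_unitaryConj (D : Matrix ι ι ℂ) (V : unitaryGroup ι ℂ) : ‖unitaryConj D V‖ = ‖D‖ := by
  rw [unitaryConj, ← Unitary.coe_star, CStarRing.norm_mul_coe_unitary,
    CStarRing.norm_coe_unitary_mul]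

lemma frobeniusSq_unitaryConj (D : Matrix ι ι ℂ) (V : unitaryGroup ι ℂ) :
    frobeniusSq (unitaryConj D V) = frobeniusSq D := by
  rw [unitaryConj, ← Unitary.coe_star, frobeniusSq_mul_unitary, frobeniusSq_unitary_mul]

lemma unitaryConj_mul_unitaryConj (D D' : Matrix ι ι ℂ) (V : unitaryGroup ι ℂ) :
    unitaryConj D V * unitaryConj D' V = unitaryConj (D * D') V := by
  simp only [unitaryConj, mul_assoc]
  rw [← mul_assoc (star (V : Matrix ι ι ℂ)) V, Unitary.star_mul_self_of_mem V.2, one_mul]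

lemma unitaryConj_sub (D D' : Matrix ι ι ℂ) (V : unitaryGroup ι ℂ) :
    unitaryConj (D - D') V = unitaryConj D V - unitaryConj D' V := by
  simp only [unitaryConj, mul_sub, sub_mul]

lemma unitaryConj_smul_one (c : ℂ) (V : unitaryGroup ι ℂ) :
    unitaryConj (c • 1 : Matrix ι ι ℂ) V = c • 1 := by
  simp [unitaryConj, Unitary.mul_star_self_of_mem V.2]

/-- The component of a matrix orthogonal to the identity. -/
def tracelessPart (M : Matrix ι ι ℂ) : Matrix ι ι ℂ :=
  M - (M.trace / (Fintype.card ι : ℂ)) • (1 : Matrix ι ι ℂ)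

lemma tracelessPart_unitaryConj (M : Matrix ι ι ℂ) (V : unitaryGroup ι ℂ) :
    tracelessPart (unitaryConj M V) = unitaryConj (tracelessPart M) V := by
  rw [tracelessPart, trace_unitaryConj, tracelessPart, unitaryConj_sub, unitaryConj_smul_one]

lemma isHermitian_tracelessPart {M : Matrix ι ι ℂ} (hM : M.IsHermitian) :
    (tracelessPart M).IsHermitian := by
  have htr : star M.trace = M.trace := by rw [← trace_conjTranspose, hM.eq]
  rw [IsHermitian, tracelessPart, conjTranspose_sub, hM.eq, conjTranspose_smul, conjTranspose_one,
    star_div₀, htr, star_natCast]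

lemma trace_tracelessPart [Nonempty ι] (M : Matrix ι ι ℂ) : (tracelessPart M).trace = 0 := by
  rw [tracelessPart, trace_sub, trace_smul, trace_one, smul_eq_mul,
    div_mul_cancel₀ _ (Nat.cast_ne_zero.mpr Fintype.card_ne_zero), sub_self]

lemma frobeniusSq_tracelessPart [Nonempty ι] (M : Matrix ι ι ℂ) :
    frobeniusSq (tracelessPart M) =
      frobeniusSq M - Fintype.card ι * ‖M.trace / (Fintype.card ι : ℂ)‖ ^ 2 := by
  set c := M.trace / (Fintype.card ι : ℂ) with hc
  have htr : M.trace = c * Fintype.card ι := by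
    rw [hc, div_mul_cancel₀ _ (Nat.cast_ne_zero.mpr Fintype.card_ne_zero)]
  have hnorm : (‖c‖ : ℂ) ^ 2 = c * star c := by
    rw [← starRingEnd_apply, Complex.mul_conj, Complex.normSq_eq_norm_sq]
    norm_cast
  rw [← Complex.ofReal_inj]
  push_cast
  rw [tracelessPart, ← hc, frobeniusSq_eq_trace, frobeniusSq_eq_trace, conjTranspose_sub,
    conjTranspose_smul, conjTranspose_one]
  simp only [sub_mul, mul_sub, trace_sub, trace_smul, smul_mul_assoc, mul_smul_comm, one_mul,
    mul_one, trace_conjTranspose, trace_one, htr, smul_eq_mul, hnorm, star_mul', star_natCast]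
  ring

lemma frobeniusSq_tracelessPart_le [Nonempty ι] (M : Matrix ι ι ℂ) :
    frobeniusSq (tracelessPart M) ≤ frobeniusSq M := by
  rw [frobeniusSq_tracelessPart]
  exact sub_le_self _ (by positivity)

/-- The centred powers on the unitary orbit of a traceless matrix `D`: starting from the generic
matrix (so that the degree is `j + 1`), each one is the generic matrix times the previous one,
minus the scalar that makes its trace vanish on the orbit of `D`. -/
def centredPower (D : Matrix ι ι ℂ) : ℕ → Matrix ι ι (EntryPoly ι)
  | 0 => genericMatrix ι
  | j + 1 => genericMatrix ι * centredPower D j -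
      ((D * evalMatrix D (centredPower D j)).trace / (Fintype.card ι : ℂ)) •
        (1 : Matrix ι ι (EntryPoly ι))

/-- The scalars subtracted in the recursive definition of `centredPower`. -/
def centringConst (D : Matrix ι ι ℂ) (j : ℕ) : ℂ :=
  (D * evalMatrix D (centredPower D j)).trace / (Fintype.card ι : ℂ)

lemma centredPower_succ (D : Matrix ι ι ℂ) (j : ℕ) :
    centredPower D (j + 1) =
      genericMatrix ι * centredPower D j -
        centringConst D j • (1 : Matrix ι ι (EntryPoly ι)) := rfl

lemma centredPower_mem_equivariant (D : Matrix ι ι ℂ) (j : ℕ) :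
    centredPower D j ∈ equivariant ι := by
  induction j with
  | zero => exact genericMatrix_mem_equivariant
  | succ j ih =>
    exact sub_mem (mul_mem genericMatrix_mem_equivariant ih)
      (Subalgebra.smul_mem _ (one_mem _) _)

lemma evalMatrix_centredPower_succ (D : Matrix ι ι ℂ) (j : ℕ) :
    evalMatrix D (centredPower D (j + 1)) =
      D * evalMatrix D (centredPower D j) - centringConst D j • (1 : Matrix ι ι ℂ) := by
  rw [centredPower_succ, map_sub, map_mul, evalMatrix_genericMatrix, map_smul, map_one]

lemma evalMatrix_unitaryConj_centredPower (D : Matrix ι ι ℂ) (j : ℕ) (V : unitaryGroup ι ℂ) :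
    evalMatrix (unitaryConj D V) (centredPower D j) =
      unitaryConj (evalMatrix D (centredPower D j)) V := by
  induction j with
  | zero => simp only [centredPower, evalMatrix_genericMatrix]
  | succ j ih =>
    rw [evalMatrix_centredPower_succ, centredPower_succ, map_sub, map_mul,
      evalMatrix_genericMatrix, map_smul, map_one, ih, unitaryConj_mul_unitaryConj,
      unitaryConj_sub, unitaryConj_smul_one]

variable [Nonempty ι] {D : Matrix ι ι ℂ}

lemma trace_evalMatrix_centredPower (htr : D.trace = 0) (j : ℕ) :
    (evalMatrix D (centredPower D j)).trace = 0 := by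
  cases j with
  | zero => simpa only [centredPower, evalMatrix_genericMatrix]
  | succ j =>
    rw [evalMatrix_centredPower_succ]
    exact trace_tracelessPart _

variable {L : ℝ} (hL : ‖D‖ ≤ L)
include hL

lemma frobeniusSq_centredPower_le (j : ℕ) :
    frobeniusSq (evalMatrix D (centredPower D j)) ≤ (L ^ j) ^ 2 * frobeniusSq D := by
  induction j with
  | zero => simp [centredPower, evalMatrix_genericMatrix]
  | succ j ih =>
    rw [evalMatrix_centredPower_succ, centringConst]
    calc _ ≤ frobeniusSq (D * evalMatrix D (centredPower D j)) :=
          frobeniusSq_tracelessPart_le _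
      _ ≤ ‖D‖ ^ 2 * frobeniusSq (evalMatrix D (centredPower D j)) := frobeniusSq_mul_le_left _ _
      _ ≤ L ^ 2 * ((L ^ j) ^ 2 * frobeniusSq D) := by
          gcongr
          exact frobeniusSq_nonneg _
      _ = _ := by ring

lemma norm_centringConst_le {σ : ℝ} (hσ : frobeniusSq D ≤ Fintype.card ι * σ ^ 2) (j : ℕ) :
    ‖centringConst D j‖ ≤ σ ^ 2 * L ^ j := by
  have hL₀ : 0 ≤ L := (norm_nonneg _).trans hL
  have htr : ‖(D * evalMatrix D (centredPower D j)).trace‖ ≤ L ^ j * frobeniusSq D := by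
    refine abs_le_of_sq_le_sq' ?_ (mul_nonneg (by positivity) (frobeniusSq_nonneg _)) |>.2
    calc _ ≤ frobeniusSq D * frobeniusSq (evalMatrix D (centredPower D j)) :=
          norm_trace_mul_sq_le _ _
      _ ≤ frobeniusSq D * ((L ^ j) ^ 2 * frobeniusSq D) := by
          gcongr
          · exact frobeniusSq_nonneg _
          · exact frobeniusSq_centredPower_le hL j
      _ = _ := by ring
  rw [centringConst, norm_div, Complex.norm_natCast,
    div_le_iff₀ (Nat.cast_pos.mpr Fintype.card_pos)]
  calc _ ≤ L ^ j * frobeniusSq D := htr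
    _ ≤ L ^ j * (Fintype.card ι * σ ^ 2) := by gcongr
    _ = _ := by ring

omit [Nonempty ι] in
lemma frobeniusSq_le_card_mul_sq : frobeniusSq D ≤ Fintype.card ι * L ^ 2 := by
  calc frobeniusSq D = frobeniusSq (D * 1) := by rw [mul_one]
    _ ≤ ‖D‖ ^ 2 * frobeniusSq (1 : Matrix ι ι ℂ) := frobeniusSq_mul_le_left _ _
    _ ≤ L ^ 2 * Fintype.card ι := by
        rw [frobeniusSq_one]
        gcongr
    _ = Fintype.card ι * L ^ 2 := mul_comm _ _

lemma norm_centredPower_le (j : ℕ) :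
    ‖evalMatrix D (centredPower D j)‖ ≤ (j + 1) * L ^ (j + 1) := by
  induction j with
  | zero => simpa [centredPower, evalMatrix_genericMatrix] using hL
  | succ j ih =>
    have hL₀ : 0 ≤ L := (norm_nonneg _).trans hL
    rw [evalMatrix_centredPower_succ]
    calc _ ≤ ‖D * evalMatrix D (centredPower D j)‖ + ‖centringConst D j • (1 : Matrix ι ι ℂ)‖ :=
          norm_sub_le _ _
      _ ≤ ‖D‖ * ‖evalMatrix D (centredPower D j)‖ + ‖centringConst D j‖ := by
          rw [norm_smul, CStarRing.norm_one, mul_one]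
          gcongr
          exact norm_mul_le _ _
      _ ≤ L * ((j + 1) * L ^ (j + 1)) + L ^ 2 * L ^ j := by
          gcongr
          exact norm_centringConst_le hL (frobeniusSq_le_card_mul_sq hL) j
      _ = _ := by
          push_cast
          ring

end CentredPowers

/-! ### Concentration of mixed traces -/

section Concentration

open scoped Matrix.Norms.L2Operator

variable {α β : Type*}

@[fun_prop]
lemma continuous_partialTranspose :
    Continuous (partialTranspose : BlockMatrix α β ℂ → BlockMatrix α β ℂ) := by
  unfold partialTranspose
  fun_prop

lemma isHermitian_partialTranspose {X : BlockMatrix α β ℂ} (hX : X.IsHermitian) :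
    (partialTranspose X).IsHermitian := by
  ext p q
  exact congrFun (congrFun hX (q.1, p.2)) (p.1, q.2)

variable [Fintype α] [Fintype β]

lemma frobeniusSq_commutator_le {ι : Type*} [Fintype ι] [DecidableEq ι] {A : Matrix ι ι ℂ} {a : ℝ}
    (hA : ‖A‖ ≤ a) (Z : Matrix ι ι ℂ) :
    frobeniusSq (A * Z - Z * A) ≤ 4 * a ^ 2 * frobeniusSq Z :=
  calc frobeniusSq (A * Z - Z * A) ≤ 2 * frobeniusSq (A * Z) + 2 * frobeniusSq (Z * A) :=
        frobeniusSq_sub_le _ _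
    _ ≤ 2 * (‖A‖ ^ 2 * frobeniusSq Z) + 2 * (‖A‖ ^ 2 * frobeniusSq Z) := by
        gcongr
        exacts [frobeniusSq_mul_le_left _ _, frobeniusSq_mul_le_right _ _]
    _ ≤ 2 * (a ^ 2 * frobeniusSq Z) + 2 * (a ^ 2 * frobeniusSq Z) := by
        gcongr <;> exact frobeniusSq_nonneg _
    _ = 4 * a ^ 2 * frobeniusSq Z := by ring

lemma frobeniusSq_mul_mul_le {ι : Type*} [Fintype ι] [DecidableEq ι] {B B' : Matrix ι ι ℂ}
    (hB : ‖B‖ ≤ 1) (hB' : ‖B'‖ ≤ 1) (Z : Matrix ι ι ℂ) :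
    frobeniusSq (B * Z * B') ≤ frobeniusSq Z :=
  calc frobeniusSq (B * Z * B') ≤ ‖B'‖ ^ 2 * (‖B‖ ^ 2 * frobeniusSq Z) :=
        (frobeniusSq_mul_le_right _ _).trans (by gcongr; exact frobeniusSq_mul_le_left _ _)
    _ ≤ 1 ^ 2 * (1 ^ 2 * frobeniusSq Z) := by
        have := frobeniusSq_nonneg Z
        gcongr
    _ = frobeniusSq Z := by ring

lemma norm_integral_mul_le {ι : Type*} [Fintype ι] [DecidableEq ι] {F G : unitaryGroup ι ℂ → ℂ}
    (hF : Continuous F) (hG : Continuous G) :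
    ‖∫ V, F V * G V ∂haarUnitary ι‖ ≤
      √(∫ V, ‖F V‖ ^ 2 ∂haarUnitary ι) * √(∫ V, ‖G V‖ ^ 2 ∂haarUnitary ι) := by
  have hmem {f : unitaryGroup ι ℂ → ℂ} (hf : Continuous f) :
      MemLp f (ENNReal.ofReal 2) (haarUnitary ι) :=
    hf.memLp_of_hasCompactSupport (HasCompactSupport.of_compactSpace _)
  refine (norm_integral_le_integral_norm _).trans ?_
  simp only [norm_mul]
  simpa only [Real.rpow_two, Real.sqrt_eq_rpow] using integral_mul_norm_le_Lp_mul_Lq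
    (μ := haarUnitary ι) Real.HolderConjugate.two_two (hmem hF) (hmem hG)

variable [DecidableEq α] [DecidableEq β]

lemma norm_blockUnit_le_one (a b : α) : ‖(blockUnit a b : BlockMatrix α β ℂ)‖ ≤ 1 := by
  have hstar (a b : α) : (blockUnit a b : BlockMatrix α β ℂ)ᴴ = blockUnit b a := by
    simp [blockUnit, conjTranspose_kronecker]
  have hproj : IsStarProjection (blockUnit b b : BlockMatrix α β ℂ) :=
    ⟨by rw [IsIdempotentElem, blockUnit_mul_blockUnit, if_pos rfl], hstar b b⟩
  refine abs_le_one_iff_mul_self_le_one.mpr ?_ |> (le_abs_self _).trans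
  rw [← Matrix.l2_opNorm_conjTranspose_mul_self, hstar, blockUnit_mul_blockUnit, if_pos rfl]
  exact hproj.norm_le

lemma evalMatrix_genericPartialTranspose (x : BlockMatrix α β ℂ) :
    evalMatrix x (genericPartialTranspose α β) = partialTranspose x :=
  congrArg partialTranspose (evalMatrix_genericMatrix x)

lemma evalMatrix_partialTranspose (x : BlockMatrix α β ℂ)
    (M : BlockMatrix α β (EntryPoly (α × β))) :
    evalMatrix x (partialTranspose M) = partialTranspose (evalMatrix x M) := rfl

lemma evalAt_mixedTrace (x : BlockMatrix α β ℂ) (Φ : BlockMatrix α β (EntryPoly (α × β)))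
    (B : BlockMatrix α β ℂ) (k : ℕ) (B' : BlockMatrix α β ℂ) :
    evalAt x (mixedTrace Φ B k B') =
      (evalMatrix x Φ * B * partialTranspose x ^ k * B').trace := by
  rw [mixedTrace, ← trace_evalMatrix, map_mul, map_mul, map_mul, map_pow,
    evalMatrix_genericPartialTranspose, evalMatrix_constMatrix, evalMatrix_constMatrix]

section Gradient

variable {Φ : BlockMatrix α β (EntryPoly (α × β))} (hΦ : Φ ∈ equivariant (α × β))
include hΦ

lemma sum_norm_adDerivation_single_mixedTrace_sq (B : BlockMatrix α β ℂ) (k : ℕ)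
    (B' x : BlockMatrix α β ℂ) :
    ∑ i, ∑ j, ‖evalAt x (adDerivation (single i j 1) (mixedTrace Φ B k B'))‖ ^ 2 =
      frobeniusSq ((evalMatrix x Φ * (B * partialTranspose x ^ k * B') -
          B * partialTranspose x ^ k * B' * evalMatrix x Φ) +
        ∑ r ∈ Finset.range k,
          (x * partialTranspose (partialTranspose x ^ (k - 1 - r) * B' * evalMatrix x Φ * B *
              partialTranspose x ^ r) -
            partialTranspose (partialTranspose x ^ (k - 1 - r) * B' * evalMatrix x Φ * B *
              partialTranspose x ^ r) * x)) := by
  rw [frobeniusSq, Finset.sum_comm]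
  refine Finset.sum_congr rfl fun i _ => Finset.sum_congr rfl fun j _ => ?_
  rw [adDerivation_single_mixedTrace hΦ, ← evalMatrix_apply]
  simp only [map_add, map_sub, map_sum, map_mul, map_pow, evalMatrix_partialTranspose,
    evalMatrix_genericPartialTranspose, evalMatrix_genericMatrix, evalMatrix_constMatrix]

omit hΦ in
lemma frobeniusSq_partialTranspose_pow_mul_pow_le {B B' P x : BlockMatrix α β ℂ}
    (hB : ‖B‖ ≤ 1) (hB' : ‖B'‖ ≤ 1) (hx : x.IsHermitian) {b : ℝ} (hP : ‖P‖ ≤ b) {k r : ℕ}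
    (hr : r < k) :
    frobeniusSq (partialTranspose (partialTranspose x ^ (k - 1 - r) * B' * P * B *
      partialTranspose x ^ r)) ≤ 2 * b ^ 2 * frobeniusSq (partialTranspose x ^ (k - 1)) := by
  have hnorm : ‖B' * P * B‖ ≤ b :=
    calc ‖B' * P * B‖ ≤ ‖B'‖ * ‖P‖ * ‖B‖ :=
          (norm_mul_le _ _).trans (by gcongr; exact norm_mul_le _ _)
      _ ≤ 1 * b * 1 := by
          have := (norm_nonneg P).trans hP
          gcongr
      _ = b := by ring
  have hle := frobeniusSq_pow_mul_mul_pow_le (isHermitian_partialTranspose hx) (B' * P * B)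
    (k - 1 - r) r
  rw [show k - 1 - r + r = k - 1 by lia] at hle
  rw [frobeniusSq_partialTranspose]
  simp only [mul_assoc] at hle hnorm ⊢
  refine hle.trans ?_
  have := frobeniusSq_nonneg (partialTranspose x ^ (k - 1))
  gcongr

lemma sum_norm_adDerivation_single_mixedTrace_sq_le {B B' x : BlockMatrix α β ℂ} (k : ℕ)
    (hB : ‖B‖ ≤ 1) (hB' : ‖B'‖ ≤ 1) (hx : x.IsHermitian) {L b : ℝ} (hL : ‖x‖ ≤ L)
    (hb : ‖evalMatrix x Φ‖ ≤ b) :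
    ∑ i, ∑ j, ‖evalAt x (adDerivation (single i j 1) (mixedTrace Φ B k B'))‖ ^ 2 ≤
      8 * b ^ 2 * (frobeniusSq (partialTranspose x ^ k) +
        2 * k ^ 2 * L ^ 2 * frobeniusSq (partialTranspose x ^ (k - 1))) := by
  rw [sum_norm_adDerivation_single_mixedTrace_sq hΦ]
  set Y := partialTranspose x
  set P := evalMatrix x Φ
  set G : ℕ → BlockMatrix α β ℂ := fun r => partialTranspose (Y ^ (k - 1 - r) * B' * P * B * Y ^ r)
  set W := B * Y ^ k * B'
  have hW : frobeniusSq (P * W - W * P) ≤ 4 * b ^ 2 * frobeniusSq (Y ^ k) :=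
    (frobeniusSq_commutator_le hb W).trans (by gcongr; exact frobeniusSq_mul_mul_le hB hB' _)
  have hG : frobeniusSq (∑ r ∈ Finset.range k, (x * G r - G r * x)) ≤
      k * (k * (4 * L ^ 2 * (2 * b ^ 2 * frobeniusSq (Y ^ (k - 1))))) := by
    refine (frobeniusSq_sum_le _ _).trans ?_
    rw [Finset.card_range]
    gcongr
    refine (Finset.sum_le_card_nsmul _ _ _ fun r hr => ?_).trans_eq
      (by rw [Finset.card_range, nsmul_eq_mul])
    refine (frobeniusSq_commutator_le hL (G r)).trans ?_
    gcongr
    exact frobeniusSq_partialTranspose_pow_mul_pow_le hB hB' hx hb (Finset.mem_range.mp hr)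
  have hadd := frobeniusSq_add_le (P * W - W * P) (∑ r ∈ Finset.range k, (x * G r - G r * x))
  linarith

end Gradient

/-- The expected normalized moment of order `2 k` of the partial transpose along the unitary
orbit of `D`. -/
def evenMoment (D : BlockMatrix α β ℂ) (k : ℕ) : ℝ :=
  (∫ V, frobeniusSq (partialTranspose (unitaryConj D V) ^ k) ∂haarUnitary (α × β)) /
    Fintype.card (α × β)

lemma evenMoment_nonneg (D : BlockMatrix α β ℂ) (k : ℕ) : 0 ≤ evenMoment D k :=
  div_nonneg (integral_nonneg fun _ => frobeniusSq_nonneg _) (Nat.cast_nonneg _)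

lemma integral_norm_mixedTrace_sub_sq_le [Nonempty α] [Nonempty β]
    {Φ : BlockMatrix α β (EntryPoly (α × β))} (hΦ : Φ ∈ equivariant (α × β))
    {B B' D : BlockMatrix α β ℂ} (k : ℕ) (hB : ‖B‖ ≤ 1) (hB' : ‖B'‖ ≤ 1) (hD : D.IsHermitian)
    {L b : ℝ} (hL : ‖D‖ ≤ L) (hb : ∀ V, ‖evalMatrix (unitaryConj D V) Φ‖ ≤ b) :
    ∫ V, ‖evalAt (unitaryConj D V) (mixedTrace Φ B k B') -
        orbitExpectation D (mixedTrace Φ B k B')‖ ^ 2 ∂haarUnitary (α × β) ≤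
      16 * b ^ 2 * (evenMoment D k + 2 * k ^ 2 * L ^ 2 * evenMoment D (k - 1)) := by
  set μ := haarUnitary (α × β)
  set g : α × β → α × β → unitaryGroup (α × β) ℂ → ℝ := fun i j V =>
    ‖evalAt (unitaryConj D V) (adDerivation (single i j 1) (mixedTrace Φ B k B'))‖ ^ 2
  set S : ℕ → unitaryGroup (α × β) ℂ → ℝ := fun k V =>
    frobeniusSq (partialTranspose (unitaryConj D V) ^ k)
  have hint_g (i j) : Integrable (g i j) μ := integrable_haarUnitary (by fun_prop)
  have hint_S (k) : Integrable (S k) μ := integrable_haarUnitary (by fun_prop)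
  have hgrad : ∑ i, ∑ j, ∫ V, g i j V ∂μ ≤
      8 * b ^ 2 * (∫ V, S k V ∂μ + 2 * k ^ 2 * L ^ 2 * ∫ V, S (k - 1) V ∂μ) := by
    calc ∑ i, ∑ j, ∫ V, g i j V ∂μ = ∫ V, ∑ i, ∑ j, g i j V ∂μ := by
          rw [integral_finsetSum _ fun i _ => integrable_finsetSum _ fun j _ => hint_g i j]
          exact Finset.sum_congr rfl fun i _ =>
            (integral_finsetSum _ fun j _ => hint_g i j).symm
      _ ≤ ∫ V, 8 * b ^ 2 * (S k V + 2 * k ^ 2 * L ^ 2 * S (k - 1) V) ∂μ := by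
          refine integral_mono
            (integrable_finsetSum _ fun i _ => integrable_finsetSum _ fun j _ => hint_g i j)
            (((hint_S _).add ((hint_S _).const_mul _)).const_mul _) fun V => ?_
          exact sum_norm_adDerivation_single_mixedTrace_sq_le hΦ k hB hB'
            (isHermitian_unitaryConj hD V) ((norm_unitaryConj D V).le.trans hL) (hb V)
      _ = _ := by
          rw [integral_const_mul, integral_add (hint_S _) ((hint_S _).const_mul _),
            integral_const_mul]
  refine (integral_norm_sub_orbitExpectation_sq_le D _).trans
    ((mul_le_mul_of_nonneg_left hgrad (by positivity)).trans_eq ?_)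
  rw [evenMoment, evenMoment]
  ring

end Concentration

/-! ### Loop equations -/

section LoopEquation

open scoped Matrix.Norms.L2Operator

section Covariance

variable {ι : Type*} [Fintype ι] [DecidableEq ι] (D : Matrix ι ι ℂ)

variable {D} in
lemma orbitExpectation_eq_of_evalAt_eq {f : EntryPoly ι} {z : ℂ}
    (h : ∀ V, evalAt (unitaryConj D V) f = z) : orbitExpectation D f = z := by
  simp [orbitExpectation_apply, h]

/-- The covariance of two polynomial functions of a Haar-random unitary conjugate of `D`. -/
def orbitCovariance (f g : EntryPoly ι) : ℂ :=
  orbitExpectation D (f * g) - orbitExpectation D f * orbitExpectation D g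

lemma orbitExpectation_mul (f g : EntryPoly ι) :
    orbitExpectation D (f * g) =
      orbitExpectation D f * orbitExpectation D g + orbitCovariance D f g :=
  (add_sub_cancel _ _).symm

lemma orbitCovariance_eq_integral (f g : EntryPoly ι) :
    orbitCovariance D f g = ∫ V, (evalAt (unitaryConj D V) f - orbitExpectation D f) *
      (evalAt (unitaryConj D V) g - orbitExpectation D g) ∂haarUnitary ι := by
  have hexpand : orbitCovariance D f g =
      orbitExpectation D ((f - MvPolynomial.C (orbitExpectation D f)) *
        (g - MvPolynomial.C (orbitExpectation D g))) := by
    have hmul : (f - MvPolynomial.C (orbitExpectation D f)) *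
        (g - MvPolynomial.C (orbitExpectation D g)) =
          f * g - orbitExpectation D g • f - orbitExpectation D f • g +
            MvPolynomial.C (orbitExpectation D f * orbitExpectation D g) := by
      simp only [MvPolynomial.smul_eq_C_mul, map_mul]
      ring
    rw [hmul, map_add, map_sub, map_sub, map_smul, map_smul, orbitExpectation_C, orbitCovariance,
      smul_eq_mul, smul_eq_mul]
    ring
  rw [hexpand, orbitExpectation_apply]
  simp [evalAt]

lemma norm_orbitCovariance_le (f g : EntryPoly ι) :
    ‖orbitCovariance D f g‖ ≤
      √(∫ V, ‖evalAt (unitaryConj D V) f - orbitExpectation D f‖ ^ 2 ∂haarUnitary ι) *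
      √(∫ V, ‖evalAt (unitaryConj D V) g - orbitExpectation D g‖ ^ 2 ∂haarUnitary ι) := by
  rw [orbitCovariance_eq_integral]
  exact norm_integral_mul_le (by fun_prop) (by fun_prop)

end Covariance

variable {α β : Type*} [Fintype α] [Fintype β] [DecidableEq α] [DecidableEq β]
  (D : BlockMatrix α β ℂ)

/-- The expected normalized moment of order `k` of the partial transpose along the unitary orbit
of `D`. -/
def partialTransposeMoment (k : ℕ) : ℂ :=
  orbitExpectation D (genericPartialTranspose α β ^ k).trace / Fintype.card (α × β)

/-- The expected normalized mixed traces `tr (Qⱼ E Yᵏ E')`, where `Qⱼ` is the `j`-th centred power,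
`Y` the partial transpose, and `E`, `E'` are the block matrix units with indices `s` and `t`. -/
def mixedMoment (j k : ℕ) : Matrix (α × α) (α × α) ℂ :=
  .of fun s t => orbitExpectation D
    (mixedTrace (centredPower D j) (blockUnit s.1 s.2) k (blockUnit t.1 t.2)) /
      Fintype.card (α × β)

lemma evalAt_trace_genericPartialTranspose_pow (x : BlockMatrix α β ℂ) (k : ℕ) :
    evalAt x (genericPartialTranspose α β ^ k).trace = (partialTranspose x ^ k).trace := by
  rw [← trace_evalMatrix, map_pow, evalMatrix_genericPartialTranspose]

variable {D} in
lemma partialTransposeMoment_two_mul (hD : D.IsHermitian) (k : ℕ) :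
    partialTransposeMoment D (2 * k) = evenMoment D k := by
  rw [partialTransposeMoment, evenMoment, orbitExpectation_apply, Complex.ofReal_div,
    ← integral_complex_ofReal]
  simp only [evalAt_trace_genericPartialTranspose_pow,
    frobeniusSq_pow_eq_trace (isHermitian_partialTranspose (isHermitian_unitaryConj hD _)),
    Complex.ofReal_natCast]

lemma partialTransposeMoment_succ (k : ℕ) :
    partialTransposeMoment D (k + 1) = (mixedMoment D 0 k).trace := by
  have htrace : (genericPartialTranspose α β ^ (k + 1)).trace =
      ∑ s : α × α, mixedTrace (centredPower D 0) (blockUnit s.1 s.2) k (blockUnit s.1 s.2) := by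
    rw [pow_succ', Fintype.sum_prod_type]
    nth_rw 1 [genericPartialTranspose, partialTranspose_eq_sum]
    simp only [Finset.sum_mul, trace_sum]
    refine Finset.sum_congr rfl fun a _ => Finset.sum_congr rfl fun b _ => ?_
    rw [mixedTrace, constMatrix_blockUnit, trace_mul_comm _ (blockUnit a b), centredPower]
    simp only [mul_assoc]
  rw [partialTransposeMoment, htrace, map_sum, Finset.sum_div]
  rfl

lemma map_adDerivation_blockUnit_genericPartialTranspose_pow (a b : α) (l : ℕ) :
    (genericPartialTranspose α β ^ l).map (adDerivation (blockUnit a b)) =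
      genericPartialTranspose α β ^ l * blockUnit b a -
        blockUnit b a * genericPartialTranspose α β ^ l := by
  induction l with
  | zero =>
    rw [pow_zero, one_mul, mul_one, sub_self, ← map_one constMatrix, map_derivation_constMatrix]
  | succ l ih =>
    rw [pow_succ, map_derivation_mul, ih, genericPartialTranspose, partialTranspose_map,
      map_adDerivation_genericMatrix, constMatrix_blockUnit, partialTranspose_commutator_blockUnit]
    noncomm_ring

lemma orbitExpectation_trace_pow_commutator (a b : α) (C : BlockMatrix α β ℂ) (l : ℕ) :
    orbitExpectation D ((genericPartialTranspose α β ^ l * blockUnit b a -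
      blockUnit b a * genericPartialTranspose α β ^ l) * constMatrix C).trace = 0 := by
  rw [← map_adDerivation_blockUnit_genericPartialTranspose_pow,
    ← orbitExpectation_adDerivation D (blockUnit a b)
      (genericPartialTranspose α β ^ l * constMatrix C).trace,
    ← trace_map_derivation, map_derivation_mul, map_derivation_constMatrix, mul_zero, add_zero]

section Nonempty

variable [Nonempty α] [Nonempty β]

lemma partialTransposeMoment_zero : partialTransposeMoment D 0 = 1 := by
  rw [partialTransposeMoment, orbitExpectation_eq_of_evalAt_eq (z := Fintype.card (α × β)),
    div_self (Nat.cast_ne_zero.mpr Fintype.card_ne_zero)]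
  intro V
  rw [evalAt_trace_genericPartialTranspose_pow, pow_zero, trace_one]

lemma orbitExpectation_trace_pow_mul_blockUnit (l : ℕ) (b v : α) :
    orbitExpectation D (genericPartialTranspose α β ^ l * blockUnit b v).trace =
      if v = b then Fintype.card (α × β) * partialTransposeMoment D l / Fintype.card α else 0 := by
  have hmove (a : α) : orbitExpectation D (genericPartialTranspose α β ^ l * blockUnit b v).trace =
      if v = b then orbitExpectation D (genericPartialTranspose α β ^ l * blockUnit a a).trace
      else 0 := by
    have hcomm := orbitExpectation_trace_pow_commutator D a b (blockUnit a v) l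
    rw [constMatrix_blockUnit, sub_mul, trace_sub, map_sub, sub_eq_zero, mul_assoc,
      blockUnit_mul_blockUnit, if_pos rfl, trace_mul_comm (blockUnit b a * _), ← mul_assoc,
      blockUnit_mul_blockUnit] at hcomm
    rw [hcomm]
    split_ifs
    · rw [trace_mul_comm]
    · simp
  have hsum : Fintype.card (α × β) * partialTransposeMoment D l =
      ∑ a : α, orbitExpectation D (genericPartialTranspose α β ^ l * blockUnit a a).trace := by
    rw [partialTransposeMoment, mul_div_cancel₀ _ (Nat.cast_ne_zero.mpr Fintype.card_ne_zero),
      ← map_sum, ← trace_sum, ← Finset.mul_sum, sum_blockUnit_self, mul_one]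
  split_ifs with h
  · simp only [h, if_true] at hmove ⊢
    rw [eq_div_iff (Nat.cast_ne_zero.mpr Fintype.card_ne_zero), hsum,
      Finset.sum_congr rfl fun a _ => (hmove a).symm]
    simp [mul_comm]
  · rw [hmove b, if_neg h]

lemma orbitExpectation_mixedTrace_one (l : ℕ) (s t : α × α) :
    orbitExpectation D (mixedTrace 1 (blockUnit s.1 s.2) l (blockUnit t.1 t.2)) =
      if s = t.swap then
        Fintype.card (α × β) * partialTransposeMoment D l / Fintype.card α else 0 := by
  obtain ⟨u, v⟩ := s
  obtain ⟨c, e⟩ := t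
  have hcyc : mixedTrace 1 (blockUnit u v : BlockMatrix α β ℂ) l (blockUnit c e) =
      if e = u then (genericPartialTranspose α β ^ l * blockUnit c v).trace else 0 := by
    rw [mixedTrace, one_mul, constMatrix_blockUnit, constMatrix_blockUnit, mul_assoc,
      trace_mul_comm, mul_assoc, blockUnit_mul_blockUnit]
    split_ifs <;> simp
  rw [hcyc]
  simp only [Prod.swap_prod_mk, Prod.mk.injEq]
  split_ifs with h₁ h₂ h₂
  · rw [orbitExpectation_trace_pow_mul_blockUnit, if_pos h₂.2]
  · rw [orbitExpectation_trace_pow_mul_blockUnit, if_neg fun h => h₂ ⟨h₁.symm, h⟩]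
  · exact absurd h₂.1.symm h₁
  · exact map_zero _

lemma orbitExpectation_mixedTrace_centredPower (j k : ℕ) (s t : α × α) :
    orbitExpectation D
        (mixedTrace (centredPower D j) (blockUnit s.1 s.2) k (blockUnit t.1 t.2)) =
      Fintype.card (α × β) * mixedMoment D j k s t :=
  (mul_div_cancel₀ _ (Nat.cast_ne_zero.mpr Fintype.card_ne_zero)).symm

lemma orbitExpectation_mixedTrace_generic_mul_centredPower (j k : ℕ) (s t : α × α) :
    orbitExpectation D (mixedTrace (genericMatrix _ * centredPower D j)
        (blockUnit s.1 s.2) k (blockUnit t.1 t.2)) =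
      Fintype.card (α × β) * mixedMoment D (j + 1) k s t +
        centringConst D j * if s = t.swap then
          Fintype.card (α × β) * partialTransposeMoment D k / Fintype.card α else 0 := by
  have hsucc : genericMatrix (α × β) * centredPower D j =
      centredPower D (j + 1) + centringConst D j • 1 := by
    rw [centredPower_succ, sub_add_cancel]
  rw [hsucc, mixedTrace_add, mixedTrace_smul, map_add, map_smul, smul_eq_mul,
    orbitExpectation_mixedTrace_centredPower, orbitExpectation_mixedTrace_one]

end Nonempty

/-- The covariance term in the loop equation for `mixedMoment`. -/
def loopCovariance (j k : ℕ) : Matrix (α × α) (α × α) ℂ :=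
  .of fun s t => ∑ r ∈ Finset.range k, ∑ w : α × α,
    (orbitCovariance D (mixedTrace (centredPower D j) (blockUnit s.1 s.2) r (blockUnit w.1 w.2))
        (mixedTrace (genericMatrix _) (blockUnit w.1 w.2) (k - 1 - r) (blockUnit t.1 t.2)) -
      orbitCovariance D (mixedTrace (genericMatrix _ * centredPower D j) (blockUnit s.1 s.2) r
          (blockUnit w.1 w.2))
        (mixedTrace 1 (blockUnit w.1 w.2) (k - 1 - r) (blockUnit t.1 t.2)))

/-- The right-hand side of the loop equation for `mixedMoment` without its covariance term; `r` and
`l` are the powers of the partial transpose left after splitting the trace in two. -/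
def loopProduct (j r l : ℕ) : Matrix (α × α) (α × α) ℂ :=
  -(mixedMoment D j r * mixedMoment D 0 l) +
    (partialTransposeMoment D l / Fintype.card α) •
      (mixedMoment D (j + 1) r).submatrix id Prod.swap +
    (centringConst D j * partialTransposeMoment D r * partialTransposeMoment D l /
      Fintype.card α ^ 2) • 1

variable [Nonempty α] [Nonempty β]

lemma sum_orbitExpectation_mul_orbitExpectation (j r l : ℕ) (s t : α × α) :
    ∑ w : α × α,
      (orbitExpectation D
          (mixedTrace (centredPower D j) (blockUnit s.1 s.2) r (blockUnit w.1 w.2)) *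
        orbitExpectation D
          (mixedTrace (genericMatrix _) (blockUnit w.1 w.2) l (blockUnit t.1 t.2)) -
      orbitExpectation D (mixedTrace (genericMatrix _ * centredPower D j) (blockUnit s.1 s.2) r
          (blockUnit w.1 w.2)) *
        orbitExpectation D (mixedTrace 1 (blockUnit w.1 w.2) l (blockUnit t.1 t.2))) =
      -(Fintype.card (α × β) : ℂ) ^ 2 * loopProduct D j r l s t := by
  have hgen (w : α × α) : orbitExpectation D
      (mixedTrace (genericMatrix _) (blockUnit w.1 w.2) l (blockUnit t.1 t.2)) =
        Fintype.card (α × β) * mixedMoment D 0 l w t :=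
    orbitExpectation_mixedTrace_centredPower D 0 l w t
  have hn : (Fintype.card α : ℂ) ≠ 0 := Nat.cast_ne_zero.mpr Fintype.card_ne_zero
  simp only [orbitExpectation_mixedTrace_centredPower, hgen,
    orbitExpectation_mixedTrace_generic_mul_centredPower, orbitExpectation_mixedTrace_one,
    Finset.sum_sub_distrib, mul_ite, mul_zero, Finset.sum_ite_eq', Finset.mem_univ, if_true,
    Prod.swap_swap]
  have hpull : ∑ w, Fintype.card (α × β) * mixedMoment D j r s w *
      (Fintype.card (α × β) * mixedMoment D 0 l w t) =
        (Fintype.card (α × β) : ℂ) ^ 2 * ∑ w, mixedMoment D j r s w * mixedMoment D 0 l w t := by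
    rw [Finset.mul_sum]
    exact Finset.sum_congr rfl fun w _ => by ring
  rw [hpull]
  simp only [loopProduct, Matrix.add_apply, Matrix.neg_apply, Matrix.smul_apply, submatrix_apply,
    Matrix.mul_apply, one_apply, id_eq, smul_eq_mul]
  split_ifs <;> field_simp <;> ring

variable {D} in
lemma orbitExpectation_trace_centredPower_mul (htr : D.trace = 0) (j : ℕ)
    (M : BlockMatrix α β (EntryPoly (α × β))) :
    orbitExpectation D ((centredPower D j).trace * M.trace) = 0 :=
  orbitExpectation_eq_of_evalAt_eq fun V => by
    rw [map_mul, ← trace_evalMatrix, evalMatrix_unitaryConj_centredPower, trace_unitaryConj,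
      trace_evalMatrix_centredPower htr, zero_mul]

variable {D} in
/-- Haar integration by parts applied to the entries of `Qⱼ E Yᵏ E'`. -/
theorem mixedMoment_eq_sum_loopProduct_sub (htr : D.trace = 0) (j k : ℕ) :
    mixedMoment D j k = ∑ r ∈ Finset.range k, loopProduct D j r (k - 1 - r) -
      ((Fintype.card (α × β) : ℂ) ^ 2)⁻¹ • loopCovariance D j k := by
  ext s t
  rw [Matrix.sub_apply, Matrix.smul_apply, Matrix.sum_apply, smul_eq_mul]
  set N : ℂ := ((Fintype.card (α × β) : ℕ) : ℂ)
  have hN₀ : N ≠ 0 := Nat.cast_ne_zero.mpr Fintype.card_ne_zero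
  have hparts := congrArg (orbitExpectation D) (sum_adDerivation_single_mixed_apply
    (centredPower_mem_equivariant D j) (blockUnit s.1 s.2) k (blockUnit t.1 t.2))
  have hcard : orbitExpectation D ((Fintype.card (α × β) : EntryPoly (α × β)) *
      mixedTrace (centredPower D j) (blockUnit s.1 s.2) k (blockUnit t.1 t.2)) =
        N * (N * mixedMoment D j k s t) := by
    rw [← orbitExpectation_mixedTrace_centredPower, ← nsmul_eq_mul, map_nsmul, nsmul_eq_mul]
  rw [map_add, map_sub, hcard, orbitExpectation_trace_centredPower_mul htr] at hparts
  simp only [← Fintype.sum_prod_type' (f := fun u v =>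
      mixedTrace (centredPower D j) (blockUnit s.1 s.2) _ (blockUnit u v) *
          mixedTrace (genericMatrix _) (blockUnit u v) _ (blockUnit t.1 t.2) -
        mixedTrace (genericMatrix _ * centredPower D j) (blockUnit s.1 s.2) _ (blockUnit u v) *
          mixedTrace 1 (blockUnit u v) _ (blockUnit t.1 t.2)),
    map_sum, map_sub, orbitExpectation_adDerivation, orbitExpectation_mul, add_sub_add_comm,
    Finset.sum_add_distrib, sum_orbitExpectation_mul_orbitExpectation, Finset.sum_const_zero,
    ← Finset.mul_sum] at hparts
  change 0 = N * (N * mixedMoment D j k s t) - 0 +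
    (-N ^ 2 * ∑ r ∈ Finset.range k, loopProduct D j r (k - 1 - r) s t +
      loopCovariance D j k s t) at hparts
  field_simp
  linear_combination -hparts

end LoopEquation

/-! ### Norm bounds from the loop equations -/

section RowSumNorm

open scoped Matrix.Norms.Operator

variable {κ : Type*} [Fintype κ] [DecidableEq κ] (T : Matrix κ κ ℂ)

/-- The maximal absolute row sum of a matrix. It is a definition of its own because `‖·‖` denotes
the spectral norm elsewhere. -/
def rowSumNorm : ℝ := ‖T‖

lemma rowSumNorm_nonneg : 0 ≤ rowSumNorm T := norm_nonneg T

lemma rowSumNorm_eq_iSup : rowSumNorm T = ⨆ s, ∑ t, ‖T s t‖ := by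
  rw [rowSumNorm, linfty_opNorm_def, Finset.sup_univ_eq_ciSup, NNReal.coe_iSup]
  simp

lemma sum_norm_le_rowSumNorm (s : κ) : ∑ t, ‖T s t‖ ≤ rowSumNorm T := by
  rw [rowSumNorm_eq_iSup]
  exact le_ciSup (f := fun s => ∑ t, ‖T s t‖) (Set.finite_range _).bddAbove s

lemma norm_trace_le_card_mul_rowSumNorm : ‖T.trace‖ ≤ Fintype.card κ * rowSumNorm T := by
  refine (norm_sum_le_of_le _ fun s _ => ?_).trans_eq (by rw [Finset.sum_const, nsmul_eq_mul]; rfl)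
  exact (Finset.single_le_sum (fun t _ => norm_nonneg (T s t)) (Finset.mem_univ s)).trans
    (sum_norm_le_rowSumNorm T s)

variable {T}

lemma rowSumNorm_le_card_mul {b : ℝ} (hT : ∀ s t, ‖T s t‖ ≤ b) (hb : 0 ≤ b) :
    rowSumNorm T ≤ Fintype.card κ * b := by
  rw [rowSumNorm_eq_iSup]
  refine Real.iSup_le (fun s => ?_) (by positivity)
  exact (Finset.sum_le_sum fun t _ => hT s t).trans_eq (by simp)

variable (T)

lemma rowSumNorm_submatrix_equiv (e : κ ≃ κ) : rowSumNorm (T.submatrix id e) = rowSumNorm T := by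
  simp only [rowSumNorm_eq_iSup, submatrix_apply, id_eq]
  exact congrArg iSup (funext fun s => e.sum_comp fun t => ‖T s t‖)

lemma linfty_opNorm_one_le : ‖(1 : Matrix κ κ ℂ)‖ ≤ 1 := by
  rcases isEmpty_or_nonempty κ
  · rw [Subsingleton.elim (1 : Matrix κ κ ℂ) 0, norm_zero]
    exact zero_le_one
  · exact norm_one.le

variable {α β : Type*} [Fintype α] [Fintype β] [DecidableEq α] [DecidableEq β]
  (D : BlockMatrix α β ℂ)

lemma norm_partialTransposeMoment_succ_le (k : ℕ) :
    ‖partialTransposeMoment D (k + 1)‖ ≤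
      (Fintype.card α : ℝ) ^ 2 * rowSumNorm (mixedMoment D 0 k) := by
  rw [partialTransposeMoment_succ]
  refine (norm_trace_le_card_mul_rowSumNorm _).trans_eq ?_
  rw [Fintype.card_prod, Nat.cast_mul, sq]

lemma rowSumNorm_loopProduct_le (j r l : ℕ) :
    rowSumNorm (loopProduct D j r l) ≤
      rowSumNorm (mixedMoment D j r) * rowSumNorm (mixedMoment D 0 l) +
        rowSumNorm (mixedMoment D (j + 1) r) * ‖partialTransposeMoment D l‖ / Fintype.card α +
        ‖centringConst D j‖ * ‖partialTransposeMoment D r‖ * ‖partialTransposeMoment D l‖ /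
          (Fintype.card α : ℝ) ^ 2 := by
  refine norm_add₃_le.trans (add_le_add_three ?_ ?_ ?_)
  · rw [norm_neg]
    exact norm_mul_le _ _
  · rw [norm_smul, norm_div, Complex.norm_natCast, mul_div_assoc, mul_comm]
    exact (congrArg (· * _) (rowSumNorm_submatrix_equiv _ (Equiv.prodComm α α))).le
  · rw [norm_smul, norm_div, norm_mul, norm_mul, norm_pow, Complex.norm_natCast]
    exact mul_le_of_le_one_right (by positivity) linfty_opNorm_one_le

variable {D} in
lemma rowSumNorm_mixedMoment_le_add [Nonempty α] [Nonempty β] (htr : D.trace = 0) (j k : ℕ) :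
    rowSumNorm (mixedMoment D j k) ≤
      ∑ r ∈ Finset.range k, rowSumNorm (loopProduct D j r (k - 1 - r)) +
        rowSumNorm (loopCovariance D j k) / (Fintype.card (α × β) : ℝ) ^ 2 := by
  rw [mixedMoment_eq_sum_loopProduct_sub htr]
  refine (norm_sub_le _ _).trans (add_le_add (norm_sum_le _ _) ?_)
  rw [norm_smul, norm_inv, norm_pow, Complex.norm_natCast, inv_mul_eq_div, rowSumNorm]

end RowSumNorm

section MixedMomentBounds

open scoped Matrix.Norms.L2Operator

variable {α β : Type*} [Fintype α] [Fintype β] [DecidableEq α] [DecidableEq β]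
  {D : BlockMatrix α β ℂ}

variable (D) in
/-- The variance of a mixed trace of degree `k` in the partial transpose, built from matrices of
norm at most `1`, is at most `16 * varianceProxy D L k` when `‖D‖ ≤ L`. -/
def varianceProxy (L : ℝ) (k : ℕ) : ℝ :=
  evenMoment D k + 2 * k ^ 2 * L ^ 2 * evenMoment D (k - 1)

variable [Nonempty α] [Nonempty β] {L : ℝ}

lemma norm_orbitCovariance_mixedTrace_le (hD : D.IsHermitian) (hL : ‖D‖ ≤ L)
    {Φ Ψ : BlockMatrix α β (EntryPoly (α × β))} (hΦ : Φ ∈ equivariant (α × β))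
    (hΨ : Ψ ∈ equivariant (α × β)) {b b' : ℝ}
    (hb : ∀ V, ‖evalMatrix (unitaryConj D V) Φ‖ ≤ b)
    (hb' : ∀ V, ‖evalMatrix (unitaryConj D V) Ψ‖ ≤ b') (r l : ℕ) (s w t : α × α) :
    ‖orbitCovariance D (mixedTrace Φ (blockUnit s.1 s.2) r (blockUnit w.1 w.2))
        (mixedTrace Ψ (blockUnit w.1 w.2) l (blockUnit t.1 t.2))‖ ≤
      16 * (b * b') * (√(varianceProxy D L r) * √(varianceProxy D L l)) := by
  have hb₀ : 0 ≤ b := (norm_nonneg _).trans (hb 1)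
  have hb₀' : 0 ≤ b' := (norm_nonneg _).trans (hb' 1)
  have hsqrt {x : ℝ} (y : ℝ) (hx : 0 ≤ x) : √(16 * x ^ 2 * y) = 4 * x * √y := by
    rw [show 16 * x ^ 2 * y = (4 * x) ^ 2 * y by ring, Real.sqrt_mul (sq_nonneg _),
      Real.sqrt_sq (by positivity)]
  calc _ ≤ √(16 * b ^ 2 * varianceProxy D L r) * √(16 * b' ^ 2 * varianceProxy D L l) := by
        refine (norm_orbitCovariance_le _ _ _).trans ?_
        gcongr
        · exact integral_norm_mixedTrace_sub_sq_le hΦ r (norm_blockUnit_le_one _ _)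
            (norm_blockUnit_le_one _ _) hD hL hb
        · exact integral_norm_mixedTrace_sub_sq_le hΨ l (norm_blockUnit_le_one _ _)
            (norm_blockUnit_le_one _ _) hD hL hb'
    _ = _ := by
        rw [hsqrt _ hb₀, hsqrt _ hb₀']
        ring

lemma norm_loopCovariance_apply_le (hD : D.IsHermitian) (hL : ‖D‖ ≤ L) (j k : ℕ) (s t : α × α) :
    ‖loopCovariance D j k s t‖ ≤ 32 * (Fintype.card α : ℝ) ^ 2 * (j + 1) * L ^ (j + 2) *
      ∑ r ∈ Finset.range k, √(varianceProxy D L r) * √(varianceProxy D L (k - 1 - r)) := by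
  have hone (V) : ‖evalMatrix (unitaryConj D V) 1‖ ≤ 1 := by rw [map_one, CStarRing.norm_one]
  have hgen (V) : ‖evalMatrix (unitaryConj D V) (genericMatrix _)‖ ≤ L := by
    rwa [evalMatrix_genericMatrix, norm_unitaryConj]
  have hpow (V) : ‖evalMatrix (unitaryConj D V) (centredPower D j)‖ ≤ (j + 1) * L ^ (j + 1) := by
    rw [evalMatrix_unitaryConj_centredPower, norm_unitaryConj]
    exact norm_centredPower_le hL j
  have hgenpow (V) : ‖evalMatrix (unitaryConj D V) (genericMatrix _ * centredPower D j)‖ ≤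
      L * ((j + 1) * L ^ (j + 1)) := by
    rw [map_mul]
    exact norm_mul_le_of_le (hgen V) (hpow V)
  have hmem := centredPower_mem_equivariant D j
  have hgenmem := genericMatrix_mem_equivariant (ι := α × β)
  rw [loopCovariance, of_apply, Finset.mul_sum]
  refine norm_sum_le_of_le _ fun r _ => ?_
  have hterm (w : α × α) := (norm_sub_le _ _).trans (add_le_add
    (norm_orbitCovariance_mixedTrace_le hD hL hmem hgenmem hpow hgen r (k - 1 - r) s w t)
    (norm_orbitCovariance_mixedTrace_le hD hL (mul_mem hgenmem hmem) (one_mem _) hgenpow hone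
      r (k - 1 - r) s w t))
  refine (norm_sum_le_of_le _ fun w _ => hterm w).trans_eq ?_
  rw [Finset.sum_const, Finset.card_univ, Fintype.card_prod, nsmul_eq_mul, Nat.cast_mul]
  ring

lemma rowSumNorm_mixedMoment_le (hD : D.IsHermitian) (htr : D.trace = 0) (hL : ‖D‖ ≤ L) {σ : ℝ}
    (hσ : frobeniusSq D ≤ Fintype.card (α × β) * σ ^ 2) (j k : ℕ) :
    rowSumNorm (mixedMoment D j k) ≤ ∑ r ∈ Finset.range k,
      (rowSumNorm (mixedMoment D j r) * rowSumNorm (mixedMoment D 0 (k - 1 - r)) +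
        rowSumNorm (mixedMoment D (j + 1) r) * ‖partialTransposeMoment D (k - 1 - r)‖ /
          Fintype.card α +
        σ ^ 2 * L ^ j * ‖partialTransposeMoment D r‖ * ‖partialTransposeMoment D (k - 1 - r)‖ /
          (Fintype.card α : ℝ) ^ 2) +
      32 * (Fintype.card α : ℝ) ^ 4 * (j + 1) * L ^ (j + 2) / (Fintype.card (α × β) : ℝ) ^ 2 *
      ∑ r ∈ Finset.range k, √(varianceProxy D L r) * √(varianceProxy D L (k - 1 - r)) := by
  have hL₀ : 0 ≤ L := (norm_nonneg _).trans hL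
  refine (rowSumNorm_mixedMoment_le_add htr j k).trans (add_le_add ?_ ?_)
  · refine Finset.sum_le_sum fun r _ => (rowSumNorm_loopProduct_le D j r _).trans ?_
    gcongr
    exact norm_centringConst_le hL hσ j
  · refine (div_le_div_of_nonneg_right (rowSumNorm_le_card_mul
      (norm_loopCovariance_apply_le hD hL j k) (by positivity)) (by positivity)).trans_eq ?_
    rw [Fintype.card_prod, Nat.cast_mul]
    ring

end MixedMomentBounds

/-! ### Majorants for quadratic convolution recursions -/

section Majorant

lemma sum_range_succ_sum_range_mul_le {f g : ℕ → ℝ} (hf : ∀ k, 0 ≤ f k) (hg : ∀ k, 0 ≤ g k)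
    (K : ℕ) :
    ∑ k ∈ Finset.range (K + 1), ∑ r ∈ Finset.range k, f r * g (k - 1 - r) ≤
      (∑ k ∈ Finset.range K, f k) * ∑ k ∈ Finset.range K, g k := by
  rw [Finset.sum_range_succ', Finset.range_zero, Finset.sum_empty, add_zero]
  simp only [Nat.add_sub_cancel]
  rw [Finset.sum_range_diag_flip K fun r i => f r * g i, Finset.sum_mul]
  refine Finset.sum_le_sum fun r _ => ?_
  rw [← Finset.mul_sum]
  gcongr
  · exact hf r
  · exact fun _ _ _ => hg _
  · exact Nat.sub_le K r

/-- `A` and `H` are self-consistent bounds, at the point `x`, for generating functions `f` and `g`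
with `g ≤ 1 + κ x f` and `f ≤ x (f² + α f g + β g²) + E`. -/
structure IsMajorant (α β κ x E A H : ℝ) : Prop where
  nonneg : 0 ≤ A
  one_add_le : 1 + κ * x * A ≤ H
  add_le : x * (A ^ 2 + α * (A * H) + β * H ^ 2) + E ≤ A

namespace IsMajorant

variable {α β κ x y E A H : ℝ}

lemma one_le (h : IsMajorant α β κ x E A H) (hκ : 0 ≤ κ) (hx : 0 ≤ x) : 1 ≤ H :=
  (le_add_of_nonneg_right (mul_nonneg (mul_nonneg hκ hx) h.nonneg)).trans h.one_add_le

lemma mono (h : IsMajorant α β κ y E A H) (hα : 0 ≤ α) (hβ : 0 ≤ β) (hκ : 0 ≤ κ) (hy : 0 ≤ y)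
    (hxy : x ≤ y) : IsMajorant α β κ x E A H := by
  have hA := h.nonneg
  have hH : 0 ≤ H := zero_le_one.trans (h.one_le hκ hy)
  refine ⟨hA, le_trans ?_ h.one_add_le, le_trans ?_ h.add_le⟩ <;> gcongr

lemma sum_range_succ_le (h : IsMajorant α β κ x E A H) (hα : 0 ≤ α) (hβ : 0 ≤ β) (hκ : 0 ≤ κ)
    (hx : 0 ≤ x) {f g δ : ℕ → ℝ} (hf : ∀ k, 0 ≤ f k) (hg : ∀ k, 0 ≤ g k) {K : ℕ}
    (hrec : ∀ k ≤ K, f k ≤ x * ∑ r ∈ Finset.range k, (f r * f (k - 1 - r) +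
      α * (f r * g (k - 1 - r)) + β * (g r * g (k - 1 - r))) + δ k)
    (hδ : ∑ k ∈ Finset.range (K + 1), δ k ≤ E) (hfA : ∑ k ∈ Finset.range K, f k ≤ A)
    (hgH : ∑ k ∈ Finset.range K, g k ≤ H) : ∑ k ∈ Finset.range (K + 1), f k ≤ A := by
  have hA := h.nonneg
  have hH : 0 ≤ H := zero_le_one.trans (h.one_le hκ hx)
  have hf₀ : 0 ≤ ∑ k ∈ Finset.range K, f k := Finset.sum_nonneg fun _ _ => hf _
  have hg₀ : 0 ≤ ∑ k ∈ Finset.range K, g k := Finset.sum_nonneg fun _ _ => hg _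
  calc ∑ k ∈ Finset.range (K + 1), f k
      ≤ ∑ k ∈ Finset.range (K + 1), (x * ∑ r ∈ Finset.range k, (f r * f (k - 1 - r) +
          α * (f r * g (k - 1 - r)) + β * (g r * g (k - 1 - r))) + δ k) :=
        Finset.sum_le_sum fun k hk => hrec k (Nat.lt_succ_iff.mp (Finset.mem_range.mp hk))
    _ = x * (∑ k ∈ Finset.range (K + 1), ∑ r ∈ Finset.range k, f r * f (k - 1 - r) +
          α * ∑ k ∈ Finset.range (K + 1), ∑ r ∈ Finset.range k, f r * g (k - 1 - r) +
          β * ∑ k ∈ Finset.range (K + 1), ∑ r ∈ Finset.range k, g r * g (k - 1 - r)) +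
        ∑ k ∈ Finset.range (K + 1), δ k := by
      simp only [Finset.sum_add_distrib, ← Finset.mul_sum]
    _ ≤ x * (A * A + α * (A * H) + β * (H * H)) + E := by
      gcongr
      · exact (sum_range_succ_sum_range_mul_le hf hf K).trans (by gcongr)
      · exact (sum_range_succ_sum_range_mul_le hf hg K).trans (by gcongr)
      · exact (sum_range_succ_sum_range_mul_le hg hg K).trans (by gcongr)
    _ ≤ A := by simpa only [sq] using h.add_le

lemma sum_range_le (h : IsMajorant α β κ x E A H) (hα : 0 ≤ α) (hβ : 0 ≤ β) (hκ : 0 ≤ κ)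
    (hx : 0 ≤ x) {f g δ : ℕ → ℝ} {p : ℕ} (hf : ∀ k, 0 ≤ f k) (hg : ∀ k, 0 ≤ g k)
    (hδ : ∀ k, 0 ≤ δ k) (hg_zero : g 0 ≤ 1) (hg_succ : ∀ k < p, g (k + 1) ≤ κ * x * f k)
    (hrec : ∀ k ≤ p, f k ≤ x * ∑ r ∈ Finset.range k, (f r * f (k - 1 - r) +
      α * (f r * g (k - 1 - r)) + β * (g r * g (k - 1 - r))) + δ k)
    (hδE : ∑ k ∈ Finset.range (p + 1), δ k ≤ E) {K : ℕ} (hK : K ≤ p + 1) :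
    ∑ k ∈ Finset.range K, f k ≤ A ∧ ∑ k ∈ Finset.range K, g k ≤ H := by
  induction K with
  | zero => exact ⟨h.nonneg, zero_le_one.trans (h.one_le hκ hx)⟩
  | succ K ih =>
    obtain ⟨ihf, ihg⟩ := ih (by omega)
    refine ⟨h.sum_range_succ_le hα hβ hκ hx hf hg (fun k hk => hrec k (by omega)) ?_ ihf ihg, ?_⟩
    · exact (Finset.sum_le_sum_of_subset_of_nonneg (Finset.range_mono hK) fun k _ _ => hδ k).trans
        hδE
    · calc ∑ k ∈ Finset.range (K + 1), g k
          = g 0 + ∑ k ∈ Finset.range K, g (k + 1) := by rw [Finset.sum_range_succ', add_comm]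
        _ ≤ 1 + ∑ k ∈ Finset.range K, κ * x * f k := by
          gcongr with k hk
          exact hg_succ k (by have := Finset.mem_range.mp hk; omega)
        _ ≤ 1 + κ * x * A := by
          rw [← Finset.mul_sum]
          gcongr
        _ ≤ H := h.one_add_le

lemma mul_pow_le (h : IsMajorant α β κ x E A H) (hα : 0 ≤ α) (hβ : 0 ≤ β) (hκ : 0 ≤ κ)
    (hx : 0 ≤ x) {b M ε : ℕ → ℝ} {p : ℕ} (hb : ∀ k, 0 ≤ b k) (hM : ∀ k, 0 ≤ M k)
    (hε : ∀ k, 0 ≤ ε k) (hM_zero : M 0 ≤ 1) (hM_succ : ∀ k < p, M (k + 1) ≤ κ * b k)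
    (hrec : ∀ k ≤ p, b k ≤ ∑ r ∈ Finset.range k, (b r * b (k - 1 - r) +
      α * (b r * M (k - 1 - r)) + β * (M r * M (k - 1 - r))) + ε k)
    (hεE : ∑ k ∈ Finset.range (p + 1), ε k * x ^ k ≤ E) {k : ℕ} (hk : k ≤ p) :
    M k * x ^ k ≤ H := by
  have hMx (k) : 0 ≤ M k * x ^ k := mul_nonneg (hM k) (pow_nonneg hx k)
  refine (Finset.single_le_sum (f := fun k => M k * x ^ k) (fun k _ => hMx k)
    (Finset.mem_range.mpr (Nat.lt_succ_of_le hk))).trans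
    (h.sum_range_le hα hβ hκ hx (f := fun k => b k * x ^ k)
      (fun k => mul_nonneg (hb k) (pow_nonneg hx k)) hMx
      (fun k => mul_nonneg (hε k) (pow_nonneg hx k)) (by simpa using hM_zero)
      (fun k hk => ?_) (fun k hk => ?_) hεE le_rfl).2
  · calc M (k + 1) * x ^ (k + 1) ≤ κ * b k * x ^ (k + 1) := by
          gcongr
          exact hM_succ k hk
      _ = κ * x * (b k * x ^ k) := by ring
  · refine (mul_le_mul_of_nonneg_right (hrec k hk) (pow_nonneg hx k)).trans_eq ?_
    rw [add_mul, Finset.sum_mul, Finset.mul_sum]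
    refine congrArg (· + _) (Finset.sum_congr rfl fun r hr => ?_)
    have hpow : x ^ k = x * (x ^ r * x ^ (k - 1 - r)) := by
      rw [← pow_add, ← pow_succ',
        show r + (k - 1 - r) + 1 = k by have := Finset.mem_range.mp hr; omega]
    rw [hpow]
    ring

end IsMajorant

section TwoParameters

/-- The least `b` with `a j k ≤ L ^ j * b` for all `j ≤ p - k`. -/
def levelSup (L : ℝ) (p : ℕ) (a : ℕ → ℕ → ℝ) (k : ℕ) : ℝ :=
  ⨆ j : Fin (p - k + 1), a j k / L ^ (j : ℕ)

variable {ν L σ x A H E : ℝ} {p : ℕ} {a : ℕ → ℕ → ℝ} {M ε : ℕ → ℝ}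

lemma levelSup_nonneg (hL : 0 < L) (ha : ∀ j k, 0 ≤ a j k) (k : ℕ) : 0 ≤ levelSup L p a k :=
  Real.iSup_nonneg fun _ => div_nonneg (ha _ _) (pow_nonneg hL.le _)

lemma le_pow_mul_levelSup (hL : 0 < L) {j k : ℕ} (hjk : j + k ≤ p) :
    a j k ≤ L ^ j * levelSup L p a k := by
  have hle := le_ciSup (f := fun j : Fin (p - k + 1) => a j k / L ^ (j : ℕ))
    (Set.finite_range _).bddAbove ⟨j, by omega⟩
  rwa [div_le_iff₀' (pow_pos hL j)] at hle

lemma levelSup_le (hν : 0 ≤ ν) (hL : 0 < L) (ha : ∀ j k, 0 ≤ a j k) (hM : ∀ k, 0 ≤ M k)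
    (hrec : ∀ j k, j + k ≤ p → a j k ≤ ∑ r ∈ Finset.range k,
      (a j r * a 0 (k - 1 - r) + a (j + 1) r * M (k - 1 - r) / ν +
        σ ^ 2 * L ^ j * M r * M (k - 1 - r) / ν ^ 2) + L ^ j * ε k) {k : ℕ} (hk : k ≤ p) :
    levelSup L p a k ≤ ∑ r ∈ Finset.range k, (levelSup L p a r * levelSup L p a (k - 1 - r) +
      L / ν * (levelSup L p a r * M (k - 1 - r)) +
      σ ^ 2 / ν ^ 2 * (M r * M (k - 1 - r))) + ε k := by
  set b := levelSup L p a
  refine ciSup_le fun ⟨j, hj⟩ => ?_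
  rw [div_le_iff₀' (pow_pos hL j), mul_add, Finset.mul_sum]
  refine (hrec j k (by omega)).trans (add_le_add (Finset.sum_le_sum fun r hr => ?_) le_rfl)
  have hr' := Finset.mem_range.mp hr
  have hzero : a 0 (k - 1 - r) ≤ b (k - 1 - r) := by
    simpa using le_pow_mul_levelSup (a := a) hL (show 0 + (k - 1 - r) ≤ p by omega)
  calc _ ≤ L ^ j * b r * b (k - 1 - r) + L ^ (j + 1) * b r * M (k - 1 - r) / ν +
        σ ^ 2 * L ^ j * M r * M (k - 1 - r) / ν ^ 2 := by
        have := levelSup_nonneg (p := p) hL ha r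
        have := ha 0 (k - 1 - r)
        have := hM (k - 1 - r)
        gcongr
        · exact le_pow_mul_levelSup hL (by omega)
        · exact le_pow_mul_levelSup hL (by omega)
    _ = _ := by ring

theorem IsMajorant.mul_pow_le_of_two_parameters
    (h : IsMajorant (L / ν) (σ ^ 2 / ν ^ 2) (ν ^ 2) x E A H) (hν : 0 ≤ ν) (hL : 0 < L) (hx : 0 ≤ x)
    (ha : ∀ j k, 0 ≤ a j k) (hM : ∀ k, 0 ≤ M k) (hε : ∀ k, 0 ≤ ε k) (hM_zero : M 0 ≤ 1)
    (hM_succ : ∀ k, M (k + 1) ≤ ν ^ 2 * a 0 k)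
    (hrec : ∀ j k, j + k ≤ p → a j k ≤ ∑ r ∈ Finset.range k,
      (a j r * a 0 (k - 1 - r) + a (j + 1) r * M (k - 1 - r) / ν +
        σ ^ 2 * L ^ j * M r * M (k - 1 - r) / ν ^ 2) + L ^ j * ε k)
    (hεE : ∑ k ∈ Finset.range (p + 1), ε k * x ^ k ≤ E) {k : ℕ} (hk : k ≤ p) :
    M k * x ^ k ≤ H := by
  refine h.mul_pow_le (by positivity) (by positivity) (by positivity) hx (levelSup_nonneg hL ha)
    hM hε hM_zero (fun k hk => ?_) (fun k hk => levelSup_le hν hL ha hM hrec hk) hεE hk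
  calc M (k + 1) ≤ ν ^ 2 * a 0 k := hM_succ k
    _ ≤ ν ^ 2 * levelSup L p a k := by
      gcongr
      simpa using le_pow_mul_levelSup (a := a) hL (show 0 + k ≤ p by omega)

end TwoParameters

/-- Both inequalities are equalities: with `H = c / (c - ν * w)` and `A = w * H / ν` the second one
becomes quadratic in `w`. -/
lemma isMajorant_inv {ν L σ c w : ℝ} (hν : 0 < ν) (hc : 0 < c) (hw : 0 < w)
    (hνw : ν * w < c) :
    IsMajorant (L / ν) (σ ^ 2 / ν ^ 2) (ν ^ 2) c⁻¹
      ((w * (ν * c - ν ^ 2 * w) - (w ^ 2 + L * w + σ ^ 2)) * (c / (ν ^ 2 * (c - ν * w) ^ 2)))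
      (w * (c / (c - ν * w)) / ν) (c / (c - ν * w)) := by
  obtain ⟨u, rfl⟩ : ∃ u, c = ν * w + u := ⟨c - ν * w, by ring⟩
  have hu : 0 < u := pos_of_lt_add_right hνw
  simp only [add_sub_cancel_left]
  refine ⟨by positivity, le_of_eq ?_, le_of_eq ?_⟩ <;> field_simp <;> ring

lemma exists_isMajorant {ν L σ c : ℝ} (hν : 0 < ν) (hL : 0 ≤ L) (hσ : 0 < σ)
    (hc : L + 2 * σ * (ν + 1) < ν * c) :
    ∃ E A H, 0 < E ∧ IsMajorant (L / ν) (σ ^ 2 / ν ^ 2) (ν ^ 2) c⁻¹ E A H := by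
  have hc₀ : 0 < c := (mul_pos_iff_of_pos_left hν).mp (lt_trans (by positivity) hc)
  obtain ⟨w, hw, rfl⟩ : ∃ w, 0 < w ∧ w * (ν + 1) = σ :=
    ⟨σ / (ν + 1), by positivity, by field_simp⟩
  have hquad : w ^ 2 + L * w + (w * (ν + 1)) ^ 2 < w * (ν * c - ν ^ 2 * w) := by
    have := mul_lt_mul_of_pos_left hc hw
    nlinarith [mul_pos (mul_pos hw hw) hν]
  have hνw : ν * w < c := by
    have hpos : 0 < w * ν * (c - ν * w) := lt_of_lt_of_eq (lt_trans (by positivity) hquad) (by ring)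
    exact sub_pos.mp ((mul_pos_iff_of_pos_left (by positivity)).mp hpos)
  exact ⟨_, _, _, mul_pos (sub_pos.mpr hquad) (div_pos hc₀ (mul_pos (by positivity)
    (pow_pos (sub_pos.mpr hνw) 2))), isMajorant_inv hν hc₀ hw hνw⟩

end Majorant

/-! ### Moments of the partial transpose -/

section MomentBootstrap

open scoped Matrix.Norms.L2Operator

lemma frobeniusSq_pow_two_mul_le {ι : Type*} [Fintype ι] [DecidableEq ι] {Y : Matrix ι ι ℂ}
    (hY : Y.IsHermitian) (q : ℕ) : frobeniusSq (Y ^ (2 * q)) ≤ frobeniusSq (Y ^ q) ^ 2 := by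
  rw [frobeniusSq_pow_eq_sum hY, frobeniusSq_pow_eq_sum hY]
  simp only [show 2 * (2 * q) = 2 * q * 2 by ring, pow_mul _ (2 * q) 2]
  exact Finset.sum_sq_le_sq_sum_of_nonneg fun i _ => (even_two_mul q).pow_nonneg _

lemma integral_haarUnitary_sq {ι : Type*} [Fintype ι] [DecidableEq ι]
    {F : unitaryGroup ι ℂ → ℝ} (hF : Continuous F) :
    ∫ V, F V ^ 2 ∂haarUnitary ι = (∫ V, F V ∂haarUnitary ι) ^ 2 +
      ∫ V, (F V - ∫ W, F W ∂haarUnitary ι) ^ 2 ∂haarUnitary ι := by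
  have hLp : MemLp F 2 (haarUnitary ι) :=
    hF.memLp_of_hasCompactSupport (HasCompactSupport.of_compactSpace F)
  rw [← ProbabilityTheory.variance_eq_integral hLp.aemeasurable,
    ProbabilityTheory.variance_eq_sub hLp]
  exact (add_sub_cancel _ _).symm

variable {α β : Type*} [Fintype α] [Fintype β] [DecidableEq α] [DecidableEq β]
  {D : BlockMatrix α β ℂ}

/-- The factor by which the variance proxy of degree at most `2 * q` can exceed the corresponding
moment bound, when the moments grow like powers of `ρ ^ 2`. -/
def varianceFactor (L : ℝ) (q : ℕ) (ρ : ℝ) : ℝ := 1 + 2 * (2 * q) ^ 2 * L ^ 2 / ρ ^ 2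

lemma varianceFactor_pos (L : ℝ) (q : ℕ) (ρ : ℝ) : 0 < varianceFactor L q ρ := by
  rw [varianceFactor]
  positivity

lemma varianceFactor_anti (L : ℝ) (q : ℕ) {c ρ : ℝ} (hc : 0 < c) (hcρ : c ≤ ρ) :
    varianceFactor L q ρ ≤ varianceFactor L q c := by
  rw [varianceFactor, varianceFactor]
  gcongr

lemma varianceProxy_le {L ρ m : ℝ} (hρ : 0 < ρ) {q r : ℕ} (hr : r ≤ 2 * q)
    (hmom : ∀ l ≤ 2 * q, evenMoment D l ≤ ρ ^ (2 * l) * m) :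
    varianceProxy D L r ≤ ρ ^ (2 * r) * (m * varianceFactor L q ρ) := by
  have hm : 0 ≤ m := by simpa using (evenMoment_nonneg D 0).trans (hmom 0 (by omega))
  have hgrad : 2 * (r : ℝ) ^ 2 * L ^ 2 * evenMoment D (r - 1) ≤
      ρ ^ (2 * r) * m * (2 * (2 * q) ^ 2 * L ^ 2 / ρ ^ 2) := by
    rcases r with _ | r
    · rw [Nat.cast_zero, zero_pow two_ne_zero, mul_zero, zero_mul, zero_mul]
      positivity
    · have hrq : ((r + 1 : ℕ) : ℝ) ≤ 2 * q := mod_cast hr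
      calc _ ≤ 2 * (2 * q : ℝ) ^ 2 * L ^ 2 * (ρ ^ (2 * r) * m) := by
            gcongr
            · exact evenMoment_nonneg D _
            · exact hmom r (by omega)
        _ = _ := by
            rw [mul_add_one 2 r, pow_add]
            field_simp
  rw [varianceProxy, varianceFactor]
  linarith [hmom r hr]

lemma sum_sqrt_varianceProxy_le {L ρ m : ℝ} (hρ : 0 < ρ) (hm : 0 ≤ m) {q k : ℕ} (hk : k ≤ 2 * q)
    (hvar : ∀ r ≤ 2 * q, varianceProxy D L r ≤ ρ ^ (2 * r) * m) :
    ∑ r ∈ Finset.range k, √(varianceProxy D L r) * √(varianceProxy D L (k - 1 - r)) ≤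
      2 * q * (ρ ^ k / ρ * m) := by
  have hsqrt (r) (hr : r ≤ 2 * q) : √(varianceProxy D L r) ≤ ρ ^ r * √m := by
    refine (Real.sqrt_le_sqrt (hvar r hr)).trans_eq ?_
    rw [Real.sqrt_mul (by positivity), mul_comm 2 r, pow_mul, Real.sqrt_sq (by positivity)]
  have hterm (r) (hr : r ∈ Finset.range k) :
      √(varianceProxy D L r) * √(varianceProxy D L (k - 1 - r)) ≤ ρ ^ k / ρ * m := by
    have hrk := Finset.mem_range.mp hr
    have hpow : ρ ^ k / ρ = ρ ^ r * ρ ^ (k - 1 - r) := by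
      rw [div_eq_iff hρ.ne', ← pow_add, ← pow_succ,
        show r + (k - 1 - r) + 1 = k by omega]
    calc _ ≤ ρ ^ r * √m * (ρ ^ (k - 1 - r) * √m) := by
          gcongr
          · exact hsqrt r (by omega)
          · exact hsqrt _ (by omega)
      _ = _ := by rw [hpow, mul_mul_mul_comm, Real.mul_self_sqrt hm]
  calc _ ≤ k * (ρ ^ k / ρ * m) := by simpa using Finset.sum_le_sum hterm
    _ ≤ _ := by
        gcongr
        exact_mod_cast hk

/-- The total error of the loop equations up to order `2 * q`, relative to powers of `ρ`, when there
are `ν ^ 2` blocks and the matrices have size `N`. -/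
def loopError (ν N L : ℝ) (q : ℕ) (ρ : ℝ) : ℝ :=
  128 * ν ^ 4 * (2 * q + 1) * (2 * q) * L ^ 2 * varianceFactor L q ρ / (N * ρ)

variable [Nonempty α] [Nonempty β]

lemma integral_frobeniusSq_partialTranspose_pow (k : ℕ) :
    ∫ V, frobeniusSq (partialTranspose (unitaryConj D V) ^ k) ∂haarUnitary (α × β) =
      Fintype.card (α × β) * evenMoment D k :=
  (mul_div_cancel₀ _ (Nat.cast_ne_zero.mpr Fintype.card_ne_zero)).symm

lemma evenMoment_le_interpolation (hD : D.IsHermitian) {ρ : ℝ} (hρ : 0 < ρ) {k p : ℕ}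
    (hk : k ≤ p) :
    evenMoment D k ≤ ρ ^ (2 * k) * (1 + evenMoment D p / ρ ^ (2 * p)) := by
  have hN : (0 : ℝ) < Fintype.card (α × β) := Nat.cast_pos.mpr Fintype.card_pos
  refine le_of_mul_le_mul_left ?_ hN
  calc Fintype.card (α × β) * evenMoment D k
      = ∫ V, frobeniusSq (partialTranspose (unitaryConj D V) ^ k) ∂haarUnitary (α × β) :=
        (integral_frobeniusSq_partialTranspose_pow k).symm
    _ ≤ ∫ V, ρ ^ (2 * k) * (Fintype.card (α × β) +
          frobeniusSq (partialTranspose (unitaryConj D V) ^ p) / ρ ^ (2 * p))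
            ∂haarUnitary (α × β) :=
        integral_mono (integrable_haarUnitary (by fun_prop)) (integrable_haarUnitary (by fun_prop))
          fun V => frobeniusSq_pow_le (isHermitian_partialTranspose (isHermitian_unitaryConj hD V))
            hρ hk
    _ = _ := by
        rw [integral_const_mul, integral_add (integrable_const _)
          (integrable_haarUnitary (by fun_prop)), integral_div,
          integral_frobeniusSq_partialTranspose_pow, integral_const, probReal_univ, one_smul]
        ring

/-- Concentration of `Tr Y ^ (2 * q)` around its mean bounds the moment of order `4 * q`. -/
lemma card_mul_evenMoment_two_mul_le (hD : D.IsHermitian) {L : ℝ} (hL : ‖D‖ ≤ L) (q : ℕ) :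
    Fintype.card (α × β) * evenMoment D (2 * q) ≤
      (Fintype.card (α × β) * evenMoment D q) ^ 2 + 16 * varianceProxy D L (2 * q) := by
  set F : unitaryGroup (α × β) ℂ → ℝ := fun V =>
    frobeniusSq (partialTranspose (unitaryConj D V) ^ q) with hF
  have hherm (V) := isHermitian_partialTranspose (isHermitian_unitaryConj hD V)
  have hFcont : Continuous F := by fun_prop
  have heval (V) : evalAt (unitaryConj D V) (mixedTrace 1 1 (2 * q) 1) = (F V : ℂ) := by
    rw [evalAt_mixedTrace, map_one, one_mul, one_mul, mul_one, hF,
      frobeniusSq_pow_eq_trace (hherm V)]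
  have hmean : orbitExpectation D (mixedTrace 1 1 (2 * q) 1) =
      ((∫ V, F V ∂haarUnitary (α × β) : ℝ) : ℂ) := by
    rw [orbitExpectation_apply, ← integral_complex_ofReal]
    exact integral_congr_ae (.of_forall heval)
  have hvar := integral_norm_mixedTrace_sub_sq_le (α := α) (β := β) (one_mem _) (B := 1) (B' := 1)
    (2 * q) norm_one.le norm_one.le hD hL (b := 1) fun V => by rw [map_one]; exact norm_one.le
  simp only [hmean, heval, ← Complex.ofReal_sub, Complex.norm_real, Real.norm_eq_abs,
    sq_abs] at hvar
  calc Fintype.card (α × β) * evenMoment D (2 * q)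
      = ∫ V, frobeniusSq (partialTranspose (unitaryConj D V) ^ (2 * q)) ∂haarUnitary (α × β) :=
        (integral_frobeniusSq_partialTranspose_pow _).symm
    _ ≤ ∫ V, F V ^ 2 ∂haarUnitary (α × β) :=
        integral_mono (integrable_haarUnitary (by fun_prop)) (integrable_haarUnitary (by fun_prop))
          fun V => frobeniusSq_pow_two_mul_le (hherm V) q
    _ = _ := integral_haarUnitary_sq hFcont
    _ ≤ _ := by
        rw [integral_frobeniusSq_partialTranspose_pow] at hvar ⊢
        rw [varianceProxy]
        linarith

variable {L ρ : ℝ} {q : ℕ}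

lemma evenMoment_two_mul_div_le (hD : D.IsHermitian) (hL : ‖D‖ ≤ L) (hρ : 0 < ρ)
    (hmom : evenMoment D q = ρ ^ (2 * q))
    (hN : 32 * varianceFactor L q ρ ≤ Fintype.card (α × β)) :
    evenMoment D (2 * q) / ρ ^ (2 * (2 * q)) ≤ 2 * Fintype.card (α × β) + 1 := by
  set N : ℝ := (Fintype.card (α × β) : ℝ)
  set t := evenMoment D (2 * q) / ρ ^ (2 * (2 * q)) with ht
  set R := ρ ^ (2 * (2 * q)) with hR
  have hN₀ : 0 < N := Nat.cast_pos.mpr Fintype.card_pos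
  have hR₀ : 0 < R := by positivity
  have ht₀ : 0 ≤ t := div_nonneg (evenMoment_nonneg _ _) hR₀.le
  have hconc : N * evenMoment D (2 * q) ≤ (N * evenMoment D q) ^ 2 +
      16 * varianceProxy D L (2 * q) := card_mul_evenMoment_two_mul_le hD hL q
  have hvar : varianceProxy D L (2 * q) ≤ R * ((1 + t) * varianceFactor L q ρ) :=
    varianceProxy_le hρ le_rfl fun l hl => evenMoment_le_interpolation hD hρ hl
  have hmul : R * (N * t) ≤ R * (N ^ 2 + N / 2 * (1 + t)) :=
    calc R * (N * t) = N * evenMoment D (2 * q) := by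
          rw [ht]
          field_simp
      _ ≤ (N * ρ ^ (2 * q)) ^ 2 + 16 * (R * ((1 + t) * varianceFactor L q ρ)) := by
          rw [← hmom]
          linarith
      _ = R * (N ^ 2 + (32 * varianceFactor L q ρ) / 2 * (1 + t)) := by
          rw [hR, mul_pow, ← pow_mul, show 2 * q * 2 = 2 * (2 * q) by ring]
          ring
      _ ≤ R * (N ^ 2 + N / 2 * (1 + t)) := by gcongr
  have hle : N * t ≤ N * (2 * N + 1) := by linarith [le_of_mul_le_mul_left hmul hR₀]
  exact le_of_mul_le_mul_left hle hN₀

lemma evenMoment_le_of_eq_pow (hD : D.IsHermitian) (hL : ‖D‖ ≤ L) (hρ : 0 < ρ)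
    (hmom : evenMoment D q = ρ ^ (2 * q))
    (hN : 32 * varianceFactor L q ρ ≤ Fintype.card (α × β)) {l : ℕ} (hl : l ≤ 2 * q) :
    evenMoment D l ≤ ρ ^ (2 * l) * (4 * Fintype.card (α × β)) := by
  have hcard : (1 : ℝ) ≤ Fintype.card (α × β) := mod_cast Fintype.card_pos
  refine (evenMoment_le_interpolation hD hρ hl).trans ?_
  gcongr
  linarith [evenMoment_two_mul_div_le hD hL hρ hmom hN]

lemma loopCovariance_bound_le (hD : D.IsHermitian) (hL : ‖D‖ ≤ L) (hρ : 0 < ρ)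
    (hmom : evenMoment D q = ρ ^ (2 * q))
    (hN : 32 * varianceFactor L q ρ ≤ Fintype.card (α × β)) {j k : ℕ} (hjk : j + k ≤ 2 * q) :
    32 * (Fintype.card α : ℝ) ^ 4 * (j + 1) * L ^ (j + 2) / (Fintype.card (α × β) : ℝ) ^ 2 *
      ∑ r ∈ Finset.range k, √(varianceProxy D L r) * √(varianceProxy D L (k - 1 - r)) ≤
      L ^ j * (loopError (Fintype.card α) (Fintype.card (α × β)) L q ρ * ρ ^ k) := by
  have hL₀ : 0 ≤ L := (norm_nonneg _).trans hL
  have hfac := varianceFactor_pos L q ρ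
  have hj : (j : ℝ) ≤ 2 * q := by exact_mod_cast (by omega : j ≤ 2 * q)
  have hcard : (Fintype.card (α × β) : ℝ) ≠ 0 := Nat.cast_ne_zero.mpr Fintype.card_ne_zero
  have hsum := sum_sqrt_varianceProxy_le (D := D) (L := L) hρ (by positivity)
    (by omega : k ≤ 2 * q) fun r hr =>
    varianceProxy_le hρ hr fun l hl => evenMoment_le_of_eq_pow hD hL hρ hmom hN hl
  calc _ ≤ 32 * (Fintype.card α : ℝ) ^ 4 * (2 * q + 1) * L ^ (j + 2) /
        (Fintype.card (α × β) : ℝ) ^ 2 *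
        (2 * q * (ρ ^ k / ρ * (4 * Fintype.card (α × β) * varianceFactor L q ρ))) := by gcongr
    _ = _ := by
        rw [loopError]
        field_simp
        ring

lemma pow_le_of_evenMoment_eq (hD : D.IsHermitian) (htr : D.trace = 0) (hL : ‖D‖ ≤ L) (hL₀ : 0 < L)
    {σ γ E A H : ℝ} (hσ : frobeniusSq D ≤ Fintype.card (α × β) * σ ^ 2) (hγ : 1 ≤ γ) (hρ : 0 < ρ)
    (hmom : evenMoment D q = ρ ^ (2 * q))
    (hmaj : IsMajorant (L / Fintype.card α) (σ ^ 2 / (Fintype.card α : ℝ) ^ 2)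
      ((Fintype.card α : ℝ) ^ 2) (γ / ρ) E A H)
    (hN : 32 * varianceFactor L q ρ ≤ Fintype.card (α × β))
    (herr : (2 * q + 1) * loopError (Fintype.card α) (Fintype.card (α × β)) L q ρ * γ ^ (2 * q) ≤
      E) :
    γ ^ (2 * q) ≤ H := by
  set W := loopError (Fintype.card α) (Fintype.card (α × β)) L q ρ with hW
  have hW₀ : 0 ≤ W := by
    have := varianceFactor_pos L q ρ
    rw [hW, loopError]
    positivity
  have hzero : ‖partialTransposeMoment D 0‖ ≤ 1 := by rw [partialTransposeMoment_zero, norm_one]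
  have hsum : ∑ k ∈ Finset.range (2 * q + 1), W * ρ ^ k * (γ / ρ) ^ k ≤ E :=
    calc _ ≤ ∑ _k ∈ Finset.range (2 * q + 1), W * γ ^ (2 * q) := by
          refine Finset.sum_le_sum fun _ hk => ?_
          rw [mul_assoc, ← mul_pow, mul_div_cancel₀ _ hρ.ne']
          have := Nat.lt_succ_iff.mp (Finset.mem_range.mp hk)
          gcongr
      _ = (2 * q + 1) * W * γ ^ (2 * q) := by
          rw [Finset.sum_const, Finset.card_range, nsmul_eq_mul]
          push_cast
          ring
      _ ≤ E := herr
  have hbound : ‖partialTransposeMoment D (2 * q)‖ * (γ / ρ) ^ (2 * q) ≤ H :=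
    hmaj.mul_pow_le_of_two_parameters (ε := fun k => W * ρ ^ k) (by positivity) hL₀
      (by positivity) (fun _ _ => rowSumNorm_nonneg _) (fun _ => norm_nonneg _)
      (fun _ => by positivity) hzero (norm_partialTransposeMoment_succ_le D)
      (fun j k hjk => (rowSumNorm_mixedMoment_le hD htr hL hσ j k).trans
        (add_le_add le_rfl (loopCovariance_bound_le hD hL hρ hmom hN hjk))) hsum le_rfl
  rwa [partialTransposeMoment_two_mul hD, Complex.norm_real,
    Real.norm_of_nonneg (evenMoment_nonneg _ _), hmom, ← mul_pow, mul_div_cancel₀ _ hρ.ne']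
    at hbound

/-- If the moment exceeded the bound, it would control the error of the loop equations well enough
for the majorant to apply at its own scale, which is a contradiction. -/
theorem evenMoment_le_of_isMajorant (hD : D.IsHermitian) (htr : D.trace = 0) (hL : ‖D‖ ≤ L)
    (hL₀ : 0 < L) {σ c γ E A H : ℝ} (hσ : frobeniusSq D ≤ Fintype.card (α × β) * σ ^ 2)
    (hc : 0 < c) (hγ : 1 ≤ γ)
    (hmaj : IsMajorant (L / Fintype.card α) (σ ^ 2 / (Fintype.card α : ℝ) ^ 2)
      ((Fintype.card α : ℝ) ^ 2) c⁻¹ E A H) (hq : q ≠ 0)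
    (hN : 32 * varianceFactor L q c ≤ Fintype.card (α × β))
    (herr : (2 * q + 1) * loopError (Fintype.card α) (Fintype.card (α × β)) L q c * γ ^ (2 * q) ≤
      E) (hH : H < γ ^ (2 * q)) :
    evenMoment D q ≤ (c * γ) ^ (2 * q) := by
  by_contra! hlt
  obtain ⟨ρ, hρ₀, hρ⟩ : ∃ ρ, 0 ≤ ρ ∧ ρ ^ (2 * q) = evenMoment D q :=
    ⟨_, Real.rpow_nonneg (evenMoment_nonneg _ _) _,
      Real.rpow_inv_natCast_pow (evenMoment_nonneg _ _) (by omega)⟩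
  have hcγρ : c * γ < ρ := lt_of_pow_lt_pow_left₀ _ hρ₀ (hρ ▸ hlt)
  have hcρ : c ≤ ρ := (le_mul_of_one_le_right hc.le hγ).trans hcγρ.le
  have hρ₀ : 0 < ρ := hc.trans_le hcρ
  have hscale : γ / ρ ≤ c⁻¹ := by
    rw [div_le_iff₀ hρ₀, ← div_eq_inv_mul, le_div_iff₀' hc]
    exact hcγρ.le
  have hfac := varianceFactor_anti L q hc hcρ
  refine hH.not_ge (pow_le_of_evenMoment_eq hD htr hL hL₀ hσ hγ hρ₀ hρ.symm
    (hmaj.mono (by positivity) (by positivity) (by positivity) (by positivity) hscale)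
    (le_trans (by gcongr) hN) (le_trans ?_ herr))
  have := varianceFactor_pos L q c
  rw [loopError, loopError]
  gcongr

end MomentBootstrap

section MomentBound

open scoped Matrix.Norms.L2Operator

lemma eventually_exists_pow_bounds {γ η : ℝ} (hγ : 1 < γ) (hη : 0 < η) (H : ℝ) :
    ∀ᶠ N : ℝ in atTop, ∃ q : ℕ, q ≠ 0 ∧ H < γ ^ (2 * q) ∧ N ≤ γ ^ (4 * q) ∧
      q ^ 5 * γ ^ (2 * q) ≤ η * N := by
  have : 0 < γ := one_pos.trans hγ
  have hγ₂ : 1 < γ ^ 2 := one_lt_pow₀ hγ two_ne_zero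
  have hγ₄ : 1 < γ ^ 4 := one_lt_pow₀ hγ four_ne_zero
  have hsmall : ∀ᶠ q : ℕ in atTop, (q : ℝ) ^ 5 * ((γ ^ 2)⁻¹) ^ q < η / γ ^ 4 := by
    refine (tendsto_pow_const_mul_const_pow_of_abs_lt_one 5 ?_).eventually_lt_const (by positivity)
    rw [abs_of_pos (by positivity)]
    exact inv_lt_one_of_one_lt₀ hγ₂
  have hlarge := (tendsto_pow_atTop_atTop_of_one_lt hγ₂).eventually_gt_atTop H
  obtain ⟨Q, hQ⟩ := eventually_atTop.mp (hsmall.and hlarge)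
  filter_upwards [eventually_gt_atTop ((γ ^ 4) ^ Q), eventually_ge_atTop 1] with N hN hN₁
  obtain ⟨p, hpN, hNp⟩ := exists_nat_pow_near hN₁ hγ₄
  obtain ⟨hq₅, hq₂⟩ := hQ (p + 1) ((pow_lt_pow_iff_right₀ hγ₄).mp (hN.trans hNp)).le
  refine ⟨p + 1, p.succ_ne_zero, ?_, ?_, ?_⟩
  · rwa [pow_mul]
  · rw [pow_mul]
    exact hNp.le
  · calc ((p + 1 : ℕ) : ℝ) ^ 5 * γ ^ (2 * (p + 1))
        = ((p + 1 : ℕ) : ℝ) ^ 5 * ((γ ^ 2)⁻¹) ^ (p + 1) * γ ^ 4 * (γ ^ 4) ^ p := by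
          rw [inv_pow, mul_assoc, mul_assoc, ← pow_succ' (γ ^ 4), pow_mul,
            show (γ ^ 4) ^ (p + 1) = (γ ^ 2) ^ (p + 1) * (γ ^ 2) ^ (p + 1) by ring,
            inv_mul_cancel_left₀ (by positivity)]
      _ ≤ η / γ ^ 4 * γ ^ 4 * N := by gcongr
      _ = η * N := by field_simp

lemma varianceFactor_le {L c : ℝ} {q : ℕ} (hq : q ≠ 0) :
    varianceFactor L q c ≤ (1 + 8 * L ^ 2 / c ^ 2) * q ^ 2 := by
  have hq₁ : (1 : ℝ) ≤ q := Nat.one_le_cast.mpr (Nat.one_le_iff_ne_zero.mpr hq)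
  calc _ = 1 + 8 * L ^ 2 / c ^ 2 * q ^ 2 := by
        rw [varianceFactor]
        ring
    _ ≤ _ := by
        rw [add_mul, one_mul]
        gcongr
        exact one_le_pow₀ hq₁

lemma mul_loopError_le {ν N L c : ℝ} (hN : 0 < N) (hc : 0 < c) {q : ℕ} (hq : q ≠ 0) :
    (2 * q + 1) * loopError ν N L q c ≤
      2304 * ν ^ 4 * L ^ 2 * (1 + 8 * L ^ 2 / c ^ 2) / c * (q ^ 5 / N) := by
  have hq₁ : (1 : ℝ) ≤ q := Nat.one_le_cast.mpr (Nat.one_le_iff_ne_zero.mpr hq)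
  calc _ ≤ (3 * q) * (128 * ν ^ 4 * (3 * q) * (2 * q) * L ^ 2 *
        ((1 + 8 * L ^ 2 / c ^ 2) * q ^ 2) / (N * c)) := by
        rw [loopError]
        have := varianceFactor_pos L q c
        gcongr
        · linarith
        · linarith
        · exact varianceFactor_le hq
    _ = _ := by
        field_simp
        ring

/-- Moments of order `q` proportional to `log N` are large enough to absorb polynomial factors and
small enough for the error terms to stay bounded. -/
lemma eventually_exists_moment_order (ν L : ℝ) {c γ E : ℝ} (hc : 0 < c) (hγ : 1 < γ) (hE : 0 < E)
    (H : ℝ) :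
    ∀ᶠ N : ℝ in atTop, ∃ q : ℕ, q ≠ 0 ∧ H < γ ^ (2 * q) ∧ N ≤ γ ^ (4 * q) ∧
      32 * varianceFactor L q c ≤ N ∧
      (2 * q + 1) * loopError ν N L q c * γ ^ (2 * q) ≤ E := by
  set T := 1 + 8 * L ^ 2 / c ^ 2
  set K := 2304 * ν ^ 4 * L ^ 2 * T / c
  have hT₀ : 0 < T := by positivity
  have hK₀ : 0 ≤ K := by positivity
  have hη : 0 < min (1 / (32 * T)) (E / (K + 1)) := by positivity
  filter_upwards [eventually_exists_pow_bounds hγ hη H, eventually_gt_atTop 0] with N hN hN₀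
  obtain ⟨q, hq, hH, hNq, hq₅⟩ := hN
  have hq₁ : (1 : ℝ) ≤ q := Nat.one_le_cast.mpr (Nat.one_le_iff_ne_zero.mpr hq)
  have : 0 < γ := one_pos.trans hγ
  refine ⟨q, hq, hH, hNq, ?_, ?_⟩
  · calc _ ≤ 32 * (T * q ^ 2) := by
          gcongr
          exact varianceFactor_le hq
      _ ≤ 32 * (T * (q ^ 5 * γ ^ (2 * q))) := by
          gcongr
          calc (q : ℝ) ^ 2 ≤ q ^ 5 := pow_le_pow_right₀ hq₁ (by norm_num)
            _ ≤ _ := le_mul_of_one_le_right (by positivity) (one_le_pow₀ hγ.le)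
      _ ≤ 32 * (T * (1 / (32 * T) * N)) := by
          refine mul_le_mul_of_nonneg_left (mul_le_mul_of_nonneg_left (hq₅.trans ?_) hT₀.le)
            (by norm_num)
          gcongr
          exact min_le_left _ _
      _ = N := by field_simp
  · calc _ ≤ K * (q ^ 5 / N) * γ ^ (2 * q) :=
          mul_le_mul_of_nonneg_right (mul_loopError_le hN₀ hc hq) (by positivity)
      _ = K / N * (q ^ 5 * γ ^ (2 * q)) := by ring
      _ ≤ K / N * (E / (K + 1) * N) := by
          refine mul_le_mul_of_nonneg_left (hq₅.trans ?_) (by positivity)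
          gcongr
          exact min_le_right _ _
      _ = K / (K + 1) * E := by field_simp
      _ ≤ E := mul_le_of_le_one_left hE.le (div_le_one_of_le₀ (by linarith) (by positivity))

lemma exists_scale_separation {ν a c : ℝ} (hν : 0 < ν) (ha : 0 < a) (h : a < ν * c) :
    ∃ c₁ γ, 0 < c₁ ∧ 1 < γ ∧ a < ν * c₁ ∧ c₁ * γ ^ 7 = c := by
  obtain ⟨c₁, hac₁, hc₁c⟩ := exists_between ((div_lt_iff₀' hν).mpr h)
  have hc₁ : 0 < c₁ := (div_pos ha hν).trans hac₁
  have hc : 0 < c := hc₁.trans hc₁c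
  refine ⟨c₁, (c / c₁) ^ (((7 : ℕ) : ℝ)⁻¹), hc₁,
    Real.one_lt_rpow ((one_lt_div hc₁).mpr hc₁c) (by norm_num), (div_lt_iff₀' hν).mp hac₁, ?_⟩
  rw [Real.rpow_inv_natCast_pow (by positivity) (by norm_num), mul_div_cancel₀ _ hc₁.ne']

theorem eventually_exists_moment_bound {α : Type*} [Fintype α] [DecidableEq α] [Nonempty α]
    {L σ c : ℝ} (hL : 0 < L) (hσ : 0 < σ)
    (hc : L + 2 * σ * (Fintype.card α + 1) < Fintype.card α * c) :
    ∀ᶠ d : ℕ in atTop, ∃ q : ℕ, ∀ D : BlockMatrix α (Fin d) ℂ,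
      D.IsHermitian → D.trace = 0 → ‖D‖ ≤ L →
      frobeniusSq D ≤ Fintype.card (α × Fin d) * σ ^ 2 →
      ∫ V, frobeniusSq (partialTranspose (unitaryConj D V) ^ q) ∂haarUnitary (α × Fin d) ≤
        c ^ (2 * q) * (1 / (Fintype.card (α × Fin d) : ℝ) ^ 2) := by
  have hν : (0 : ℝ) < Fintype.card α := Nat.cast_pos.mpr Fintype.card_pos
  obtain ⟨c₁, γ, hc₁, hγ, hlt, rfl⟩ := exists_scale_separation hν (by positivity) hc
  obtain ⟨E, A, H, hE, hmaj⟩ := exists_isMajorant hν hL.le hσ hlt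
  have hcard : Tendsto (fun d : ℕ => (Fintype.card (α × Fin d) : ℝ)) atTop atTop := by
    simp only [Fintype.card_prod, Fintype.card_fin, Nat.cast_mul]
    exact tendsto_natCast_atTop_atTop.const_mul_atTop hν
  filter_upwards [hcard.eventually
    (eventually_exists_moment_order (Fintype.card α) L hc₁ hγ hE H), eventually_gt_atTop 0]
    with d hd hd₀
  obtain ⟨q, hq, hH, hNq, hfac, herr⟩ := hd
  have : Nonempty (Fin d) := ⟨⟨0, hd₀⟩⟩
  refine ⟨q, fun D hD htr hDL hDσ => ?_⟩
  have hmom := evenMoment_le_of_isMajorant hD htr hDL hL hDσ hc₁ hγ.le hmaj hq hfac herr hH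
  have : 0 < γ := one_pos.trans hγ
  set N : ℝ := (Fintype.card (α × Fin d) : ℝ) with hN
  have : 0 < N := Nat.cast_pos.mpr Fintype.card_pos
  rw [integral_frobeniusSq_partialTranspose_pow, mul_one_div, le_div_iff₀ (by positivity), ← hN]
  calc N * evenMoment D q * N ^ 2
      ≤ N * (c₁ * γ) ^ (2 * q) * N ^ 2 := by gcongr
    _ = (c₁ * γ) ^ (2 * q) * N ^ 3 := by ring
    _ ≤ (c₁ * γ) ^ (2 * q) * (γ ^ (4 * q)) ^ 3 := by gcongr
    _ = (c₁ * γ ^ 7) ^ (2 * q) := by ring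

end MomentBound

/-! ### Unitarily invariant laws -/

section UnitarilyInvariantLaws

open scoped Matrix.Norms.L2Operator

section

variable {ι : Type*} [Fintype ι] [DecidableEq ι]

lemma norm_trace_le (M : Matrix ι ι ℂ) : ‖M.trace‖ ≤ Fintype.card ι * ‖M‖ := by
  refine le_of_sq_le_sq ?_ (by positivity)
  calc _ ≤ frobeniusSq M * frobeniusSq (1 : Matrix ι ι ℂ) := by
        simpa only [mul_one] using norm_trace_mul_sq_le M 1
    _ ≤ Fintype.card ι * ‖M‖ ^ 2 * Fintype.card ι := by
        rw [frobeniusSq_one]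
        gcongr
        exact frobeniusSq_le_card_mul_sq le_rfl
    _ = (Fintype.card ι * ‖M‖) ^ 2 := by ring

lemma norm_tracelessPart_le [Nonempty ι] (M : Matrix ι ι ℂ) (z : ℂ) :
    ‖tracelessPart M‖ ≤ 2 * ‖M - z • (1 : Matrix ι ι ℂ)‖ := by
  have hN : (0 : ℝ) < Fintype.card ι := Nat.cast_pos.mpr Fintype.card_pos
  set W := M - z • (1 : Matrix ι ι ℂ) with hW
  have hshift : tracelessPart M = W - (W.trace / (Fintype.card ι : ℂ)) • (1 : Matrix ι ι ℂ) := by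
    rw [tracelessPart, hW, trace_sub, trace_smul, trace_one, smul_eq_mul, sub_div,
      mul_div_cancel_right₀ _ (Nat.cast_ne_zero.mpr Fintype.card_ne_zero), sub_smul]
    abel
  calc _ ≤ ‖W‖ + ‖W.trace / (Fintype.card ι : ℂ)‖ * ‖(1 : Matrix ι ι ℂ)‖ := by
        rw [hshift, ← norm_smul]
        exact norm_sub_le _ _
    _ = ‖W‖ + ‖W.trace‖ / Fintype.card ι := by
        rw [norm_one, mul_one, norm_div, Complex.norm_natCast]
    _ ≤ ‖W‖ + ‖W‖ := by
        gcongr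
        exact (div_le_iff₀' hN).mpr (norm_trace_le W)
    _ = 2 * ‖W‖ := (two_mul _).symm

lemma frobeniusSq_tracelessPart_div_card [Nonempty ι] {M : Matrix ι ι ℂ} (hM : M.IsHermitian) :
    frobeniusSq (tracelessPart M) / Fintype.card ι =
      ((M ^ 2).trace / (Fintype.card ι : ℂ)).re - ‖M.trace / (Fintype.card ι : ℂ)‖ ^ 2 := by
  have hN : (Fintype.card ι : ℝ) ≠ 0 := Nat.cast_ne_zero.mpr Fintype.card_ne_zero
  have hsq : (M ^ 2).trace = frobeniusSq M := by rw [frobeniusSq_eq_trace, hM.eq, sq]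
  rw [frobeniusSq_tracelessPart, sub_div, mul_div_cancel_left₀ _ hN, hsq,
    ← Complex.ofReal_natCast, ← Complex.ofReal_div, Complex.ofReal_re]

lemma posSemidef_add_smul_one {Y : Matrix ι ι ℂ} (hY : Y.IsHermitian) {t : ℝ}
    (ht : ∀ i, 0 ≤ hY.eigenvalues i + t) : (Y + (t : ℂ) • (1 : Matrix ι ι ℂ)).PosSemidef := by
  have hdiag : Y + (t : ℂ) • (1 : Matrix ι ι ℂ) =
      unitaryConj (diagonal fun i => ((hY.eigenvalues i + t : ℝ) : ℂ)) hY.eigenvectorUnitary := by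
    have hsplit : diagonal (fun i => ((hY.eigenvalues i + t : ℝ) : ℂ)) =
        diagonal (fun i => (hY.eigenvalues i : ℂ) ^ 1) - (-t : ℂ) • (1 : Matrix ι ι ℂ) := by
      rw [smul_one_eq_diagonal, diagonal_sub]
      simp
    rw [hsplit, unitaryConj_sub, unitaryConj_smul_one, neg_smul, sub_neg_eq_add, unitaryConj,
      ← Unitary.coe_star, ← pow_eq_eigenvectorUnitary_mul_diagonal_mul, pow_one]
  rw [hdiag, unitaryConj, star_eq_conjTranspose]
  exact (PosSemidef.diagonal fun i => Complex.zero_le_real.mpr (ht i)).mul_mul_conjTranspose_same _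

lemma posSemidef_add_smul_one_of_frobeniusSq_pow_lt {Y : Matrix ι ι ℂ} (hY : Y.IsHermitian)
    {c t : ℝ} (hc : 0 ≤ c) (hct : c ≤ t) {q : ℕ} (h : frobeniusSq (Y ^ q) < c ^ (2 * q)) :
    (Y + (t : ℂ) • (1 : Matrix ι ι ℂ)).PosSemidef := by
  refine posSemidef_add_smul_one hY fun i => ?_
  have hpow : |hY.eigenvalues i| ^ (2 * q) < c ^ (2 * q) :=
    calc _ = hY.eigenvalues i ^ (2 * q) := (even_two_mul q).pow_abs _
      _ ≤ frobeniusSq (Y ^ q) := by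
          rw [frobeniusSq_pow_eq_sum hY]
          exact Finset.single_le_sum (f := fun j => hY.eigenvalues j ^ (2 * q))
            (fun j _ => (even_two_mul q).pow_nonneg _) (Finset.mem_univ i)
      _ < _ := h
  linarith [neg_abs_le (hY.eigenvalues i), lt_of_pow_lt_pow_left₀ _ hc hpow]

@[fun_prop]
lemma continuous_tracelessPart : Continuous (tracelessPart : Matrix ι ι ℂ → Matrix ι ι ℂ) := by
  unfold tracelessPart
  fun_prop

lemma continuous_uncurry_unitaryConj :
    Continuous fun s : Matrix ι ι ℂ × unitaryGroup ι ℂ => unitaryConj s.1 s.2 := by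
  unfold unitaryConj
  fun_prop

lemma measure_eq_lintegral_haarUnitary {ν : Measure (Matrix ι ι ℂ)} [IsProbabilityMeasure ν]
    (hν : ∀ V : unitaryGroup ι ℂ, ν.map (unitaryConj · V) = ν) {S : Set (Matrix ι ι ℂ)}
    (hS : MeasurableSet S) : ν S = ∫⁻ M, haarUnitary ι {V | unitaryConj M V ∈ S} ∂ν := by
  have hm : Measurable fun s : Matrix ι ι ℂ × unitaryGroup ι ℂ => unitaryConj s.1 s.2 :=
    continuous_uncurry_unitaryConj.measurable
  have hslice (V : unitaryGroup ι ℂ) : ν {M | unitaryConj M V ∈ S} = ν S := by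
    conv_rhs => rw [← hν V]
    exact (Measure.map_apply (hm.comp measurable_prodMk_right) hS).symm
  calc ν S = ∫⁻ V, ν {M | unitaryConj M V ∈ S} ∂haarUnitary ι := by simp [hslice]
    _ = (ν.prod (haarUnitary ι)) {s | unitaryConj s.1 s.2 ∈ S} :=
        (Measure.prod_apply_symm (hm hS)).symm
    _ = _ := Measure.prod_apply (hm hS)

/-- Hermitian matrices whose distance to the scalar matrices is at most `L` in operator norm and
`σ` in normalized Frobenius norm. -/
def regularSet (ι : Type*) [Fintype ι] [DecidableEq ι] (L σ : ℝ) : Set (Matrix ι ι ℂ) :=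
  {M | M.IsHermitian ∧ ‖tracelessPart M‖ ≤ L ∧
    frobeniusSq (tracelessPart M) ≤ Fintype.card ι * σ ^ 2}

lemma measurableSet_regularSet (L σ : ℝ) : MeasurableSet (regularSet ι L σ) := by
  have hherm : IsClosed {M : Matrix ι ι ℂ | Mᴴ = M} := isClosed_eq (by fun_prop) (by fun_prop)
  have hnorm : IsClosed {M : Matrix ι ι ℂ | ‖tracelessPart M‖ ≤ L} :=
    isClosed_le (by fun_prop) (by fun_prop)
  have hfrob : IsClosed {M : Matrix ι ι ℂ |
      frobeniusSq (tracelessPart M) ≤ Fintype.card ι * σ ^ 2} :=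
    isClosed_le (by fun_prop) (by fun_prop)
  exact (hherm.inter (hnorm.inter hfrob)).measurableSet

lemma mem_regularSet_of_unitaryConj_mem {L σ : ℝ} {M : Matrix ι ι ℂ} {V : unitaryGroup ι ℂ}
    (h : unitaryConj M V ∈ regularSet ι L σ) : M ∈ regularSet ι L σ := by
  obtain ⟨hherm, hnorm, hfrob⟩ := h
  rw [tracelessPart_unitaryConj, norm_unitaryConj] at hnorm
  rw [tracelessPart_unitaryConj, frobeniusSq_unitaryConj] at hfrob
  refine ⟨?_, hnorm, hfrob⟩
  have hinv : M = unitaryConj (unitaryConj M V) V⁻¹ := by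
    conv_lhs => rw [← unitaryConj_one M, ← inv_mul_cancel V, unitaryConj_mul]
    rfl
  rw [hinv]
  exact isHermitian_unitaryConj hherm _

end

variable {α β : Type*} [Fintype α] [Fintype β] [DecidableEq α] [DecidableEq β]

/-- Block matrices whose traceless part has a partial transpose with a large moment of order
`2 * q`. -/
def largeMomentSet (α β : Type*) [Fintype α] [Fintype β] [DecidableEq α] [DecidableEq β] (c : ℝ)
    (q : ℕ) : Set (BlockMatrix α β ℂ) :=
  {M | c ^ (2 * q) ≤ frobeniusSq (partialTranspose (tracelessPart M) ^ q)}

lemma measurableSet_largeMomentSet (c : ℝ) (q : ℕ) : MeasurableSet (largeMomentSet α β c q) :=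
  (isClosed_le (by fun_prop) (by fun_prop)).measurableSet

lemma posSemidef_partialTranspose_of_notMem_largeMomentSet {M : BlockMatrix α β ℂ}
    (hM : M.IsHermitian) {c : ℝ} (hc : 0 ≤ c) {q : ℕ} (h : M ∉ largeMomentSet α β c q)
    (hct : c ≤ (M.trace / (Fintype.card (α × β) : ℂ)).re) : (partialTranspose M).PosSemidef := by
  set z := M.trace / (Fintype.card (α × β) : ℂ) with hz
  have hreal : (z.re : ℂ) = z := by
    refine Complex.conj_eq_iff_re.mp ?_
    rw [hz, starRingEnd_apply, star_div₀, ← trace_conjTranspose, hM.eq, star_natCast]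
  have hsplit : partialTranspose M =
      partialTranspose (tracelessPart M) + (z.re : ℂ) • (1 : BlockMatrix α β ℂ) := by
    ext p q
    simp only [partialTranspose_apply, tracelessPart, Matrix.add_apply, Matrix.sub_apply,
      Matrix.smul_apply, one_apply, hreal, ← hz, Prod.ext_iff, eq_comm (a := q.1)]
    ring
  rw [hsplit]
  exact posSemidef_add_smul_one_of_frobeniusSq_pow_lt
    (isHermitian_partialTranspose (isHermitian_tracelessPart hM)) hc hct (not_le.mp h)

lemma haarUnitary_largeMomentSet_le {c ε : ℝ} (hc : 0 < c) {q : ℕ} {M : BlockMatrix α β ℂ}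
    (hM : ∫ V, frobeniusSq (partialTranspose (unitaryConj (tracelessPart M) V) ^ q)
      ∂haarUnitary (α × β) ≤ c ^ (2 * q) * ε) :
    haarUnitary (α × β) {V | unitaryConj M V ∈ largeMomentSet α β c q} ≤ ENNReal.ofReal ε := by
  have hmarkov := mul_meas_ge_le_integral_of_nonneg
    (Eventually.of_forall fun V =>
      frobeniusSq_nonneg (partialTranspose (unitaryConj (tracelessPart M) V) ^ q))
    (integrable_haarUnitary (by fun_prop)) (c ^ (2 * q))
  rw [← ofReal_measureReal]
  refine ENNReal.ofReal_le_ofReal (le_of_mul_le_mul_left ?_ (pow_pos hc (2 * q)))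
  simp only [largeMomentSet, Set.mem_ofPred_eq, tracelessPart_unitaryConj]
  exact hmarkov.trans hM

lemma measure_regularSet_inter_largeMomentSet_le [Nonempty α] [Nonempty β] {L σ c ε : ℝ}
    (hc : 0 < c) {q : ℕ}
    (hq : ∀ D : BlockMatrix α β ℂ, D.IsHermitian → D.trace = 0 → ‖D‖ ≤ L →
      frobeniusSq D ≤ Fintype.card (α × β) * σ ^ 2 →
      ∫ V, frobeniusSq (partialTranspose (unitaryConj D V) ^ q) ∂haarUnitary (α × β) ≤
        c ^ (2 * q) * ε)
    {ν : Measure (BlockMatrix α β ℂ)} [IsProbabilityMeasure ν]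
    (hν : ∀ V : unitaryGroup (α × β) ℂ, ν.map (unitaryConj · V) = ν) :
    ν (regularSet (α × β) L σ ∩ largeMomentSet α β c q) ≤ ENNReal.ofReal ε := by
  have horbit (M : BlockMatrix α β ℂ) : haarUnitary (α × β)
      {V | unitaryConj M V ∈ regularSet (α × β) L σ ∩ largeMomentSet α β c q} ≤
        ENNReal.ofReal ε := by
    by_cases hM : M ∈ regularSet (α × β) L σ
    · obtain ⟨hherm, hnorm, hfrob⟩ := hM
      exact (measure_mono fun V hV => hV.2).trans (haarUnitary_largeMomentSet_le hc
        (hq _ (isHermitian_tracelessPart hherm) (trace_tracelessPart M) hnorm hfrob))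
    · have hempty : {V | unitaryConj M V ∈ regularSet (α × β) L σ ∩ largeMomentSet α β c q} = ∅ :=
        Set.eq_empty_of_forall_notMem fun V hV => hM (mem_regularSet_of_unitaryConj_mem hV.1)
      rw [hempty, measure_empty]
      exact zero_le
  rw [measure_eq_lintegral_haarUnitary hν
    ((measurableSet_regularSet L σ).inter (measurableSet_largeMomentSet c q))]
  exact (lintegral_mono horbit).trans_eq (by simp)

end UnitarilyInvariantLaws

/-! ### Almost sure asymptotics -/

section Asymptotics

open scoped Matrix.Norms.L2Operator

lemma tendsto_measure_one_of_ae_eventually_mem {Ω : Type*} [MeasurableSpace Ω] {ℙ : Measure Ω}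
    [IsProbabilityMeasure ℙ] {S : ℕ → Set Ω} (h : ∀ᵐ ω ∂ℙ, ∀ᶠ d in atTop, ω ∈ S d) :
    Tendsto (fun d => ℙ (S d)) atTop (𝓝 1) := by
  set T : ℕ → Set Ω := fun k => ⋂ d ≥ k, S d
  have hmono : Monotone T := fun a b hab =>
    Set.biInter_subset_biInter_left fun d (hd : b ≤ d) => hab.trans hd
  have hunion : ℙ (⋃ k, T k) = 1 := by
    rw [← measure_univ (μ := ℙ)]
    refine measure_congr (eventuallyEq_univ.mpr ?_)
    filter_upwards [h] with ω hω
    obtain ⟨k, hk⟩ := eventually_atTop.mp hω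
    exact Set.mem_iUnion.mpr ⟨k, Set.mem_iInter₂.mpr hk⟩
  exact tendsto_of_tendsto_of_tendsto_of_le_of_le (hunion ▸ tendsto_measure_iUnion_atTop hmono)
    tendsto_const_nhds (fun k => measure_mono (Set.biInter_subset_of_mem le_rfl))
    fun k => prob_le_one

lemma ae_eventually_notMem_of_eventually_measure_le {Ω : Type*} [MeasurableSpace Ω]
    {ℙ : Measure Ω} {S : ℕ → Set Ω} {f : ℕ → ℝ} (hf : Summable f)
    (h : ∀ᶠ d in atTop, ℙ (S d) ≤ ENNReal.ofReal (f d)) :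
    ∀ᵐ ω ∂ℙ, ∀ᶠ d in atTop, ω ∉ S d := by
  obtain ⟨k, hk⟩ := eventually_atTop.mp h
  have hsum : ∑' d, ℙ (S (d + k)) ≠ ⊤ :=
    ne_top_of_le_ne_top ((summable_nat_add_iff k).mpr hf).tsum_ofReal_ne_top
      (ENNReal.tsum_le_tsum fun d => hk (d + k) (Nat.le_add_left k d))
  filter_upwards [ae_eventually_notMem hsum] with ω hω
  rwa [← map_add_atTop_eq_nat k, eventually_map]

theorem exists_ae_eventually_notMem_regularSet_inter_largeMomentSet {Ω : Type*} [MeasurableSpace Ω]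
    {ℙ : Measure Ω} [IsProbabilityMeasure ℙ] {n : ℕ} [NeZero n]
    {X : (d : ℕ) → Ω → Matrix (Fin n × Fin d) (Fin n × Fin d) ℂ} (hmeas : ∀ d, Measurable (X d))
    (hinv : UnitInv ℙ n X) {L σ c : ℝ} (hL : 0 < L) (hσ : 0 < σ) (hc₀ : 0 < c)
    (hc : L + 2 * σ * (n + 1) < n * c) :
    ∃ q : ℕ → ℕ, ∀ᵐ ω ∂ℙ, ∀ᶠ d in atTop, X d ω ∉
      regularSet (Fin n × Fin d) L σ ∩ largeMomentSet (Fin n) (Fin d) c (q d) := by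
  have hmoment := eventually_exists_moment_bound (α := Fin n) hL hσ (by simpa using hc)
  obtain ⟨q, hq⟩ := hmoment.choice
  refine ⟨q, ae_eventually_notMem_of_eventually_measure_le
    (S := fun d => X d ⁻¹' (regularSet _ L σ ∩ largeMomentSet _ _ c (q d)))
    (Real.summable_one_div_nat_pow.mpr one_lt_two) ?_⟩
  filter_upwards [hq, eventually_gt_atTop 0] with d hqd hd
  have : NeZero d := ⟨hd.ne'⟩
  have : IsProbabilityMeasure (ℙ.map (X d)) :=
    Measure.isProbabilityMeasure_map (hmeas d).aemeasurable
  have hlaw (V : unitaryGroup (Fin n × Fin d) ℂ) :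
      (ℙ.map (X d)).map (unitaryConj · V) = ℙ.map (X d) := by
    rw [Measure.map_map (by unfold unitaryConj; fun_prop) (hmeas d)]
    exact hinv d V V.2
  rw [← Measure.map_apply (hmeas d)
    ((measurableSet_regularSet L σ).inter (measurableSet_largeMomentSet c (q d)))]
  refine (measure_regularSet_inter_largeMomentSet_le hc₀ hqd hlaw).trans
    (ENNReal.ofReal_le_ofReal ?_)
  rw [Fintype.card_prod, Fintype.card_fin, Fintype.card_fin]
  gcongr
  exact Nat.le_mul_of_pos_left d (Nat.pos_of_neZero n)

lemma eventually_mem_regularSet {ι : ℕ → Type*} [∀ d, Fintype (ι d)] [∀ d, DecidableEq (ι d)]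
    (hι : ∀ᶠ d in atTop, Nonempty (ι d)) {M : ∀ d, Matrix (ι d) (ι d) ℂ}
    (hM : ∀ d, (M d).IsHermitian) {m v a r L σ : ℝ}
    (hmean : Tendsto (fun d => (M d).trace / (Fintype.card (ι d) : ℂ)) atTop (𝓝 (m : ℂ)))
    (hsq : Tendsto (fun d => (M d ^ 2).trace / (Fintype.card (ι d) : ℂ)) atTop (𝓝 (v : ℂ)))
    (hnorm : Tendsto (fun d => ‖M d - (a : ℂ) • (1 : Matrix (ι d) (ι d) ℂ)‖) atTop (𝓝 r))
    (hL : 2 * r < L) (hσ : v - m ^ 2 < σ ^ 2) : ∀ᶠ d in atTop, M d ∈ regularSet (ι d) L σ := by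
  have hvar : Tendsto (fun d => ((M d ^ 2).trace / (Fintype.card (ι d) : ℂ)).re -
      ‖(M d).trace / (Fintype.card (ι d) : ℂ)‖ ^ 2) atTop (𝓝 (v - m ^ 2)) := by
    have := ((Complex.continuous_re.tendsto _).comp hsq).sub (hmean.norm.pow 2)
    simpa only [Function.comp_apply, Complex.ofReal_re, Complex.norm_real, Real.norm_eq_abs,
      sq_abs] using this
  filter_upwards [hvar.eventually_lt_const hσ, (hnorm.const_mul 2).eventually_lt_const hL, hι]
    with d hd_var hd_norm _
  refine ⟨hM d, (norm_tracelessPart_le (M d) a).trans hd_norm.le, ?_⟩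
  rw [← frobeniusSq_tracelessPart_div_card (hM d),
    div_lt_iff₀' (Nat.cast_pos.mpr Fintype.card_pos)] at hd_var
  exact hd_var.le

lemma msupport_nonempty (μ : Measure ℝ) [IsProbabilityMeasure μ] : (msupport μ).Nonempty := by
  by_contra! hempty
  refine IsProbabilityMeasure.ne_zero μ (Measure.measure_univ_eq_zero.mp
    (measure_null_of_locally_null _ fun x _ => ?_))
  have hx : x ∉ msupport μ := by
    rw [hempty]
    exact Set.notMem_empty x
  simp only [msupport, Set.mem_ofPred_eq, not_forall, not_lt, nonpos_iff_eq_zero] at hx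
  obtain ⟨U, hU, hxU, hμ⟩ := hx
  exact ⟨U, mem_nhdsWithin_of_mem_nhds (hU.mem_nhds hxU), hμ⟩

lemma polyApply_X_sub_C {ι : Type*} [Fintype ι] [DecidableEq ι] (a : ℝ) (M : Matrix ι ι ℂ) :
    polyApply (Polynomial.X - Polynomial.C a) M = M - (a : ℂ) • (1 : Matrix ι ι ℂ) := by
  simp [polyApply, Algebra.algebraMap_eq_smul_one]

lemma opNorm_eq_norm {ι : Type*} [Fintype ι] [DecidableEq ι] (M : Matrix ι ι ℂ) :
    opNorm M = ‖M‖ :=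
  (Matrix.l2_opNorm_toEuclideanCLM M).symm

/-- Strong convergence of a deterministic sequence of matrices, so that `StrongConv` is almost sure
strong convergence in this sense. -/
def StronglyTendsto (n : ℕ) (M : (d : ℕ) → Matrix (Fin n × Fin d) (Fin n × Fin d) ℂ)
    (μ : Measure ℝ) : Prop :=
  ∀ P : ℝ[X],
    Tendsto (fun d : ℕ => ((n : ℂ) * (d : ℂ))⁻¹ * (polyApply P (M d)).trace) atTop
      (𝓝 ((∫ x, P.eval x ∂μ : ℝ) : ℂ)) ∧
    Tendsto (fun d : ℕ => opNorm (polyApply P (M d))) atTop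
      (𝓝 (sSup ((fun x => |P.eval x|) '' msupport μ)))

namespace StronglyTendsto

variable {n : ℕ} {M : (d : ℕ) → Matrix (Fin n × Fin d) (Fin n × Fin d) ℂ} {μ : Measure ℝ}

lemma tendsto_trace_pow (h : StronglyTendsto n M μ) (k : ℕ) :
    Tendsto (fun d => (M d ^ k).trace / (Fintype.card (Fin n × Fin d) : ℂ)) atTop
      (𝓝 ((∫ x, x ^ k ∂μ : ℝ) : ℂ)) := by
  simpa [polyApply, div_eq_inv_mul] using (h (Polynomial.X ^ k)).1

lemma tendsto_norm_sub_smul_one (h : StronglyTendsto n M μ) (a : ℝ) :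
    Tendsto (fun d => ‖M d - (a : ℂ) • (1 : Matrix (Fin n × Fin d) (Fin n × Fin d) ℂ)‖) atTop
      (𝓝 (sSup ((fun x => |x - a|) '' msupport μ))) := by
  have := (h (Polynomial.X - Polynomial.C a)).2
  simpa only [polyApply_X_sub_C, opNorm_eq_norm, eval_sub, eval_X, eval_C] using this

/-- Since the support has width at most `B - A`, centring at its midpoint bounds the traceless
part by `B - A`. -/
lemma eventually_mem_regularSet [NeZero n] [IsProbabilityMeasure μ] (h : StronglyTendsto n M μ)
    (hM : ∀ d, (M d).IsHermitian) {A B L σ : ℝ} (hsupp : msupport μ ⊆ Set.Icc A B)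
    (hL : B - A < L) (hσ : ∫ x, x ^ 2 ∂μ - (∫ x, x ∂μ) ^ 2 < σ ^ 2) :
    ∀ᶠ d in atTop, M d ∈ regularSet (Fin n × Fin d) L σ := by
  have hradius : sSup ((fun x => |x - (A + B) / 2|) '' msupport μ) ≤ (B - A) / 2 := by
    refine csSup_le ((msupport_nonempty μ).image _) ?_
    rintro _ ⟨x, hx, rfl⟩
    obtain ⟨hAx, hxB⟩ := hsupp hx
    exact abs_le.mpr ⟨by linarith, by linarith⟩
  have hne : ∀ᶠ d in atTop, Nonempty (Fin n × Fin d) :=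
    (eventually_gt_atTop 0).mono fun d hd => ⟨(0, ⟨0, hd⟩)⟩
  exact _root_.eventually_mem_regularSet hne hM (by simpa using h.tendsto_trace_pow 1)
    (h.tendsto_trace_pow 2) (h.tendsto_norm_sub_smul_one ((A + B) / 2)) (by linarith) hσ

end StronglyTendsto

lemma exists_strict_parameters {ν r σ m : ℝ} (hν : 0 < ν) (h : r + 2 * σ * (ν + 1) < ν * m) :
    ∃ L τ c, r < L ∧ σ < τ ∧ c < m ∧ L + 2 * τ * (ν + 1) < ν * c := by
  obtain ⟨s, hs⟩ : ∃ s, s = ν * m - r - 2 * σ * (ν + 1) := ⟨_, rfl⟩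
  have hs₀ : 0 < s := by linarith
  refine ⟨r + s / 4, σ + s / (8 * (ν + 1)), m - s / (4 * ν), by linarith,
    lt_add_of_pos_right _ (by positivity), sub_lt_self _ (by positivity), ?_⟩
  have hτ : 2 * (σ + s / (8 * (ν + 1))) * (ν + 1) = 2 * σ * (ν + 1) + s / 4 := by
    field_simp
    ring
  have hc : ν * (m - s / (4 * ν)) = ν * m - s / 4 := by field_simp
  rw [hτ, hc]
  linarith

theorem stmt0_general
    {Ω : Type*} [MeasurableSpace Ω] (ℙ : Measure Ω) [IsProbabilityMeasure ℙ] (n : ℕ)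
    (X : (d : ℕ) → Ω → Matrix (Fin n × Fin d) (Fin n × Fin d) ℂ)
    (hmeas : ∀ d, Measurable (X d))
    (hherm : ∀ d ω, (X d ω).IsHermitian)
    (hUI : UnitInv ℙ n X)
    (μ : Measure ℝ) [IsProbabilityMeasure μ]
    (A B m σ : ℝ) (hσ : 0 ≤ σ)
    (hsupp : msupport μ ⊆ Set.Icc A B)
    (hmean : (∫ x, x ∂μ) = m)
    (hvar : (∫ x, x ^ 2 ∂μ) - m ^ 2 = σ ^ 2)
    (hconv : StrongConv ℙ n X μ)
    (hcond : (n : ℝ) * (m - 2 * σ) > B - A + 2 * σ) :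
    ∀ᵐ ω ∂ℙ, ∀ᶠ d : ℕ in atTop, (ptrans (X d ω)).PosSemidef := by
  obtain ⟨x, hAx, hxB⟩ := (msupport_nonempty μ).mono hsupp
  have : NeZero n := ⟨by
    rintro rfl
    norm_num at hcond
    linarith⟩
  have hn : (0 : ℝ) < n := Nat.cast_pos.mpr (Nat.pos_of_neZero n)
  obtain ⟨L, τ, c, hL, hτ, hcm, hc⟩ :=
    exists_strict_parameters (r := B - A) (σ := σ) (m := m) hn (by linarith)
  have hL₀ : 0 < L := by linarith
  have hτ₀ : 0 < τ := hσ.trans_lt hτ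
  have hc₀ : 0 < c := (mul_pos_iff_of_pos_left hn).mp (lt_trans (by positivity) hc)
  obtain ⟨q, hq⟩ :=
    exists_ae_eventually_notMem_regularSet_inter_largeMomentSet hmeas hUI hL₀ hτ₀ hc₀ hc
  filter_upwards [hconv, hq] with ω (hω : StronglyTendsto n (X · ω) μ) hbad
  have hreg := hω.eventually_mem_regularSet (hherm · ω) hsupp hL (σ := τ)
    (by rw [hmean, hvar]; gcongr)
  have htrace := ((Complex.continuous_re.tendsto _).comp
    (hω.tendsto_trace_pow 1)).eventually_const_lt (u := c) (by simpa [hmean] using hcm)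
  filter_upwards [hbad, hreg, htrace] with d hd_bad hd_reg hd_trace
  exact posSemidef_partialTranspose_of_notMem_largeMomentSet (hherm d ω) hc₀.le
    (fun hd => hd_bad ⟨hd_reg, hd⟩) (by simpa using hd_trace.le)

end Asymptotics

/-- If `n(m − 2σ) > B − A + 2σ`, a unitarily invariant strongly
convergent sequence of random PSD matrices is asymptotically PPT. -/
theorem stmt0
    {Ω : Type*} [MeasurableSpace Ω] (ℙ : Measure Ω) [IsProbabilityMeasure ℙ]
    (n : ℕ) (hn : 2 ≤ n)
    (X : (d : ℕ) → Ω → Matrix (Fin n × Fin d) (Fin n × Fin d) ℂ)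
    (hmeas : ∀ d, Measurable (X d))
    (hpsd : ∀ d ω, (X d ω).PosSemidef)
    (hUI : UnitInv ℙ n X)
    (μ : Measure ℝ) [IsProbabilityMeasure μ]
    (A B m σ : ℝ) (hA : 0 ≤ A) (hσ : 0 ≤ σ)
    (hsupp : msupport μ ⊆ Set.Icc A B)
    (hmean : (∫ x, x ∂μ) = m)
    (hvar : (∫ x, x ^ 2 ∂μ) - m ^ 2 = σ ^ 2)
    (hconv : StrongConv ℙ n X μ)
    (hcond : (n : ℝ) * (m - 2 * σ) > B - A + 2 * σ) :
    (∀ᵐ ω ∂ℙ, ∀ᶠ d : ℕ in atTop, X d ω ∈ PPT n d) ∧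
      Tendsto (fun d : ℕ => ℙ {ω | X d ω ∈ PPT n d}) atTop (𝓝 1) := by
  have hae : ∀ᵐ ω ∂ℙ, ∀ᶠ d : ℕ in atTop, X d ω ∈ PPT n d :=
    (stmt0_general ℙ n X hmeas (fun d ω => (hpsd d ω).isHermitian) hUI μ A B m σ hσ hsupp hmean
      hvar hconv hcond).mono fun ω hω => hω.mono fun d hd => ⟨hpsd d ω, hd⟩
  exact ⟨hae, tendsto_measure_one_of_ae_eventually_mem hae⟩
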